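/- Let ℓ be an integer and c>0 with ℓ ≥ 3⌈1/c⌉ + 1. Let k≥1 be an integer, and let 0 < d,λ' ≤ 1. Then there exist an integer K≥1 and λ>0 with the following property: for every graph G and every blockade A=(A_i : i∈I) in G of length K, with linkage at most λ, that is not (2^{−6−2ℓ}/K, K^{−K}|G|^{−c})-divergent, there is an A-rainbow bi-grading (L, M, B) with length k and height ℓ, such that B has A-size at least 2^{−k−2ℓ}K^{−K}|G|^{−d} and linkage at most λ'. -/

import Mathlib

noncomputable section

namespace PurePairs

open SimpleGraph

variable {V W : Type*}

/-- A pure pair in `G`: a pair of disjoint vertex sets that are complete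
or anticomplete to each other. -/
def PurePair (G : SimpleGraph V) (A B : Set V) : Prop :=
  Disjoint A B ∧
    ((∀ a ∈ A, ∀ b ∈ B, G.Adj a b) ∨ (∀ a ∈ A, ∀ b ∈ B, ¬ G.Adj a b))

/-- `G` contains `H`: some induced subgraph of `G` is isomorphic to `H`. -/
def Contains (G : SimpleGraph V) (H : SimpleGraph W) : Prop :=
  Nonempty (H ↪g G)

/-- The congestion of a graph `H`: the maximum (here: supremum, together with `0`)
of `1 - (|J|-1)/|E(J)|` over all subgraphs `J` of `H` with at least one edge.
If `H` has no edges this is `0`. -/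
def congestion (H : SimpleGraph V) : ℝ :=
  sSup ({0} ∪ {x : ℝ | ∃ J : H.Subgraph, J.edgeSet.Nonempty ∧
    x = 1 - ((J.verts.ncard : ℝ) - 1) / (J.edgeSet.ncard : ℝ)})

/-- `A` is anticomplete to `B`: no edges between them. -/
def Anticomplete (G : SimpleGraph V) (A B : Set V) : Prop :=
  ∀ a ∈ A, ∀ b ∈ B, ¬ G.Adj a b

/-- `A` covers `B`: every vertex of `B` has a neighbour in `A`. -/
def Covers (G : SimpleGraph V) (A B : Set V) : Prop :=
  ∀ b ∈ B, ∃ a ∈ A, G.Adj a b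

/-- `G` is `ε`-sparse: every vertex has degree less than `ε|G|`. -/
def EpsSparse (G : SimpleGraph V) [Fintype V] (ε : ℝ) : Prop :=
  ∀ v : V, ((G.neighborSet v).ncard : ℝ) < ε * (Fintype.card V : ℝ)

/-- `G` is `(γ,δ)`-coherent: there is no pair of disjoint anticomplete sets `A`, `B`
with `|A| ≥ γ` and `|B| ≥ δ`. -/
def Coherent (G : SimpleGraph V) (γ δ : ℝ) : Prop :=
  ¬ ∃ A B : Set V, Disjoint A B ∧ Anticomplete G A B ∧
      γ ≤ (A.ncard : ℝ) ∧ δ ≤ (B.ncard : ℝ)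

/-- `N(X)`: the set of vertices with a neighbour in `X`. -/
def nbhd (G : SimpleGraph V) (X : Set V) : Set V :=
  {v | ∃ x ∈ X, G.Adj x v}

/-- A blockade: a family of nonempty pairwise disjoint vertex sets indexed by a
finite set of integers. -/
def IsBlockade (I : Finset ℤ) (A : ℤ → Set V) : Prop :=
  (∀ i ∈ I, (A i).Nonempty) ∧
    ∀ i ∈ I, ∀ j ∈ I, i ≠ j → Disjoint (A i) (A j)

/-- The blockade `(A i : i ∈ I)` is `(γ,δ)`-divergent. -/
def Divergent (G : SimpleGraph V) (I : Finset ℤ) (A : ℤ → Set V) (γ δ : ℝ) : Prop :=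
  ∃ i ∈ I, ∃ j ∈ I, i ≠ j ∧ ∃ X ⊆ A i, ∃ Y ⊆ A j,
    γ * ((A i).ncard : ℝ) ≤ (X.ncard : ℝ) ∧ δ * ((A j).ncard : ℝ) ≤ (Y.ncard : ℝ) ∧
    Anticomplete G X Y

/-- The blockade `(A i : i ∈ I)` is `τ`-expanding. -/
def Expanding (G : SimpleGraph V) (I : Finset ℤ) (A : ℤ → Set V) (τ : ℝ) : Prop :=
  ∀ i ∈ I, ∀ j ∈ I, i ≠ j → ∀ X ⊆ A i,
    min (τ * (X.ncard : ℝ) / ((A i).ncard : ℝ)) (1/4)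
      ≤ (((nbhd G X) ∩ A j).ncard : ℝ) / ((A j).ncard : ℝ)

/-- The linkage of the blockade `(A i : i ∈ I)` is at most `lam`. -/
def LinkageLE (G : SimpleGraph V) (I : Finset ℤ) (A : ℤ → Set V) (lam : ℝ) : Prop :=
  ∀ i ∈ I, ∀ j ∈ I, i ≠ j → ∀ v ∈ A i,
    ((G.neighborSet v ∩ A j).ncard : ℝ) ≤ lam * ((A j).ncard : ℝ)

/-- The shrinkage of the blockade `(A i : i ∈ I)` is at most `σ`, i.e. its width is at
least `|G|^{1-σ}`. -/
def ShrinkageLE [Fintype V] (I : Finset ℤ) (A : ℤ → Set V) (σ : ℝ) : Prop :=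
  ∀ i ∈ I, (Fintype.card V : ℝ) ^ (1 - σ) ≤ ((A i).ncard : ℝ)

/-- `(L 0, …, L k)` is a levelling in `G`. -/
def IsLevelling (G : SimpleGraph V) (L : ℕ → Set V) (k : ℕ) : Prop :=
  1 ≤ k ∧ (L 0).ncard = 1 ∧
  (∀ i ≤ k, ∀ j ≤ k, i ≠ j → Disjoint (L i) (L j)) ∧
  (∀ i, 1 ≤ i → i ≤ k → Covers G (L (i-1)) (L i)) ∧
  (∀ i, 2 ≤ i → i ≤ k → ∀ h, h + 2 ≤ i → Anticomplete G (L h) (L i))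

/-- The levelling `(L 0, …, L k)` reaches `C`, i.e. `(L 0, …, L k, C)` is a levelling. -/
def Reaches (G : SimpleGraph V) (L : ℕ → Set V) (k : ℕ) (C : Set V) : Prop :=
  IsLevelling G (fun i => if i = k + 1 then C else L i) (k + 1)

/-- The levelling `(L 0, …, L k)` is `(B i : i ∈ I)`-rainbow. -/
def RainbowLevelling (I : Finset ℤ) (B : ℤ → Set V) (L : ℕ → Set V) (k : ℕ) : Prop :=
  ∃ q : ℕ → ℤ, (∀ i ≤ k, q i ∈ I ∧ L i ⊆ B (q i)) ∧
    ∀ i ≤ k, ∀ j ≤ k, q i = q j → i = j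

/-- The levelling `(L 0, …, L k)` grades the blockade `(C j : j ∈ J)` (in some order). -/
def Grades (G : SimpleGraph V) (L : ℕ → Set V) (k : ℕ) (J : Finset ℤ) (C : ℤ → Set V) :
    Prop :=
  Reaches G L k (⋃ j ∈ J, C j) ∧
  ∃ e : ℕ → ℤ, (∀ g < J.card, e g ∈ J) ∧
    (∀ g < J.card, ∀ h < J.card, e g = e h → g = h) ∧
    ∀ g < J.card, ∃ Y ⊆ L k,
      (∀ h, g ≤ h → h < J.card → Covers G Y (C (e h))) ∧
      (∀ h, h < g → Anticomplete G Y (C (e h)))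

/-- The levelling `(L 0, …, L k)` grades the blockade `(C j : j ∈ J)` forwards. -/
def GradesFwd (G : SimpleGraph V) (L : ℕ → Set V) (k : ℕ) (J : Finset ℤ) (C : ℤ → Set V) :
    Prop :=
  Reaches G L k (⋃ j ∈ J, C j) ∧
  ∀ j ∈ J, ∃ Y ⊆ L k,
    (∀ i ∈ J, j ≤ i → Covers G Y (C i)) ∧
    (∀ i ∈ J, i < j → Anticomplete G Y (C i))

/-- The levelling `(L 0, …, L k)` grades the blockade `(C j : j ∈ J)` backwards. -/
def GradesBwd (G : SimpleGraph V) (L : ℕ → Set V) (k : ℕ) (J : Finset ℤ) (C : ℤ → Set V) :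
    Prop :=
  Reaches G L k (⋃ j ∈ J, C j) ∧
  ∀ j ∈ J, ∃ Y ⊆ L k,
    (∀ i ∈ J, i ≤ j → Covers G Y (C i)) ∧
    (∀ i ∈ J, j < i → Anticomplete G Y (C i))

/-- Two levellings are parallel. -/
def Parallel (G : SimpleGraph V) (L : ℕ → Set V) (k : ℕ) (M : ℕ → Set V) (m : ℕ) : Prop :=
  L 0 = M 0 ∧
  Disjoint (⋃ j ∈ Finset.Icc 1 m, M j) (⋃ i ∈ Finset.Icc 1 k, L i) ∧
  Anticomplete G (⋃ j ∈ Finset.Icc 1 m, M j) (⋃ i ∈ Finset.Icc 1 k, L i)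

/-- `(L, M, C)` is a bi-levelling, where `L` has height `k` and `M` has height `m`:
`C` is a blockade, `L, M` are parallel levellings both reaching the union of the
blocks of `C`, and `L` grades `C` forwards. Its height is `k + m` and its length is
the length of `C`. -/
def IsBiLevelling (G : SimpleGraph V) (L : ℕ → Set V) (k : ℕ) (M : ℕ → Set V) (m : ℕ)
    (J : Finset ℤ) (C : ℤ → Set V) : Prop :=
  IsBlockade J C ∧ IsLevelling G L k ∧ IsLevelling G M m ∧ Parallel G L k M m ∧
    Reaches G M m (⋃ j ∈ J, C j) ∧ GradesFwd G L k J C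

/-- A bi-grading: a bi-levelling in which `M` also grades `C` backwards. -/
def IsBiGrading (G : SimpleGraph V) (L : ℕ → Set V) (k : ℕ) (M : ℕ → Set V) (m : ℕ)
    (J : Finset ℤ) (C : ℤ → Set V) : Prop :=
  IsBiLevelling G L k M m J C ∧ GradesBwd G M m J C

/-- The bi-levelling `(L, M, C)` is `(A i : i ∈ I)`-rainbow: each block of `C`, each
level of `L`, and each level of `M` other than `M 0 = L 0` is included in a block of
`A`, and distinct such sets lie in distinct blocks. -/
def RainbowBiLevelling (I : Finset ℤ) (A : ℤ → Set V)
    (L : ℕ → Set V) (k : ℕ) (M : ℕ → Set V) (m : ℕ)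
    (J : Finset ℤ) (C : ℤ → Set V) : Prop :=
  ∃ (qc : ℤ → ℤ) (ql qm : ℕ → ℤ),
    (∀ j ∈ J, qc j ∈ I ∧ C j ⊆ A (qc j)) ∧
    (∀ i ≤ k, ql i ∈ I ∧ L i ⊆ A (ql i)) ∧
    (∀ i, 1 ≤ i → i ≤ m → qm i ∈ I ∧ M i ⊆ A (qm i)) ∧
    (∀ j ∈ J, ∀ j' ∈ J, qc j = qc j' → j = j') ∧
    (∀ i ≤ k, ∀ i' ≤ k, ql i = ql i' → i = i') ∧
    (∀ i, 1 ≤ i → i ≤ m → ∀ i', 1 ≤ i' → i' ≤ m → qm i = qm i' → i = i') ∧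
    (∀ j ∈ J, ∀ i ≤ k, qc j ≠ ql i) ∧
    (∀ j ∈ J, ∀ i, 1 ≤ i → i ≤ m → qc j ≠ qm i) ∧
    (∀ i ≤ k, ∀ i', 1 ≤ i' → i' ≤ m → ql i ≠ qm i')

/-- Each block of `(C j : j ∈ J)` lies in a block of `(A i : i ∈ I)`; the `A`-size of
`C` is at least `η` when every block of `C` has size at least `η` times the size of the
block of `A` containing it. -/
def SizeGE (I : Finset ℤ) (A : ℤ → Set V) (J : Finset ℤ) (C : ℤ → Set V) (η : ℝ) : Prop :=
  ∀ j ∈ J, ∀ i ∈ I, C j ⊆ A i → η * ((A i).ncard : ℝ) ≤ ((C j).ncard : ℝ)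

/-- A `(B i : i ∈ I)`-rainbow induced path `p 0 - p 1 - ⋯ - p n` in `G`. -/
def RainbowPath (G : SimpleGraph V) (I : Finset ℤ) (B : ℤ → Set V)
    (n : ℕ) (p : ℕ → V) : Prop :=
  (∀ i ≤ n, ∀ j ≤ n, p i = p j → i = j) ∧
  (∀ i < n, G.Adj (p i) (p (i+1))) ∧
  (∀ i j, i + 1 < j → j ≤ n → ¬ G.Adj (p i) (p j)) ∧
  ∃ q : ℕ → ℤ, (∀ i ≤ n, q i ∈ I ∧ p i ∈ B (q i)) ∧
    ∀ i ≤ n, ∀ j ≤ n, q i = q j → i = j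

/-- A `(B i : i ∈ I)`-rainbow copy of `H` in `G`: an induced copy of `H` with each
vertex in a different block. -/
def RainbowCopy (G : SimpleGraph V) (I : Finset ℤ) (B : ℤ → Set V)
    (H : SimpleGraph W) : Prop :=
  ∃ (f : H ↪g G) (q : W → ℤ), Function.Injective q ∧ ∀ w : W, q w ∈ I ∧ f w ∈ B (q w)

/-- `(N,K,σ,lam,c)` forces `H`. -/
def Forces (H : SimpleGraph W) (N K : ℕ) (σ lam c : ℝ) : Prop :=
  ∀ {V : Type} [Fintype V] (G : SimpleGraph V),
    Coherent G ((Fintype.card V : ℝ) ^ (1 - c)) ((Fintype.card V : ℝ) ^ (1 - c)) →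
    N ≤ Fintype.card V →
    ∀ (I : Finset ℤ) (A : ℤ → Set V), IsBlockade I A → I.card = K →
      ShrinkageLE I A σ → LinkageLE G I A lam →
      RainbowCopy G I A H

/-- `p 0 - ⋯ - p n` is a handle of length `n` that can be added to (the graph induced
on) `S` inside the ambient graph `H`: an induced path of `H[S ∪ p]` of length at least
two whose ends lie in `S`, whose internal vertices avoid `S` and have degree two in
`H[S ∪ p]`. -/
def IsHandle (H : SimpleGraph V) (S : Set V) (n : ℕ) (p : ℕ → V) : Prop :=
  2 ≤ n ∧
  (∀ i ≤ n, ∀ j ≤ n, p i = p j → i = j) ∧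
  p 0 ∈ S ∧ p n ∈ S ∧
  (∀ i, 0 < i → i < n → p i ∉ S) ∧
  (∀ i < n, H.Adj (p i) (p (i+1))) ∧
  (∀ i j, i + 1 < j → j ≤ n → ¬ H.Adj (p i) (p j)) ∧
  (∀ i, 0 < i → i < n → ∀ w, (w ∈ S ∨ ∃ j ≤ n, w = p j) → H.Adj (p i) w →
    w = p (i-1) ∨ w = p (i+1))

/-- The vertex sets `S` such that the induced subgraph `H[S]` can be built, starting
from the two-vertex graph with no edges, by repeatedly adding handles of length at
least `β`. -/
inductive BuildableOn (H : SimpleGraph V) (β : ℕ) : Set V → Prop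
  | base (u v : V) (huv : u ≠ v) (hadj : ¬ H.Adj u v) : BuildableOn H β {u, v}
  | handle (S : Set V) (n : ℕ) (p : ℕ → V) (hS : BuildableOn H β S)
      (hh : IsHandle H S n p) (hn : β ≤ n) :
      BuildableOn H β (S ∪ {w | ∃ j ≤ n, w = p j})

/-- `H` is `β`-buildable. -/
def Buildable [Fintype V] (H : SimpleGraph V) (β : ℕ) : Prop :=
  BuildableOn H β Set.univ

/-- The vertex sets `S` such that the induced subgraph `H[S]` can be built, starting
from the null graph, by repeatedly adding a subleaf or a handle of length at least
`β`. -/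
inductive WeaklyBuildableOn (H : SimpleGraph V) (β : ℕ) : Set V → Prop
  | empty : WeaklyBuildableOn H β ∅
  | subleaf (S : Set V) (v : V) (hv : v ∉ S) (hdeg : (S ∩ H.neighborSet v).ncard ≤ 1)
      (hS : WeaklyBuildableOn H β S) : WeaklyBuildableOn H β (insert v S)
  | handle (S : Set V) (n : ℕ) (p : ℕ → V) (hS : WeaklyBuildableOn H β S)
      (hh : IsHandle H S n p) (hn : β ≤ n) :
      WeaklyBuildableOn H β (S ∪ {w | ∃ j ≤ n, w = p j})

/-- `H` is weakly `β`-buildable. -/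
def WeaklyBuildable [Fintype V] (H : SimpleGraph V) (β : ℕ) : Prop :=
  WeaklyBuildableOn H β Set.univ

/-
Give every block total weight one and put `T = ⌈1/c⌉`.

*Growing levels.* Remove from `T + 1` blocks a maximal family of sets that expand badly. The removed
sets are small, since a badly expanding set of weight about `δ` would contradict non-divergence, so
in what remains every small set expands by a large factor into each of the other blocks. Levels that
start with one vertex and grow by the largest fresh neighbourhood therefore reach weight `δ` within
`T` rounds, and by non-divergence the last of them then sees most of each of many other blocks.

*Two families of levels with a common root.* Grow two families, `Z` and `X`, from the same vertex.
Take `S` in the last level of `Z` minimal such that it half-covers many blocks; by minimality it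
misses a quarter of many other blocks. Grow levels `M` inside those missed parts, from a vertex `v`
with a neighbour in the last level of `X`, and reroot `Z`, truncated to `S`, successively at the
vertices of the path from the root of `Z` through `X` to `v`. This yields levels `L` with the same
root as `M` and anticomplete to them; the total height is at most `3T`.

*Grading.* Minimal covering subsets of the last level of `L`, chosen one block after the other,
grade many blocks forwards. For the backward grading, blocks are selected one at a time, through a
subset `S` of the last level of `M` that covers a large part of one block and whose vertices have
few neighbours in the others. If too much of the other blocks is covered by `S` as well, then `S`
replaces the last level and the selection starts again; as `S` has fewer vertices, by a factor of
about `|G| ^ (-d)`, this happens a bounded number of times only.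
-/

section

open MeasureTheory
open scoped Finset

section Neighbourhoods

variable {G : SimpleGraph V} {X X' Y Y' : Set V}

lemma nbhd_mono (h : X ⊆ Y) : nbhd G X ⊆ nbhd G Y :=
  fun _ ⟨x, hx, hxv⟩ ↦ ⟨x, h hx, hxv⟩

lemma nbhd_empty : nbhd G ∅ = ∅ := by
  ext v
  simp [nbhd]

lemma nbhd_union : nbhd G (X ∪ Y) = nbhd G X ∪ nbhd G Y := by
  ext v
  simp only [nbhd, Set.mem_union, Set.mem_ofPred_eq, or_and_right, exists_or]

lemma nbhd_singleton (v : V) : nbhd G {v} = G.neighborSet v := by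
  ext u
  simp [nbhd]

lemma nbhd_subset_diff_singleton_union (x : V) :
    nbhd G X ⊆ nbhd G (X \ {x}) ∪ G.neighborSet x := by
  rw [← nbhd_singleton, ← nbhd_union]
  exact nbhd_mono fun y hy ↦ (em (y = x)).elim Or.inr fun h ↦ Or.inl ⟨hy, h⟩

lemma covers_iff_subset_nbhd : Covers G X Y ↔ Y ⊆ nbhd G X := Iff.rfl

lemma Covers.mono (h : Covers G X Y) (hX : X ⊆ X') (hY : Y' ⊆ Y) : Covers G X' Y' :=
  hY.trans ((covers_iff_subset_nbhd.1 h).trans (nbhd_mono hX))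

lemma Anticomplete.mono (h : Anticomplete G X Y) (hX : X' ⊆ X) (hY : Y' ⊆ Y) :
    Anticomplete G X' Y' :=
  fun x hx y hy ↦ h x (hX hx) y (hY hy)

lemma Anticomplete.symm (h : Anticomplete G X Y) : Anticomplete G Y X :=
  fun y hy x hx hyx ↦ h x hx y hy hyx.symm

lemma anticomplete_diff_nbhd : Anticomplete G X (Y \ nbhd G X) :=
  fun x hx _ hy hxy ↦ hy.2 ⟨x, hx, hxy⟩

end Neighbourhoods

section WeightedBlockades

variable [MeasurableSpace V] {G : SimpleGraph V} {μ : Measure V}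

/-- A family of sets of weight one, indexed by `I`, with the weighted versions of "the linkage is
at most `lam`" and "is not `(γ, δ)`-divergent". Weights are measured by `μ`, which is at least `ω`
at each vertex of each block; this allows blocks of different sizes to be treated uniformly. -/
structure WeightedBlockade (G : SimpleGraph V) (μ : Measure V) (I : Finset ℤ) (A : ℤ → Set V)
    (lam γ δ ω : ℝ) : Prop where
  measureReal_block : ∀ i ∈ I, μ.real (A i) = 1
  le_measureReal_singleton : ∀ i ∈ I, ∀ v ∈ A i, ω ≤ μ.real {v}
  linkage : ∀ i ∈ I, ∀ j ∈ I, i ≠ j → ∀ v ∈ A i, μ.real (G.neighborSet v ∩ A j) ≤ lam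
  not_divergent : ∀ i ∈ I, ∀ j ∈ I, i ≠ j → ∀ X ⊆ A i, ∀ Y ⊆ A j,
    γ ≤ μ.real X → δ ≤ μ.real Y → ¬ Anticomplete G X Y

variable {I : Finset ℤ} {A : ℤ → Set V} {lam γ δ ω : ℝ}

lemma WeightedBlockade.measureReal_diff_nbhd_lt (hA : WeightedBlockade G μ I A lam γ δ ω)
    {i j : ℤ} (hi : i ∈ I) (hj : j ∈ I) (hij : i ≠ j) {X C : Set V} (hX : X ⊆ A i) (hC : C ⊆ A j)
    (hXδ : δ ≤ μ.real X) : μ.real (C \ nbhd G X) < γ := by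
  by_contra! hγ
  exact hA.not_divergent j hj i hi hij.symm _ (Set.sdiff_subset.trans hC) X hX hγ hXδ
    anticomplete_diff_nbhd.symm

variable [IsFiniteMeasure μ]

lemma WeightedBlockade.measureReal_neighborSet_inter_le
    (hA : WeightedBlockade G μ I A lam γ δ ω) {i j : ℤ} (hi : i ∈ I) (hj : j ∈ I) (hij : i ≠ j)
    {v : V} {C : Set V} (hv : v ∈ A i) (hC : C ⊆ A j) : μ.real (G.neighborSet v ∩ C) ≤ lam :=
  (measureReal_mono (Set.inter_subset_inter_right _ hC)).trans (hA.linkage i hi j hj hij v hv)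

lemma WeightedBlockade.le_measureReal (hA : WeightedBlockade G μ I A lam γ δ ω)
    {i : ℤ} (hi : i ∈ I) {S : Set V} (hS : S.Nonempty) (hSA : S ⊆ A i) : ω ≤ μ.real S := by
  obtain ⟨v, hv⟩ := hS
  exact (hA.le_measureReal_singleton i hi v (hSA hv)).trans
    (measureReal_mono (Set.singleton_subset_iff.2 hv))

/-- Sets in the family `(B i : i ∈ P)` of weight less than `δ` expand by a factor `τ` into every
other member of the family. -/
def SmallSetsExpand (G : SimpleGraph V) (μ : Measure V) (P : Finset ℤ) (B : ℤ → Set V)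
    (δ τ : ℝ) : Prop :=
  ∀ i ∈ P, ∀ j ∈ P, i ≠ j → ∀ X ⊆ B i, μ.real X < δ → τ * μ.real X ≤ μ.real (nbhd G X ∩ B j)

/-- A family of badly expanding sets: `S (i, j) ⊆ D i` has weight less than `δ`, and expands by at
most `τ` into what remains of `D j` when all the sets `S (j, k)` are removed. -/
structure BadlyExpanding (G : SimpleGraph V) (μ : Measure V) (P : Finset ℤ) (D : ℤ → Set V)
    (δ τ : ℝ) (S : ℤ × ℤ → Set V) : Prop where
  subset : ∀ i ∈ P, ∀ j ∈ P, S (i, j) ⊆ D i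
  measureReal_lt : ∀ i ∈ P, ∀ j ∈ P, μ.real (S (i, j)) < δ
  measureReal_nbhd_le : ∀ i ∈ P, ∀ j ∈ P, i ≠ j →
    μ.real (nbhd G (S (i, j)) ∩ (D j \ ⋃ k ∈ P, S (j, k))) ≤ τ * μ.real (S (i, j))

variable {P : Finset ℤ} {D : ℤ → Set V} {τ κ : ℝ}

lemma BadlyExpanding.half_le_measureReal_diff {S : ℤ × ℤ → Set V}
    (hS : BadlyExpanding G μ P D δ τ S) (hD : ∀ i ∈ P, κ ≤ μ.real (D i)) (hPδ : #P * δ ≤ κ / 2)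
    {i : ℤ} (hi : i ∈ P) : κ / 2 ≤ μ.real (D i \ ⋃ k ∈ P, S (i, k)) := by
  have hsum : μ.real (⋃ k ∈ P, S (i, k)) ≤ #P * δ :=
    (measureReal_biUnion_finset_le P _).trans ((Finset.sum_le_card_nsmul P _ δ
      fun k hk ↦ (hS.measureReal_lt i hi k hk).le).trans_eq (nsmul_eq_mul _ _))
  linarith [hD i hi, le_measureReal_sdiff (μ := μ) (s₁ := D i) (s₂ := ⋃ k ∈ P, S (i, k))
    (measure_ne_top _ _)]

variable [DiscreteMeasurableSpace V]

-- If the enlarged set reached weight `δ`, it would see almost all of the rest of `D j`.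
lemma BadlyExpanding.update (hA : WeightedBlockade G μ I A lam γ δ ω) (hP : P ⊆ I)
    (hDA : ∀ i ∈ P, D i ⊆ A i) {S : ℤ × ℤ → Set V} (hS : BadlyExpanding G μ P D δ τ S) {i j : ℤ}
    (hi : i ∈ P) (hj : j ∈ P) (hij : i ≠ j) (hτ : 0 ≤ τ)
    (hbig : γ + τ * (2 * δ) ≤ μ.real (D j \ ⋃ k ∈ P, S (j, k))) {X : Set V}
    (hX : X ⊆ D i \ ⋃ k ∈ P, S (i, k)) (hXδ : μ.real X < δ)
    (hXτ : μ.real (nbhd G X ∩ (D j \ ⋃ k ∈ P, S (j, k))) < τ * μ.real X) :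
    BadlyExpanding G μ P D δ τ (Function.update S (i, j) (S (i, j) ∪ X)) := by
  have hSS : S ≤ Function.update S (i, j) (S (i, j) ∪ X) :=
    le_update_iff.2 ⟨Set.subset_union_left, fun _ _ ↦ le_rfl⟩
  have hdisj : Disjoint (S (i, j)) X :=
    Set.disjoint_sdiff_right.mono (Set.subset_biUnion_of_mem (u := fun k ↦ S (i, k)) hj) hX
  have hsum : μ.real (S (i, j) ∪ X) = μ.real (S (i, j)) + μ.real X :=
    measureReal_union hdisj .of_discrete
  have hsub : S (i, j) ∪ X ⊆ D i :=
    Set.union_subset (hS.subset i hi j hj) (hX.trans Set.sdiff_subset)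
  have hnbhd : μ.real (nbhd G (S (i, j) ∪ X) ∩ (D j \ ⋃ k ∈ P, S (j, k))) ≤
      τ * μ.real (S (i, j) ∪ X) := by
    rw [hsum, nbhd_union, Set.union_inter_distrib_right]
    linarith [hS.measureReal_nbhd_le i hi j hj hij, measureReal_union_le (μ := μ)
      (nbhd G (S (i, j)) ∩ (D j \ ⋃ k ∈ P, S (j, k))) (nbhd G X ∩ (D j \ ⋃ k ∈ P, S (j, k)))]
  have hδ : μ.real (S (i, j) ∪ X) < δ := by
    by_contra! hge
    have hmiss := hA.measureReal_diff_nbhd_lt (hP hi) (hP hj) hij (hsub.trans (hDA i hi))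
      (C := D j \ ⋃ k ∈ P, S (j, k)) (Set.sdiff_subset.trans (hDA j hj)) hge
    have hsplit := measureReal_inter_add_sdiff (μ := μ) (s := D j \ ⋃ k ∈ P, S (j, k))
      (.of_discrete (s := nbhd G (S (i, j) ∪ X)))
    rw [Set.inter_comm] at hsplit
    have : τ * μ.real (S (i, j) ∪ X) ≤ τ * (2 * δ) := mul_le_mul_of_nonneg_left
      (by linarith [hS.measureReal_lt i hi j hj]) hτ
    linarith
  refine ⟨fun a ha b hb ↦ ?_, fun a ha b hb ↦ ?_, fun a ha b hb hab ↦ ?_⟩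
  all_goals by_cases h : (a, b) = (i, j)
  · obtain ⟨rfl, rfl⟩ := Prod.mk.inj h
    simpa using hsub
  · simpa [Function.update_of_ne h] using hS.subset a ha b hb
  · simpa [h] using hδ
  · simpa [Function.update_of_ne h] using hS.measureReal_lt a ha b hb
  · obtain ⟨rfl, rfl⟩ := Prod.mk.inj h
    have hne : ∀ k, (b, k) ≠ (a, b) := fun k hk ↦ hab (Prod.mk.inj hk).1.symm
    simpa [Function.update_of_ne (hne _)] using hnbhd
  · rw [Function.update_of_ne h]
    exact (measureReal_mono (Set.inter_subset_inter_right _ (Set.sdiff_subset_sdiff_right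
      (Set.iUnion₂_mono fun k _ ↦ hSS (b, k))))).trans (hS.measureReal_nbhd_le a ha b hb hab)

variable [Finite V]

-- Remove from the sets `D i` as much as possible by a badly expanding family.
lemma exists_smallSetsExpand (hA : WeightedBlockade G μ I A lam γ δ ω) (hP : P ⊆ I)
    (hDA : ∀ i ∈ P, D i ⊆ A i) (hδ : 0 < δ) (hκ : 0 < κ) (hD : ∀ i ∈ P, κ ≤ μ.real (D i))
    (hPδ : #P * δ ≤ κ / 2) (hγ : γ ≤ κ / 4) :
    ∃ B : ℤ → Set V, (∀ i ∈ P, B i ⊆ D i ∧ κ / 2 ≤ μ.real (B i)) ∧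
      SmallSetsExpand G μ P B δ (κ / 8 / δ) := by
  set τ := κ / 8 / δ with hτ
  have hτδ : τ * (2 * δ) = κ / 4 := by rw [hτ]; field_simp; ring
  have hτ0 : 0 < τ := by positivity
  have hempty : BadlyExpanding G μ P D δ τ fun _ ↦ ∅ :=
    ⟨by simp, by simpa using fun _ _ _ _ ↦ hδ, by simp [nbhd_empty]⟩
  obtain ⟨S, hS, hmin⟩ := exists_minimalFor_of_wellFoundedLT (BadlyExpanding G μ P D δ τ)
    (fun S ↦ ∑ i ∈ P, (D i \ ⋃ k ∈ P, S (i, k)).ncard) ⟨_, hempty⟩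
  have hbig := fun i ↦ hS.half_le_measureReal_diff (i := i) hD hPδ
  refine ⟨fun i ↦ D i \ ⋃ k ∈ P, S (i, k), fun i hi ↦ ⟨Set.sdiff_subset, hbig i hi⟩, ?_⟩
  intro i hi j hj hij X hX hXδ
  by_contra! hXτ
  have hS' := hS.update hA hP hDA hi hj hij hτ0.le (by linarith [hbig j hj]) hX hXδ hXτ
  obtain ⟨x, hx⟩ : X.Nonempty := by
    rw [Set.nonempty_iff_ne_empty]
    rintro rfl
    simp [nbhd_empty] at hXτ
  have hSS : S ≤ Function.update S (i, j) (S (i, j) ∪ X) :=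
    le_update_iff.2 ⟨Set.subset_union_left, fun _ _ ↦ le_rfl⟩
  have hanti : ∀ a, D a \ ⋃ k ∈ P, Function.update S (i, j) (S (i, j) ∪ X) (a, k) ⊆
      D a \ ⋃ k ∈ P, S (a, k) := fun a ↦
    Set.sdiff_subset_sdiff_right (Set.iUnion₂_mono fun k _ ↦ hSS (a, k))
  refine (Finset.sum_lt_sum (fun a _ ↦ Set.ncard_le_ncard (hanti a)) ⟨i, hi, ?_⟩).not_ge
    (hmin hS' (Finset.sum_le_sum fun a _ ↦ Set.ncard_le_ncard (hanti a)))
  refine Set.ncard_lt_ncard ((hanti i).ssubset_of_not_subset fun h ↦ (h (hX hx)).2 ?_)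
  exact Set.mem_biUnion (x := j) hj (by simp [hx])

-- Take `X'` minimal among the subsets of `X` that cover at least half of at least `m` sets:
-- deleting a vertex uncovers at most a quarter of any set, and leaves fewer than `m` half covered.
lemma exists_covering_subset {ι : Type*} {X : Set V} {Q : Finset ι} {C : ι → Set V}
    {m : ℕ} (hm : m ≤ #Q) (hcov : ∀ j ∈ Q, Covers G X (C j))
    (hlink : ∀ j ∈ Q, ∀ x ∈ X, μ.real (G.neighborSet x ∩ C j) ≤ μ.real (C j) / 4) :
    ∃ X' ⊆ X, ∃ E ⊆ Q, #E = m ∧ (∀ j ∈ E, μ.real (C j) / 2 ≤ μ.real (C j ∩ nbhd G X')) ∧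
      ∀ j ∈ Q, j ∉ E → μ.real (C j) / 4 ≤ μ.real (C j \ nbhd G X') := by
  classical
  set half : Set V → Finset ι := fun Y ↦ {j ∈ Q | μ.real (C j) / 2 ≤ μ.real (C j ∩ nbhd G Y)}
  have half_X : half X = Q := Finset.filter_true_of_mem fun j hj ↦ by
    rw [Set.inter_eq_left.2 (covers_iff_subset_nbhd.1 (hcov j hj))]
    linarith [measureReal_nonneg (μ := μ) (s := C j)]
  obtain ⟨X', ⟨hX'X, hX'm⟩, hmin⟩ := exists_minimal_of_wellFoundedLT
    (fun Y : Set V ↦ Y ⊆ X ∧ m ≤ #(half Y)) ⟨X, subset_rfl, half_X ▸ hm⟩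
  refine ⟨X', hX'X, ?_⟩
  rcases X'.eq_empty_or_nonempty with rfl | ⟨x, hx⟩
  · obtain ⟨E, hE, hEm⟩ := Finset.exists_subset_card_eq hX'm
    refine ⟨E, hE.trans (Finset.filter_subset _ _), hEm,
      fun j hj ↦ (Finset.mem_filter.1 (hE hj)).2, fun j _ _ ↦ ?_⟩
    rw [nbhd_empty, Set.sdiff_empty]
    linarith [measureReal_nonneg (μ := μ) (s := C j)]
  have hlt : #(half (X' \ {x})) < m := by
    by_contra! hge
    exact (hmin ⟨Set.sdiff_subset.trans hX'X, hge⟩ Set.sdiff_subset hx).2 rfl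
  have hmono : half (X' \ {x}) ⊆ half X' := Finset.monotone_filter_right _ fun j _ hj ↦
    hj.trans (measureReal_mono (Set.inter_subset_inter_right _ (nbhd_mono Set.sdiff_subset)))
  obtain ⟨E, hE, hE', hEm⟩ := Finset.exists_subsuperset_card_eq hmono hlt.le hX'm
  refine ⟨E, hE'.trans (Finset.filter_subset _ _), hEm,
    fun j hj ↦ (Finset.mem_filter.1 (hE' hj)).2, fun j hj hjE ↦ ?_⟩
  have hnot : μ.real (C j ∩ nbhd G (X' \ {x})) < μ.real (C j) / 2 := by
    by_contra! hge
    exact hjE (hE (Finset.mem_filter.2 ⟨hj, hge⟩))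
  have hsub : C j ∩ nbhd G X' ⊆ C j ∩ nbhd G (X' \ {x}) ∪ G.neighborSet x ∩ C j := by
    rw [Set.inter_comm (G.neighborSet x), ← Set.inter_union_distrib_left]
    exact Set.inter_subset_inter_right _ (nbhd_subset_diff_singleton_union x)
  have hunion := (measureReal_mono hsub).trans (measureReal_union_le (μ := μ) _ _)
  have hsplit := measureReal_inter_add_sdiff (μ := μ) (s := C j) (.of_discrete (s := nbhd G X'))
  linarith [hlink j hj x (hX'X hx)]

end WeightedBlockades

section Levels

variable {G : SimpleGraph V} {v : V} {L : ℕ → Set V} {h : ℕ}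

/-- The levels `L 0 = {v}, …, L h` satisfy all the conditions on a levelling of height `h`, except
that they need not be disjoint; disjointness is automatic for rainbow levellings. -/
structure RootedLevels (G : SimpleGraph V) (v : V) (L : ℕ → Set V) (h : ℕ) : Prop where
  root : L 0 = {v}
  covers : ∀ i < h, Covers G (L i) (L (i + 1))
  anticomplete : ∀ i j, i + 2 ≤ j → j ≤ h → Anticomplete G (L i) (L j)

/-- The conditions under which `C` can be added to the levels `L 0, …, L h` as a new top level. -/
structure LeadsTo (G : SimpleGraph V) (L : ℕ → Set V) (h : ℕ) (C : Set V) : Prop where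
  covers : Covers G (L h) C
  anticomplete : ∀ i < h, Anticomplete G (L i) C

lemma LeadsTo.mono {C C' : Set V} (hL : LeadsTo G L h C) (hC : C' ⊆ C) : LeadsTo G L h C' :=
  ⟨hL.covers.mono subset_rfl hC, fun i hi ↦ (hL.anticomplete i hi).mono subset_rfl hC⟩

lemma rootedLevels_zero (v : V) : RootedLevels G v (fun _ ↦ {v}) 0 :=
  ⟨rfl, by simp, by omega⟩

lemma RootedLevels.congr {L' : ℕ → Set V} (hL : RootedLevels G v L h)
    (hLL : ∀ i ≤ h, L' i = L i) : RootedLevels G v L' h where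
  root := (hLL 0 h.zero_le).trans hL.root
  covers i hi := by
    rw [hLL i hi.le, hLL (i + 1) hi]
    exact hL.covers i hi
  anticomplete i j hij hj := by
    rw [hLL i (by omega), hLL j hj]
    exact hL.anticomplete i j hij hj

lemma RootedLevels.mono {h' : ℕ} (hL : RootedLevels G v L h) (hh : h' ≤ h) :
    RootedLevels G v L h' :=
  ⟨hL.root, fun i hi ↦ hL.covers i (hi.trans_le hh),
    fun i j hij hj ↦ hL.anticomplete i j hij (hj.trans hh)⟩

lemma RootedLevels.succ (hL : RootedLevels G v L h) (hC : LeadsTo G L h (L (h + 1))) :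
    RootedLevels G v L (h + 1) where
  root := hL.root
  covers i hi := (Nat.lt_succ_iff_lt_or_eq.1 hi).elim (hL.covers i) fun h ↦ h ▸ hC.covers
  anticomplete i j hij hj := (Nat.le_succ_iff.1 hj).elim (hL.anticomplete i j hij) fun h ↦
    h ▸ hC.anticomplete i (by omega)

lemma RootedLevels.update (hL : RootedLevels G v L h) {C : Set V} (hC : LeadsTo G L h C) :
    RootedLevels G v (Function.update L (h + 1) C) (h + 1) := by
  have hlow : ∀ i ≤ h, Function.update L (h + 1) C i = L i := fun i hi ↦
    Function.update_of_ne (by omega) _ _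
  refine (hL.congr hlow).succ ⟨?_, fun i hi ↦ ?_⟩
  · simpa [hlow] using hC.covers
  · simpa [hlow i hi.le] using hC.anticomplete i hi

lemma RootedLevels.shrink_last (hL : RootedLevels G v L h) (hh : 1 ≤ h) {X : Set V}
    (hX : X ⊆ L h) : RootedLevels G v (Function.update L h X) h := by
  have hsub : ∀ i, Function.update L h X i ⊆ L i := fun i ↦
    (update_le_self_iff.2 hX : Function.update L h X ≤ L) i
  have hlt : ∀ i < h, Function.update L h X i = L i := fun i hi ↦
    Function.update_of_ne hi.ne _ _
  exact ⟨(hlt 0 hh).trans hL.root, fun i hi ↦ (hlt i hi).symm ▸ (hL.covers i hi).mono subset_rfl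
    (hsub _), fun i j hij hj ↦ (hL.anticomplete i j hij hj).mono (hsub i) (hsub j)⟩

/-- For `i ∈ S`, the sets `L i` lie in distinct blocks `A (q i)`, where `q i ∈ J`. -/
structure IsRainbow {ι : Type*} (J : Set ℤ) (A : ℤ → Set V) (S : Set ι) (L : ι → Set V)
    (q : ι → ℤ) : Prop where
  mapsTo : Set.MapsTo q S J
  injOn : Set.InjOn q S
  subset : ∀ i ∈ S, L i ⊆ A (q i)

variable {ι : Type*} {J J' : Set ℤ} {A A' : ℤ → Set V} {S S' : Set ι} {F F' : ι → Set V}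
  {q : ι → ℤ}

lemma IsRainbow.mono (hF : IsRainbow J A S F q) (hJ : J ⊆ J') (hA : ∀ j ∈ J, A j ⊆ A' j)
    (hS : S' ⊆ S) (hFF : ∀ i ∈ S', F' i ⊆ F i) : IsRainbow J' A' S' F' q where
  mapsTo _ hi := hJ (hF.mapsTo (hS hi))
  injOn := hF.injOn.mono hS
  subset i hi := (hFF i hi).trans ((hF.subset i (hS hi)).trans (hA _ (hF.mapsTo (hS hi))))

lemma isRainbow_singleton_iff {a : ι} :
    IsRainbow J A {a} F q ↔ q a ∈ J ∧ F a ⊆ A (q a) :=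
  ⟨fun h ↦ ⟨h.mapsTo rfl, h.subset a rfl⟩,
    fun h ↦ ⟨by simpa using h.1, by simp, by simpa using h.2⟩⟩

lemma IsRainbow.update [DecidableEq ι] (hF : IsRainbow J A S F q) {a : ι} (ha : a ∉ S) {b : ℤ}
    (hb : b ∈ J) (hbq : b ∉ q '' S) {C : Set V} (hC : C ⊆ A b) :
    IsRainbow J A (insert a S) (Function.update F a C) (Function.update q a b) := by
  have hne : ∀ i ∈ S, i ≠ a := fun i hi hia ↦ ha (hia ▸ hi)
  have hq : Set.EqOn (Function.update q a b) q S := fun i hi ↦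
    Function.update_of_ne (hne i hi) _ _
  refine ⟨?_, (Set.injOn_insert ha).2 ⟨hF.injOn.congr hq.symm, ?_⟩, ?_⟩
  · rintro i (rfl | hi)
    · simpa using hb
    · exact (hq hi).symm ▸ hF.mapsTo hi
  · rwa [hq.image_eq, Function.update_self]
  · rintro i (rfl | hi)
    · simpa using hC
    · rw [hq hi, Function.update_of_ne (hne i hi)]
      exact hF.subset i hi

lemma IsRainbow.update_zero {L : ℕ → Set V} {h : ℕ} {q : ℕ → ℤ}
    (hL : IsRainbow J A (Set.Icc 1 h) L q) {b : ℤ} (hb : b ∈ J) (hbq : b ∉ q '' Set.Icc 1 h)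
    (hL₀ : L 0 ⊆ A b) : IsRainbow J A (Set.Iic h) L (Function.update q 0 b) := by
  have hIic : Set.Iic h = insert 0 (Set.Icc 1 h) := by
    ext i
    simp only [Set.mem_Iic, Set.mem_insert_iff, Set.mem_Icc]
    omega
  have hupd := hL.update (a := 0) (by simp) hb hbq hL₀
  rwa [Function.update_eq_self, ← hIic] at hupd

end Levels

section Growth

variable {G : SimpleGraph V} {M : ℕ → Set V} {i : ℕ} {D : Set V}

/-- The vertices with a neighbour in one of the levels `M 0, …, M (i - 1)`. -/
def seen (G : SimpleGraph V) (M : ℕ → Set V) (i : ℕ) : Set V := nbhd G (⋃ s < i, M s)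

lemma seen_succ : seen G M (i + 1) = seen G M i ∪ nbhd G (M i) := by
  rw [seen, Set.biUnion_lt_succ, nbhd_union, seen]

lemma seen_update (N : Set V) :
    seen G (Function.update M (i + 1) N) (i + 1) = seen G M (i + 1) := by
  have : ∀ s < i + 1, Function.update M (i + 1) N s = M s := fun s hs ↦
    Function.update_of_ne hs.ne _ _
  exact congrArg _ (Set.iUnion₂_congr this)

lemma leadsTo_inter_nbhd_diff_seen : LeadsTo G M i ((D ∩ nbhd G (M i)) \ seen G M i) where
  covers _ hv := hv.1.2
  anticomplete _ hs := anticomplete_diff_nbhd.mono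
    (Set.subset_biUnion_of_mem (u := M) (Set.mem_ofPred.2 hs)) subset_rfl

lemma inter_seen_succ_subset :
    D ∩ seen G M (i + 1) ⊆ D ∩ seen G M i ∪ (D ∩ nbhd G (M i)) \ seen G M i := by
  rw [seen_succ]
  intro v
  simp only [Set.mem_inter_iff, Set.mem_union, Set.mem_sdiff]
  tauto

variable [MeasurableSpace V] {μ : Measure V} {I P Q Q' : Finset ℤ}
  {A B C : ℤ → Set V} {lam γ δ ω τ κ ε : ℝ} {T n : ℕ} {v : V} {q : ℕ → ℤ}

/-- The state of the growing process after `i` of at most `T` rounds. The levels `M 1, …, M i`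
lie in distinct blocks of `(B j : j ∈ P)`, and have not yet seen much of the remaining blocks of
this family, nor of the surviving blocks `C j` with `j ∈ Q'`. -/
structure GrowthState (G : SimpleGraph V) (μ : Measure V) (P : Finset ℤ) (B C : ℤ → Set V)
    (δ τ ε : ℝ) (T n : ℕ) (v : V) (i : ℕ) (M : ℕ → Set V) (q : ℕ → ℤ) (Q' : Finset ℤ) :
    Prop where
  pos : 1 ≤ i
  le : i ≤ T
  levels : RootedLevels G v M i
  rainbow : IsRainbow P B (Set.Icc 1 i) M q
  card : 2 ^ (T - i + 1) * n ≤ #Q'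
  measureReal_seen_le : ∀ j ∈ Q', μ.real (C j ∩ seen G M i) ≤ i * ε
  measureReal_seen_le_two_mul : ∀ j ∈ P, j ∉ q '' Set.Icc 1 i →
    μ.real (B j ∩ seen G M i) ≤ 2 * μ.real (M i)
  le_pow_mul : δ ≤ (τ / 2) ^ (T - i) * μ.real (M i)

lemma GrowthState.last_mem (hM : GrowthState G μ P B C δ τ ε T n v i M q Q') : q i ∈ P :=
  hM.rainbow.mapsTo ⟨hM.pos, le_rfl⟩

lemma GrowthState.last_subset (hM : GrowthState G μ P B C δ τ ε T n v i M q Q') :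
    M i ⊆ B (q i) :=
  hM.rainbow.subset i ⟨hM.pos, le_rfl⟩

variable [IsFiniteMeasure μ]

lemma measureReal_inter_seen_succ_le : μ.real (D ∩ seen G M (i + 1)) ≤
    μ.real (D ∩ seen G M i) + μ.real ((D ∩ nbhd G (M i)) \ seen G M i) :=
  (measureReal_mono inter_seen_succ_subset).trans (measureReal_union_le _ _)

lemma exists_growthState_one (hA : WeightedBlockade G μ I A lam γ δ ω) (hP : P ⊆ I) (hQ : Q ⊆ I)
    (hB : ∀ j ∈ P, B j ⊆ A j) (hC : ∀ j ∈ Q, C j ⊆ A j) (hτ : 0 ≤ τ) (hT : 1 ≤ T) {i₀ : ℤ}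
    (hi₀ : i₀ ∈ I) (hi₀Q : i₀ ∉ Q) (hv : v ∈ A i₀)
    (hvB : ∃ j ∈ P, (B j ∩ G.neighborSet v).Nonempty) (hlam : lam ≤ ε)
    (hcard : 2 ^ T * n ≤ #Q) (hω : δ ≤ (τ / 2) ^ (T - 1) * ω) :
    ∃ M q, GrowthState G μ P B C δ τ ε T n v 1 M q Q := by
  obtain ⟨j₁, hj₁, hne⟩ := hvB
  obtain ⟨j₀, hj₀, hmax⟩ :=
    Finset.exists_max_image P (fun j ↦ μ.real (B j ∩ G.neighborSet v)) ⟨j₁, hj₁⟩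
  have hωN : ω ≤ μ.real (B j₀ ∩ G.neighborSet v) := (hA.le_measureReal (hP hj₁) hne
    (Set.inter_subset_left.trans (hB j₁ hj₁))).trans (hmax j₁ hj₁)
  have hseen : seen G (Function.update (fun _ ↦ {v}) (0 + 1) (B j₀ ∩ G.neighborSet v)) 1 =
      G.neighborSet v := by
    rw [seen_update, seen, ← nbhd_singleton]
    simp
  refine ⟨Function.update (fun _ ↦ {v}) (0 + 1) (B j₀ ∩ G.neighborSet v), fun _ ↦ j₀, le_rfl, hT,
    (rootedLevels_zero v).update ⟨fun u hu ↦ ⟨v, rfl, hu.2⟩, by simp⟩, ?_, ?_, fun j hj ↦ ?_,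
    fun j hj _ ↦ ?_, ?_⟩
  · simp [isRainbow_singleton_iff, hj₀]
  · rwa [Nat.sub_add_cancel hT]
  · rw [hseen, Set.inter_comm, Nat.cast_one, one_mul]
    exact (hA.measureReal_neighborSet_inter_le hi₀ (hQ hj) (fun h ↦ hi₀Q (h ▸ hj)) hv
      (hC j hj)).trans hlam
  · rw [hseen]
    simp only [zero_add, Function.update_self]
    linarith [hmax j hj, measureReal_nonneg (μ := μ) (s := B j₀ ∩ G.neighborSet v)]
  · simpa using hω.trans (mul_le_mul_of_nonneg_left hωN (by positivity))

variable [DiscreteMeasurableSpace V]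

lemma measureReal_sub_le_inter_diff (D M' U : Set V) :
    μ.real (D ∩ M') - μ.real (D ∩ U) ≤ μ.real ((D ∩ M') \ U) := by
  have hsplit := measureReal_inter_add_sdiff (μ := μ) (s := D ∩ M') (.of_discrete (s := U))
  linarith [measureReal_mono (μ := μ)
    (Set.inter_subset_inter_left U (Set.inter_subset_left (s := D) (t := M')))]

lemma GrowthState.le_measureReal_fresh (hM : GrowthState G μ P B C δ τ ε T n v i M q Q')
    (hA : WeightedBlockade G μ I A lam γ δ ω) (hP : P ⊆ I) (hQ : Q' ⊆ I) (hPQ : Disjoint P Q')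
    (hB : ∀ j ∈ P, B j ⊆ A j) (hC : ∀ j ∈ Q', C j ⊆ A j) (hκ : ∀ j ∈ Q', κ ≤ μ.real (C j))
    (hε : 0 ≤ ε) (hγε : γ + (T + 1) * ε ≤ κ) (hδ : δ ≤ μ.real (M i)) {j : ℤ} (hj : j ∈ Q') :
    ε ≤ μ.real ((C j ∩ nbhd G (M i)) \ seen G M i) := by
  have hne : q i ≠ j := fun h ↦ Finset.disjoint_left.1 hPQ hM.last_mem (h ▸ hj)
  have hmiss := hA.measureReal_diff_nbhd_lt (hP hM.last_mem) (hQ hj) hne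
    (hM.last_subset.trans (hB _ hM.last_mem)) (hC j hj) hδ
  have hsplit := measureReal_inter_add_sdiff (μ := μ) (s := C j)
    (.of_discrete (s := nbhd G (M i)))
  have hiT : (i : ℝ) * ε ≤ T * ε :=
    mul_le_mul_of_nonneg_right (Nat.cast_le.2 hM.le) hε
  linarith [hκ j hj, hM.measureReal_seen_le j hj,
    measureReal_sub_le_inter_diff (μ := μ) (C j) (nbhd G (M i)) (seen G M i)]

-- The next level is the largest set of fresh neighbours of `M i` in an unused block, so that the
-- bound on what has been seen of the other unused blocks is preserved.
lemma GrowthState.exists_succ (hM : GrowthState G μ P B C δ τ ε T n v i M q Q')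
    (hexp : SmallSetsExpand G μ P B δ τ) (hτ : 4 ≤ τ) (hTP : T ≤ #P) (hi : i < T)
    (hδ : μ.real (M i) < δ) {Q'' : Finset ℤ} (hQ'' : Q'' ⊆ Q') (hcard : #Q' < #Q'' + n)
    (hfew : ∀ j ∈ Q'', μ.real ((C j ∩ nbhd G (M i)) \ seen G M i) < ε) :
    ∃ M' q', GrowthState G μ P B C δ τ ε T n v (i + 1) M' q' Q'' := by
  classical
  set fresh : ℤ → Set V := fun j ↦ (B j ∩ nbhd G (M i)) \ seen G M i
  obtain ⟨j₁, hj₁⟩ : (P \ (Finset.Icc 1 i).image q).Nonempty := Finset.card_pos.1 <| by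
    have : #((Finset.Icc 1 i).image q) ≤ i := Finset.card_image_le.trans (by simp)
    have := Finset.le_card_sdiff ((Finset.Icc 1 i).image q) P
    omega
  obtain ⟨j₀, hj₀, hmax⟩ := Finset.exists_max_image _ (fun j ↦ μ.real (fresh j)) ⟨j₁, hj₁⟩
  have hunused : ∀ j, j ∈ P \ (Finset.Icc 1 i).image q ↔ j ∈ P ∧ j ∉ q '' Set.Icc 1 i := by simp
  simp only [hunused] at hj₀ hmax
  have hne : q i ≠ j₀ := fun h ↦ hj₀.2 ⟨i, ⟨hM.pos, le_rfl⟩, h⟩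
  have hgrow : τ / 2 * μ.real (M i) ≤ μ.real (fresh j₀) := by
    have hnbhd := hexp (q i) hM.last_mem j₀ hj₀.1 hne (M i) hM.last_subset hδ
    rw [Set.inter_comm] at hnbhd
    have := measureReal_sub_le_inter_diff (μ := μ) (B j₀) (nbhd G (M i)) (seen G M i)
    nlinarith [hM.measureReal_seen_le_two_mul j₀ hj₀.1 hj₀.2,
      measureReal_nonneg (μ := μ) (s := M i)]
  have hIcc : Set.Icc 1 (i + 1) = insert (i + 1) (Set.Icc 1 i) := by ext; simp; omega
  refine ⟨Function.update M (i + 1) (fresh j₀), Function.update q (i + 1) j₀, ?_⟩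
  have hq : Set.EqOn (Function.update q (i + 1) j₀) q (Set.Icc 1 i) := fun s hs ↦
    Function.update_of_ne (by simp at hs; omega) _ _
  refine ⟨by omega, hi, hM.levels.update leadsTo_inter_nbhd_diff_seen, ?_, ?_, ?_, ?_, ?_⟩
  · rw [hIcc]
    exact hM.rainbow.update (by simp) hj₀.1 hj₀.2 (Set.sdiff_subset.trans Set.inter_subset_left)
  · have hpow : 2 ^ (T - i + 1) * n = 2 * (2 ^ (T - (i + 1) + 1) * n) := by
      rw [show T - i = T - (i + 1) + 1 by omega]; ring
    have : n ≤ 2 ^ (T - (i + 1) + 1) * n := Nat.le_mul_of_pos_left _ (by positivity)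
    have := hM.card
    omega
  · intro j hj
    rw [seen_update]
    push_cast
    linarith [measureReal_inter_seen_succ_le (G := G) (M := M) (i := i) (D := C j) (μ := μ),
      hM.measureReal_seen_le j (hQ'' hj), hfew j hj]
  · intro j hj hjq
    rw [hIcc, Set.image_insert_eq, hq.image_eq, Set.mem_insert_iff, not_or] at hjq
    rw [seen_update, Function.update_self]
    nlinarith [measureReal_inter_seen_succ_le (G := G) (M := M) (i := i) (D := B j) (μ := μ),
      hM.measureReal_seen_le_two_mul j hj hjq.2, hmax j ⟨hj, hjq.2⟩,
      measureReal_nonneg (μ := μ) (s := M i)]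
  · rw [Function.update_self]
    refine hM.le_pow_mul.trans ?_
    rw [show T - i = T - (i + 1) + 1 by omega, pow_succ, mul_assoc]
    exact mul_le_mul_of_nonneg_left hgrow (by positivity)

lemma GrowthState.exists_leadsTo (hM : GrowthState G μ P B C δ τ ε T n v i M q Q')
    (hA : WeightedBlockade G μ I A lam γ δ ω) (hP : P ⊆ I) (hQ : Q ⊆ I) (hPQ : Disjoint P Q)
    (hB : ∀ j ∈ P, B j ⊆ A j) (hC : ∀ j ∈ Q, C j ⊆ A j) (hexp : SmallSetsExpand G μ P B δ τ)
    (hτ : 4 ≤ τ) (hTP : T ≤ #P) (hκ : ∀ j ∈ Q, κ ≤ μ.real (C j)) (hε : 0 ≤ ε)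
    (hγε : γ + (T + 1) * ε ≤ κ) (hQ' : Q' ⊆ Q) :
    ∃ b M q, ∃ Q'' ⊆ Q, ∃ C' : ℤ → Set V, 1 ≤ b ∧ b ≤ T ∧ RootedLevels G v M b ∧
      IsRainbow P B (Set.Icc 1 b) M q ∧ n ≤ #Q'' ∧
      ∀ j ∈ Q'', C' j ⊆ C j ∧ LeadsTo G M b (C' j) ∧ ε ≤ μ.real (C' j) := by
  classical
  induction hr : T - i using Nat.strong_induction_on generalizing i M q Q' with | _ r ih
  set Qa := {j ∈ Q' | ε ≤ μ.real ((C j ∩ nbhd G (M i)) \ seen G M i)} with hQa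
  by_cases hbig : n ≤ #Qa
  · exact ⟨i, M, q, Qa, (Finset.filter_subset _ _).trans hQ', _, hM.pos, hM.le, hM.levels,
      hM.rainbow, hbig, fun j hj ↦ ⟨Set.sdiff_subset.trans Set.inter_subset_left,
        leadsTo_inter_nbhd_diff_seen, (Finset.mem_filter.1 hj).2⟩⟩
  have hδ : μ.real (M i) < δ := by
    by_contra! hδ
    have hall : Qa = Q' := Finset.filter_true_of_mem fun j ↦ hM.le_measureReal_fresh hA hP
      (hQ'.trans hQ) (hPQ.mono_right hQ') hB (fun j hj ↦ hC j (hQ' hj)) (fun j hj ↦ hκ j (hQ' hj))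
      hε hγε hδ
    exact hbig (hall ▸ (Nat.le_mul_of_pos_left n (by positivity)).trans hM.card)
  have hi : i < T := hM.le.lt_of_ne <| by
    rintro rfl
    have := hM.le_pow_mul
    simp only [tsub_self, pow_zero, one_mul] at this
    linarith
  obtain ⟨M', q', hM'⟩ := hM.exists_succ hexp hτ hTP hi hδ (Q'' := Q' \ Qa) Finset.sdiff_subset
    (by have := Finset.le_card_sdiff Qa Q'; omega)
    fun j hj ↦ by simpa [hQa, (Finset.mem_sdiff.1 hj).1] using (Finset.mem_sdiff.1 hj).2
  exact ih (T - (i + 1)) (by omega) hM' (Finset.sdiff_subset.trans hQ') rfl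

end Growth

section Rerooting

variable {G : SimpleGraph V} {L : ℕ → Set V} {u x : V} {h i j s : ℕ} {w : V}

/-- `Descends G L x j s w`: there is a path from `x` to `w` that enters the levels at level `j`, and
then moves up one level at a time until it reaches `w ∈ L s`. -/
inductive Descends (G : SimpleGraph V) (L : ℕ → Set V) (x : V) (j : ℕ) : ℕ → V → Prop
  | entry {w : V} (hw : w ∈ L j) (hxw : G.Adj x w) : Descends G L x j j w
  | step {s : ℕ} {u w : V} (hu : Descends G L x j s u) (huw : G.Adj u w) (hw : w ∈ L (s + 1)) :
      Descends G L x j (s + 1) w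

lemma Descends.le (hw : Descends G L x j s w) : j ≤ s := by
  induction hw with
  | entry => exact le_rfl
  | step _ _ _ ih => exact ih.trans (Nat.le_succ _)

lemma Descends.mem (hw : Descends G L x j s w) : w ∈ L s := by
  cases hw with
  | entry hw => exact hw
  | step _ _ hw => exact hw

lemma RootedLevels.descends_zero (hL : RootedLevels G u L h) (hx : G.Adj x u) (hs : s ≤ h)
    (hw : w ∈ L s) : Descends G L x 0 s w := by
  induction s generalizing w with
  | zero =>
    obtain rfl : w = u := by simpa [hL.root] using hw
    exact .entry hw hx
  | succ s ih =>
    obtain ⟨y, hy, hyw⟩ := hL.covers s hs w hw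
    exact .step (ih (by omega) hy) hyw hw

/-- The vertices of `L s` for which `j` is the last level at which a path from `x` that moves up
one level at a time can enter. -/
def lastEntry (G : SimpleGraph V) (L : ℕ → Set V) (x : V) (j s : ℕ) : Set V :=
  {w | Descends G L x j s w ∧ ∀ j', j < j' → ¬ Descends G L x j' s w}

lemma lastEntry_subset : lastEntry G L x j s ⊆ L s := fun _ hw ↦ hw.1.mem

lemma RootedLevels.exists_mem_lastEntry (hL : RootedLevels G u L h) (hx : G.Adj x u)
    (hw : w ∈ L h) : ∃ j ≤ h, w ∈ lastEntry G L x j h := by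
  classical
  have hdesc := Nat.findGreatest_spec (P := fun j ↦ Descends G L x j h w) h.zero_le
    (hL.descends_zero hx le_rfl hw)
  exact ⟨_, hdesc.le, hdesc, fun j hj hw' ↦ Nat.findGreatest_is_greatest hj hw'.le hw'⟩

lemma covers_lastEntry_succ (hjs : j ≤ s) :
    Covers G (lastEntry G L x j s) (lastEntry G L x j (s + 1)) := by
  rintro w ⟨hw, hmax⟩
  cases hw with
  | entry => omega
  | @step _ y _ hy hyw hw =>
    exact ⟨y, ⟨hy, fun j' hj' hy' ↦ hmax j' hj' (.step hy' hyw hw)⟩, hyw⟩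

lemma anticomplete_singleton_lastEntry (hjs : j < s) :
    Anticomplete G {x} (lastEntry G L x j s) := by
  rintro _ rfl w ⟨hw, hmax⟩ hxw
  exact hmax s hjs (.entry hw.mem hxw)

/-- The levels obtained by going from `x` directly to level `j`, and from there up. -/
def reroot (G : SimpleGraph V) (L : ℕ → Set V) (x : V) (j : ℕ) : ℕ → Set V
  | 0 => {x}
  | i + 1 => lastEntry G L x j (j + i)

lemma RootedLevels.reroot (hL : RootedLevels G u L h) (hj : j ≤ h) :
    RootedLevels G x (reroot G L x j) (h - j + 1) where
  root := rfl
  covers i hi := by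
    rcases i with - | i
    · rintro w ⟨hw, -⟩
      generalize hs : j + 0 = s at hw
      cases hw with
      | entry _ hxw => exact ⟨x, rfl, hxw⟩
      | step hy => exact absurd hy.le (by omega)
    · exact covers_lastEntry_succ (by omega)
  anticomplete i i' hii' hi' := by
    obtain ⟨i', rfl⟩ : ∃ k, i' = k + 1 := ⟨i' - 1, by omega⟩
    rcases i with - | i
    · exact anticomplete_singleton_lastEntry (by omega)
    · exact (hL.anticomplete (j + i) (j + i') (by omega) (by omega)).mono lastEntry_subset
        lastEntry_subset

lemma RootedLevels.anticomplete_reroot (hL : RootedLevels G u L h) (hj : j ≤ h) {R : Set V}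
    (hu : Anticomplete G {u} R) (hR : ∀ i, 1 ≤ i → i ≤ h → Anticomplete G (L i) R) (hi : 1 ≤ i)
    (hih : i ≤ h - j + 1) : Anticomplete G (PurePairs.reroot G L x j i) R := by
  obtain ⟨i, rfl⟩ := Nat.exists_eq_add_of_le' hi
  refine Anticomplete.mono ?_ lastEntry_subset subset_rfl
  rcases (j + i).eq_zero_or_pos with h0 | hpos
  · rwa [h0, hL.root]
  · exact hR _ hpos (by omega)

lemma LeadsTo.reroot {C : Set V} (hC : LeadsTo G L h C) (hj : j ≤ h) :
    LeadsTo G (reroot G L x j) (h - j + 1)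
      ((C ∩ nbhd G (lastEntry G L x j h)) \ G.neighborSet x) where
  covers w hw := by
    obtain ⟨y, hy, hyw⟩ := hw.1.2
    exact ⟨y, by simpa [PurePairs.reroot, Nat.add_sub_cancel' hj] using hy, hyw⟩
  anticomplete i hi := by
    rcases i with - | i
    · rintro _ rfl w hw hxw
      exact hw.2 hxw
    · exact (hC.anticomplete (j + i) (by omega)).mono lastEntry_subset
        (Set.sdiff_subset.trans Set.inter_subset_left)

lemma IsRainbow.reroot {J : Set ℤ} {A : ℤ → Set V} {q : ℕ → ℤ}
    (hL : IsRainbow J A (Set.Iic h) L q) {b : ℤ} (hb : b ∉ J) (hx : x ∈ A b) (hj : j ≤ h) :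
    IsRainbow (insert b J) A (Set.Iic (h - j + 1)) (reroot G L x j)
      fun i ↦ i.casesOn b fun i ↦ q (j + i) where
  mapsTo i hi := by
    rcases i with - | i
    · exact Set.mem_insert _ _
    · exact Set.mem_insert_of_mem _ (hL.mapsTo (by simp at hi ⊢; omega))
  injOn i hi i' hi' hii' := by
    simp only [Set.mem_Iic] at hi hi'
    rcases i with - | i <;> rcases i' with - | i'
    · rfl
    · obtain rfl : b = q (j + i') := hii'
      exact absurd (hL.mapsTo (Set.mem_Iic.2 (by omega))) hb
    · obtain rfl : q (j + i) = b := hii'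
      exact absurd (hL.mapsTo (Set.mem_Iic.2 (by omega))) hb
    · have := hL.injOn (Set.mem_Iic.2 (by omega : j + i ≤ h))
        (Set.mem_Iic.2 (by omega : j + i' ≤ h)) hii'
      omega
  subset i hi := by
    rcases i with - | i
    · exact Set.singleton_subset_iff.2 hx
    · exact lastEntry_subset.trans (hL.subset (j + i) (by simp at hi ⊢; omega))

variable [MeasurableSpace V] {μ : Measure V} [IsFiniteMeasure μ]

-- Group the vertices of `L h` by the last entry level of `x`; some group covers a large part.
lemma RootedLevels.exists_measureReal_le_inter_nbhd_lastEntry (hL : RootedLevels G u L h)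
    (hx : G.Adj x u) {C : Set V} (hC : Covers G (L h) C) :
    ∃ j ≤ h, μ.real C / (h + 1) ≤ μ.real (C ∩ nbhd G (lastEntry G L x j h)) := by
  have hsub : C ⊆ ⋃ j ∈ Finset.range (h + 1), C ∩ nbhd G (lastEntry G L x j h) := fun w hw ↦ by
    obtain ⟨y, hy, hyw⟩ := hC w hw
    obtain ⟨j, hj, hyj⟩ := hL.exists_mem_lastEntry hx hy
    exact Set.mem_biUnion (x := j) (by simpa using Nat.lt_succ_of_le hj) ⟨hw, y, hyj, hyw⟩
  by_contra! hlt
  have hsum := Finset.sum_lt_sum_of_nonempty (s := Finset.range (h + 1)) (by simp)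
    fun j hj ↦ hlt j (Finset.mem_range_succ_iff.1 hj)
  rw [Finset.sum_const, Finset.card_range, nsmul_eq_mul, Nat.cast_succ,
    mul_div_cancel₀ _ (by positivity)] at hsum
  have hle := (measureReal_mono (μ := μ) hsub (measure_ne_top _ _)).trans
    (measureReal_biUnion_finset_le _ _)
  exact (hle.trans_lt hsum).false

variable [DiscreteMeasurableSpace V] {ι : Type*} {Q : Finset ι} {C : ι → Set V}

lemma RootedLevels.exists_reroot (hL : RootedLevels G u L h) (hx : G.Adj x u)
    (hC : ∀ k ∈ Q, LeadsTo G L h (C k)) {N n : ℕ} (hN : h + 1 ≤ N) (hn : N * n ≤ #Q)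
    (hlink : ∀ k ∈ Q, μ.real (G.neighborSet x ∩ C k) ≤ μ.real (C k) / (2 * N)) :
    ∃ j ≤ h, ∃ Q' ⊆ Q, ∃ C' : ι → Set V, n ≤ #Q' ∧ ∀ k ∈ Q', C' k ⊆ C k ∧
      LeadsTo G (PurePairs.reroot G L x j) (h - j + 1) (C' k) ∧
      μ.real (C k) / (2 * N) ≤ μ.real (C' k) := by
  classical
  have hpart := fun k (hk : k ∈ Q) ↦
    hL.exists_measureReal_le_inter_nbhd_lastEntry (μ := μ) hx (hC k hk).covers
  choose! f hfh hf using hpart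
  obtain ⟨j, hj, hcard⟩ := Finset.exists_le_card_fiber_of_mul_le_card_of_maps_to
    (t := Finset.range (h + 1)) (fun k hk ↦ Finset.mem_range_succ_iff.2 (hfh k hk)) (by simp)
    ((Finset.card_range (h + 1)).symm ▸ (Nat.mul_le_mul_right n hN).trans hn)
  rw [Finset.mem_range_succ_iff] at hj
  refine ⟨j, hj, {k ∈ Q | f k = j}, Finset.filter_subset _ _, _, hcard, fun k hk ↦
    ⟨Set.sdiff_subset.trans Set.inter_subset_left, (hC k (Finset.mem_filter.1 hk).1).reroot hj, ?_⟩⟩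
  obtain ⟨hkQ, rfl⟩ := Finset.mem_filter.1 hk
  have hhalf : 2 * (μ.real (C k) / (2 * N)) ≤ μ.real (C k) / (h + 1) := by
    rw [mul_div_assoc', mul_div_mul_left _ _ two_ne_zero]
    exact div_le_div_of_nonneg_left measureReal_nonneg (by positivity) (by exact_mod_cast hN)
  have := measureReal_sub_le_inter_diff (μ := μ) (C k) (nbhd G (lastEntry G L x (f k) h))
    (G.neighborSet x)
  rw [Set.inter_comm _ (G.neighborSet x)] at this
  linarith [hf k hkQ, hlink k hkQ]

-- Reroot the levels `Z` successively at the vertices of a path from `z` to `v`.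
lemma RootedLevels.exists_rainbow_of_mem {X Z : ℕ → Set V} {a t N n : ℕ} {z v : V} {A : ℤ → Set V}
    {J P : Set ℤ} {p q : ℕ → ℤ} {R : Set V} {lam κ : ℝ} (hZ : RootedLevels G z Z t)
    (hZr : IsRainbow J A (Set.Iic t) Z q) (hZC : ∀ k ∈ Q, LeadsTo G Z t (C k)) (ht : 1 ≤ t)
    (hX : RootedLevels G z X a) (hXr : IsRainbow P A (Set.Icc 1 a) X p) (hJP : Disjoint J P)
    (hZR : ∀ i, 1 ≤ i → i ≤ t → Anticomplete G (Z i) R) (hXR : ∀ i < a, Anticomplete G (X i) R)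
    (hN : t + a ≤ N) (hn : N ^ a * n ≤ #Q) (hκ : 0 ≤ κ) (hCκ : ∀ k ∈ Q, κ ≤ μ.real (C k))
    (hlam : lam ≤ κ / (2 * N) ^ a)
    (hlink : ∀ i, 1 ≤ i → i ≤ a → ∀ x ∈ X i, ∀ k ∈ Q, ∀ C' ⊆ C k,
      μ.real (G.neighborSet x ∩ C') ≤ lam) (hv : v ∈ X a) :
    ∃ h L q', ∃ Q' ⊆ Q, ∃ C' : ι → Set V, 1 ≤ h ∧ h ≤ t + a ∧ RootedLevels G v L h ∧
      IsRainbow (J ∪ p '' Set.Icc 1 a) A (Set.Iic h) L q' ∧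
      (∀ i, 1 ≤ i → i ≤ h → Anticomplete G (L i) R) ∧ n ≤ #Q' ∧
      ∀ k ∈ Q', C' k ⊆ C k ∧ LeadsTo G L h (C' k) ∧ κ / (2 * N) ^ a ≤ μ.real (C' k) := by
  induction a generalizing v n with
  | zero =>
    obtain rfl : v = z := by simpa [hX.root] using hv
    refine ⟨t, Z, q, Q, subset_rfl, C, ht, le_rfl, hZ, by simpa using hZr, hZR, by simpa using hn,
      fun k hk ↦ ⟨subset_rfl, hZC k hk, by simpa using hCκ k hk⟩⟩
  | succ a ih =>
    obtain ⟨u, hu, huv⟩ := hX.covers a a.lt_succ_self v hv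
    have hN0 : (1 : ℝ) ≤ N := Nat.one_le_cast.2 (by omega)
    have hpow : κ / (2 * N) ^ (a + 1) ≤ κ / (2 * N) ^ a :=
      div_le_div_of_nonneg_left hκ (by positivity) (pow_le_pow_right₀ (by linarith) a.le_succ)
    have hIcc : Set.Icc 1 a ⊆ Set.Icc 1 (a + 1) := Set.Icc_subset_Icc_right a.le_succ
    obtain ⟨h, L, q', Q₁, hQ₁, C₁, -, hh, hL, hLr, hLR, hcard, hC₁⟩ := ih
      (n := N * n) (hX.mono a.le_succ) (hXr.mono subset_rfl (fun _ _ ↦ subset_rfl) hIcc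
        fun _ _ ↦ subset_rfl) (fun i hi ↦ hXR i (by omega)) (by omega)
      (by rwa [← mul_assoc, ← pow_succ]) (hlam.trans hpow)
      (fun i hi hia ↦ hlink i hi (by omega)) hu
    have hdiv : ∀ k ∈ Q₁, κ / (2 * N) ^ (a + 1) ≤ μ.real (C₁ k) / (2 * N) := fun k hk ↦ by
      rw [pow_succ, ← div_div]
      exact div_le_div_of_nonneg_right (hC₁ k hk).2.2 (by positivity)
    obtain ⟨j, hj, Q₂, hQ₂, C₂, hcard₂, hC₂⟩ := hL.exists_reroot huv.symm
      (fun k hk ↦ (hC₁ k hk).2.1) (by omega) hcard fun k hk ↦ (hlink (a + 1) (by omega) le_rfl v hv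
        k (hQ₁ hk) _ (hC₁ k hk).1).trans (hlam.trans (hdiv k hk))
    have hp : p (a + 1) ∉ J ∪ p '' Set.Icc 1 a := by
      rintro (hpJ | ⟨i, hi, hip⟩)
      · exact Set.disjoint_left.1 hJP hpJ (hXr.mapsTo (by simp))
      · obtain rfl := hXr.injOn (hIcc hi) (by simp) hip
        simp at hi
    refine ⟨_, _, _, Q₂, hQ₂.trans hQ₁, C₂, by omega, by omega, hL.reroot hj,
      (hLr.reroot hp (hXr.subset _ (by simp) hv) hj).mono ?_ (fun _ _ ↦ subset_rfl) subset_rfl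
        fun _ _ ↦ subset_rfl, fun i ↦ hL.anticomplete_reroot hj
      ((hXR a a.lt_succ_self).mono (Set.singleton_subset_iff.2 hu) subset_rfl) hLR, hcard₂,
      fun k hk ↦ ⟨(hC₂ k hk).1.trans (hC₁ k (hQ₂ hk)).1, (hC₂ k hk).2.1,
        (hdiv k (hQ₂ hk)).trans (hC₂ k hk).2.2⟩⟩
    rw [Set.insert_subset_iff]
    exact ⟨.inr ⟨a + 1, by simp, rfl⟩, Set.union_subset_union_right J (Set.image_mono hIcc)⟩

end Rerooting

section Grading

variable {G : SimpleGraph V} {ι : Type*} [LinearOrder ι] {X : Set V} {J : Finset ι}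
  {C : ι → Set V}

/-- Subsets of `X` grade the family `(C j : j ∈ J)` forwards: the main condition for a levelling
with top level `X` to do so. -/
def ForwardGraded (G : SimpleGraph V) (X : Set V) (J : Finset ι) (C : ι → Set V) : Prop :=
  ∀ j ∈ J, ∃ Y ⊆ X, (∀ i ∈ J, j ≤ i → Covers G Y (C i)) ∧ ∀ i ∈ J, i < j → Anticomplete G Y (C i)

/-- Subsets of `X` grade the family `(C j : j ∈ J)` backwards: the main condition for a levelling
with top level `X` to do so. -/
def BackwardGraded (G : SimpleGraph V) (X : Set V) (J : Finset ι) (C : ι → Set V) : Prop :=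
  ∀ j ∈ J, ∃ Y ⊆ X, (∀ i ∈ J, i ≤ j → Covers G Y (C i)) ∧ ∀ i ∈ J, j < i → Anticomplete G Y (C i)

lemma ForwardGraded.mono {J' : Finset ι} {C' : ι → Set V} (hC : ForwardGraded G X J C)
    (hJ : J' ⊆ J) (hCC : ∀ j ∈ J', C' j ⊆ C j) : ForwardGraded G X J' C' := by
  intro j hj
  obtain ⟨Y, hY, hcov, hanti⟩ := hC j (hJ hj)
  exact ⟨Y, hY, fun i hi hji ↦ (hcov i (hJ hi) hji).mono subset_rfl (hCC i hi),
    fun i hi hij ↦ (hanti i (hJ hi) hij).mono subset_rfl (hCC i hi)⟩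

lemma ForwardGraded.covers (hC : ForwardGraded G X J C) {j : ι} (hj : j ∈ J) :
    Covers G X (C j) := by
  obtain ⟨Y, hY, hcov, -⟩ := hC j hj
  exact (hcov j hj le_rfl).mono hY subset_rfl

lemma ForwardGraded.exists_anticomplete (hC : ForwardGraded G X J C) {J' : Finset ι}
    (hJ : J' ⊆ J) {i : ι} (hi : i ∈ J) (hij : ∀ j ∈ J', i < j) :
    ∃ X' ⊆ X, Anticomplete G X' (C i) ∧ ForwardGraded G X' J' C := by
  choose! Y hYX hcov hanti using hC
  refine ⟨⋃ j ∈ J', Y j, Set.iUnion₂_subset fun j hj ↦ hYX j (hJ hj), fun x hx ↦ ?_, fun j hj ↦ ?_⟩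
  · obtain ⟨j, hj, hxj⟩ := Set.mem_iUnion₂.1 hx
    exact hanti j (hJ hj) i hi (hij j hj) x hxj
  · exact ⟨Y j, Set.subset_biUnion_of_mem (u := Y) hj, fun a ha ↦ hcov j (hJ hj) a (hJ ha),
      fun a ha ↦ hanti j (hJ hj) a (hJ ha)⟩

lemma ForwardGraded.insert {a : ι} (hC : ForwardGraded G X J C) (ha : ∀ j ∈ J, j < a)
    {X' : Set V} (hX' : X' ⊆ X) (hcov : Covers G X' (C a))
    (hanti : ∀ j ∈ J, Anticomplete G X' (C j)) : ForwardGraded G X (insert a J) C := by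
  simp only [ForwardGraded, Finset.forall_mem_insert]
  refine ⟨⟨X', hX', ⟨fun _ ↦ hcov, fun i hi hai ↦ absurd (ha i hi) hai.not_gt⟩,
    fun haa ↦ absurd haa (lt_irrefl a), fun i hi _ ↦ hanti i hi⟩, fun j hj ↦ ?_⟩
  obtain ⟨Y, hY, hYcov, hYanti⟩ := hC j hj
  refine ⟨Y ∪ X', Set.union_subset hY hX', ⟨fun _ ↦ hcov.mono Set.subset_union_right subset_rfl,
    fun i hi hji ↦ (hYcov i hi hji).mono Set.subset_union_left subset_rfl⟩,
    fun haj ↦ absurd (ha j hj) haj.not_gt, fun i hi hij ↦ ?_⟩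
  rintro x (hx | hx)
  exacts [hYanti i hi hij x hx, hanti i hi x hx]

lemma BackwardGraded.insert {a : ι} (hC : BackwardGraded G X J C) (ha : ∀ j ∈ J, a < j)
    {X' : Set V} (hX' : X' ⊆ X) (hcov : Covers G X' (C a))
    (hanti : ∀ j ∈ J, Anticomplete G X' (C j)) : BackwardGraded G X (insert a J) C :=
  ForwardGraded.insert (ι := ιᵒᵈ) hC ha hX' hcov hanti

variable [MeasurableSpace V] {μ : Measure V} [IsFiniteMeasure μ] [DiscreteMeasurableSpace V]
  [Finite V]

-- The set `X'` of `exists_covering_subset` covers the last block and misses the others.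
lemma exists_forwardGraded {n : ℕ} {Q : Finset ℤ} {D : ℤ → Set V} {κ lam : ℝ} (hn : n ≤ #Q)
    (hcov : ∀ j ∈ Q, Covers G X (D j)) (hκ₀ : 0 ≤ κ) (hκ : ∀ j ∈ Q, κ ≤ μ.real (D j))
    (hlink : ∀ j ∈ Q, ∀ x ∈ X, μ.real (G.neighborSet x ∩ D j) ≤ lam) (hlam : lam ≤ κ / 4 ^ n) :
    ∃ (C : ℤ → Set V) (e : ℤ → ℤ), IsRainbow Q D (Finset.Ico 0 (n : ℤ)) C e ∧
      ForwardGraded G X (Finset.Ico 0 (n : ℤ)) C ∧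
      ∀ i ∈ Finset.Ico 0 (n : ℤ), κ / 4 ^ n ≤ μ.real (C i) := by
  induction n generalizing Q D κ with
  | zero =>
    exact ⟨D, id, ⟨by simp [Set.MapsTo], by simp, by simp⟩, by simp [ForwardGraded], by simp⟩
  | succ n ih =>
    have hpow : κ / 4 ^ (n + 1) = κ / 4 / 4 ^ n := by rw [pow_succ', div_div]
    have hle : κ / 4 / 4 ^ n ≤ κ / 4 := div_le_self (by positivity) (one_le_pow₀ (by norm_num))
    obtain ⟨X', hX', E, hE, hEcard, hEcov, hEnot⟩ := exists_covering_subset (μ := μ) (m := 1)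
      (by omega) hcov fun j hj x hx ↦ (hlink j hj x hx).trans
        ((hlam.trans (hpow.trans_le hle)).trans (by linarith [hκ j hj]))
    obtain ⟨e₀, rfl⟩ := Finset.card_eq_one.1 hEcard
    have he₀ : e₀ ∈ Q := hE (Finset.mem_singleton_self e₀)
    obtain ⟨C, e, hCe, hgr, hCκ⟩ := ih (Q := Q.erase e₀) (D := fun j ↦ D j \ nbhd G X')
      (κ := κ / 4) (by rw [Finset.card_erase_of_mem he₀]; omega)
      (fun j hj ↦ (hcov j (Finset.mem_of_mem_erase hj)).mono subset_rfl Set.sdiff_subset)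
      (by positivity)
      (fun j hj ↦ (by linarith [hκ j (Finset.mem_of_mem_erase hj)] : κ / 4 ≤ _).trans
        (hEnot j (Finset.mem_of_mem_erase hj) (by simpa using Finset.ne_of_mem_erase hj)))
      (fun j hj x hx ↦ (measureReal_mono (Set.inter_subset_inter_right _ Set.sdiff_subset)).trans
        (hlink j (Finset.mem_of_mem_erase hj) x hx)) (hlam.trans_eq hpow)
    have hIco : Finset.Ico 0 ((n + 1 : ℕ) : ℤ) = insert (n : ℤ) (Finset.Ico 0 (n : ℤ)) := by
      rw [Nat.cast_succ, Finset.insert_Ico_right_eq_Ico_add_one (by omega)]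
    have hlt : ∀ i ∈ Finset.Ico 0 (n : ℤ), i < n := fun i hi ↦ (Finset.mem_Ico.1 hi).2
    have hold : ∀ i ∈ Finset.Ico 0 (n : ℤ),
        Function.update C n (D e₀ ∩ nbhd G X') i = C i := fun i hi ↦
      Function.update_of_ne (hlt i hi).ne _ _
    have hrb := (hCe.mono (J' := Q) (A' := D) (Finset.coe_subset.2 (Finset.erase_subset e₀ Q))
      (fun _ _ ↦ Set.sdiff_subset) subset_rfl fun _ _ ↦ subset_rfl).update (a := n) (by simp) he₀
      (by rintro ⟨i, hi, hi'⟩; simpa [hi'] using hCe.mapsTo hi)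
      (Set.inter_subset_left (t := nbhd G X'))
    refine ⟨_, _, by rwa [hIco, Finset.coe_insert], ?_, ?_⟩ <;> rw [hIco]
    · refine (hgr.mono subset_rfl fun i hi ↦ (hold i hi).subset).insert hlt hX' ?_ fun i hi ↦ ?_
      · rw [Function.update_self]
        exact fun v hv ↦ hv.2
      · rw [hold i hi]
        exact anticomplete_diff_nbhd.mono subset_rfl (hCe.subset i hi)
    · rw [hpow, Finset.forall_mem_insert, Function.update_self]
      refine ⟨hle.trans ?_, fun i hi ↦ (hold i hi).symm ▸ hCκ i hi⟩
      linarith [hκ e₀ he₀, hEcov e₀ (Finset.mem_singleton_self e₀)]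

end Grading

section WeakLinks

lemma exists_subset_sum_le_mul_sum {ι : Type*} {X : Finset ι} {a l : ι → ℝ} {c κ ρ : ℝ}
    (hl : ∀ x ∈ X, 0 ≤ l x) (hρ : 0 < ρ) (hρκ : ρ ≤ κ / 4) (hc : 0 < c) (haκ : κ ≤ ∑ x ∈ X, a x)
    (hlκ : ∑ x ∈ X, l x ≤ c * (κ / 4)) :
    ∃ S ⊆ X, ρ ≤ ∑ x ∈ S, a x ∧ (#S - 1 : ℝ) * κ ≤ 4 * #X * ρ ∧
      ∑ x ∈ S, l x ≤ c * ∑ x ∈ S, a x := by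
  classical
  obtain ⟨x₀, hx₀⟩ : X.Nonempty := by
    by_contra! h
    rw [h, Finset.sum_empty] at haκ
    linarith
  have hX : (0 : ℝ) < #X := Nat.cast_pos.2 (Finset.card_pos.2 ⟨x₀, hx₀⟩)
  let heavy := X.filter fun x ↦ κ / 4 / #X ≤ a x
  let good := heavy.filter fun x ↦ l x ≤ c * a x
  have hlight : ∑ x ∈ X with ¬ κ / 4 / #X ≤ a x, a x ≤ κ / 4 := by
    refine (Finset.sum_le_card_nsmul _ _ (κ / 4 / #X) fun x hx ↦
      (not_le.1 (Finset.mem_filter.1 hx).2).le).trans ?_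
    rw [nsmul_eq_mul, mul_div_left_comm]
    refine mul_le_of_le_one_right (by linarith) (div_le_one_of_le₀ ?_ hX.le)
    exact_mod_cast Finset.card_filter_le _ _
  have hloaded : ∑ x ∈ heavy with ¬ l x ≤ c * a x, a x ≤ κ / 4 := by
    refine le_of_mul_le_mul_left ?_ hc
    rw [Finset.mul_sum]
    refine (Finset.sum_le_sum fun x hx ↦ (not_le.1 (Finset.mem_filter.1 hx).2).le).trans ?_
    exact (Finset.sum_le_sum_of_subset_of_nonneg
      ((Finset.filter_subset _ _).trans (Finset.filter_subset _ _)) fun x hx _ ↦ hl x hx).trans hlκ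
  have hgood : ρ ≤ ∑ x ∈ good, a x := by
    linarith [Finset.sum_filter_add_sum_filter_not X (fun x ↦ κ / 4 / #X ≤ a x) a,
      Finset.sum_filter_add_sum_filter_not heavy (fun x ↦ l x ≤ c * a x) a]
  obtain ⟨S, hSgood, hS⟩ := exists_minimal_le_of_wellFoundedLT
    (fun S : Finset ι ↦ ρ ≤ ∑ x ∈ S, a x) good hgood
  refine ⟨S, hSgood.trans ((Finset.filter_subset _ _).trans (Finset.filter_subset _ _)), hS.prop,
    ?_, ?_⟩
  · obtain ⟨x, hx⟩ : S.Nonempty := Finset.nonempty_of_sum_ne_zero (hρ.trans_le hS.prop).ne'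
    have hlt : ∑ y ∈ S.erase x, a y < ρ := not_le.1 (hS.not_prop_of_lt (Finset.erase_ssubset hx))
    have hge := Finset.card_nsmul_le_sum (S.erase x) a (κ / 4 / #X) fun y hy ↦
      (Finset.mem_filter.1 (Finset.mem_filter.1 (hSgood (Finset.mem_of_mem_erase hy))).1).2
    rw [nsmul_eq_mul, Finset.card_erase_of_mem hx, Nat.cast_pred (Finset.card_pos.2 ⟨x, hx⟩),
      div_div, mul_div_assoc', div_le_iff₀ (by positivity)] at hge
    nlinarith
  · rw [Finset.mul_sum]
    exact Finset.sum_le_sum fun x hx ↦ (Finset.mem_filter.1 (hSgood hx)).2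

variable [MeasurableSpace V] {μ : Measure V} [IsFiniteMeasure μ] [DiscreteMeasurableSpace V]

lemma sum_measureReal_inter_preimage_singleton {ι : Type*} (S : Finset ι) (Y : Set V) (φ : V → ι) :
    ∑ x ∈ S, μ.real (Y ∩ φ ⁻¹' {x}) = μ.real (Y ∩ φ ⁻¹' S) := by
  simpa [measureReal_restrict_apply MeasurableSet.of_discrete, Set.inter_comm Y] using
    sum_measureReal_preimage_singleton (μ := μ.restrict Y) S fun x _ ↦ .of_discrete (s := φ ⁻¹' {x})

variable [Finite V]

lemma setAverage_le_of_forall_le {D : Set V} {f : V → ℝ} {t : ℝ} (ht : 0 ≤ t)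
    (hft : ∀ v ∈ D, f v ≤ t) : ⨍ v in D, f v ∂μ ≤ t := by
  have hint : ∫ v in D, f v ∂μ ≤ μ.real D * t := by
    simpa using setIntegral_mono_on (μ := μ) (Integrable.of_finite (f := f)).integrableOn
      (Integrable.of_finite (f := fun _ ↦ t)).integrableOn .of_discrete hft
  rw [setAverage_eq, smul_eq_mul, inv_mul_eq_div]
  exact div_le_of_le_mul₀ measureReal_nonneg ht (by linarith)

lemma measureReal_lt_le_div_four {D : Set V} {f : V → ℝ} {t : ℝ} (hf : ∀ v, 0 ≤ f v) (ht : 0 < t)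
    (hft : ⨍ v in D, f v ∂μ ≤ t / 4) : μ.real {v ∈ D | t < f v} ≤ μ.real D / 4 := by
  have hint : ∫ v in D, f v ∂μ ≤ μ.real D * (t / 4) := by
    rw [← measure_smul_setAverage f (measure_ne_top μ D), smul_eq_mul]
    exact mul_le_mul_of_nonneg_left hft measureReal_nonneg
  have hmarkov := mul_meas_ge_le_integral_of_nonneg (μ := μ.restrict D) (.of_forall hf)
    .of_finite t
  rw [measureReal_restrict_apply .of_discrete] at hmarkov
  have hmono : μ.real {v ∈ D | t < f v} ≤ μ.real ({v | t ≤ f v} ∩ D) :=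
    measureReal_mono fun v hv ↦ ⟨hv.2.le, hv.1⟩
  refine le_of_mul_le_mul_left ?_ ht
  linarith [mul_le_mul_of_nonneg_left hmono ht.le]

lemma sum_setAverage {ι : Type*} (S : Finset ι) (D : Set V) (f : ι → V → ℝ) :
    ∑ x ∈ S, ⨍ v in D, f x v ∂μ = ⨍ v in D, ∑ x ∈ S, f x v ∂μ := by
  simp only [setAverage_eq, integral_finsetSum S fun x _ ↦ Integrable.of_finite (f := f x),
    Finset.smul_sum]

variable {G : SimpleGraph V} {B D P : Set V} {lam lam₁ κ ρ : ℝ}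

/-- The vertices of `D` whose neighbours form at most the proportion `lam` of `P`. -/
def weaklyLinked (G : SimpleGraph V) (μ : Measure V) (D P : Set V) (lam : ℝ) : Set V :=
  {v ∈ D | μ.real (G.neighborSet v ∩ P) ≤ lam * μ.real P}

lemma le_measureReal_weaklyLinked (hP : 0 < lam₁ * μ.real P)
    (h : ⨍ v in D, μ.real (G.neighborSet v ∩ P) ∂μ ≤ lam₁ * μ.real P / 4) :
    3 * μ.real D / 4 ≤ μ.real (weaklyLinked G μ D P lam₁) := by
  have hsdiff : D \ {v ∈ D | lam₁ * μ.real P < μ.real (G.neighborSet v ∩ P)} ⊆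
      weaklyLinked G μ D P lam₁ := fun v hv ↦ ⟨hv.1, not_lt.1 fun hlt ↦ hv.2 ⟨hv.1, hlt⟩⟩
  have := measureReal_lt_le_div_four (D := D) (fun v ↦ measureReal_nonneg) hP h
  linarith [measureReal_mono (μ := μ) hsdiff (measure_ne_top _ _),
    le_measureReal_sdiff (μ := μ) (s₁ := D)
      (s₂ := {v ∈ D | lam₁ * μ.real P < μ.real (G.neighborSet v ∩ P)})]

-- Assign to each vertex of `B` one neighbour in `X`, and choose `S` among the vertices of `X`
-- with large fibres to which the sets `D r` send few edges on average.
lemma exists_weaklyLinked_of_covers {ι : Type*} {X : Finset V} {F : Finset ι} {D : ι → Set V}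
    (hX : Covers G X B) (hlam : 0 ≤ lam) (hlam₁ : 0 < lam₁)
    (hlink : ∀ r ∈ F, ∀ v ∈ D r, μ.real (G.neighborSet v ∩ B) ≤ lam)
    (hκ : κ ≤ μ.real B) (hρ : 0 < ρ) (hρκ : ρ ≤ κ / 4) (hF : 16 * lam * #F ≤ κ * lam₁) :
    ∃ S ⊆ X, ∃ P ⊆ B ∩ nbhd G S, ρ ≤ μ.real P ∧ (#S - 1 : ℝ) * κ ≤ 4 * #X * ρ ∧
      ∀ r ∈ F, 3 * μ.real (D r) / 4 ≤ μ.real (weaklyLinked G μ (D r) P lam₁) := by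
  choose! φ hφX hφ using hX
  let l (x : V) (r : ι) : ℝ := ⨍ v in D r, μ.real (G.neighborSet v ∩ B ∩ φ ⁻¹' {x}) ∂μ
  have hl : ∀ x r, 0 ≤ l x r := fun x r ↦ integral_nonneg fun v ↦ measureReal_nonneg
  have hsum (S : Finset V) : ∑ x ∈ S, ∑ r ∈ F, l x r =
      ∑ r ∈ F, ⨍ v in D r, μ.real (G.neighborSet v ∩ (B ∩ φ ⁻¹' S)) ∂μ := by
    simp only [l, Finset.sum_comm (s := S), sum_setAverage,
      sum_measureReal_inter_preimage_singleton, ← Set.inter_assoc]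
  have hBX : B ∩ φ ⁻¹' X = B := Set.inter_eq_left.2 hφX
  obtain ⟨S, hSX, hρS, hcard, hlS⟩ := exists_subset_sum_le_mul_sum (X := X)
    (a := fun x ↦ μ.real (B ∩ φ ⁻¹' {x})) (l := fun x ↦ ∑ r ∈ F, l x r) (c := lam₁ / 4)
    (fun x _ ↦ Finset.sum_nonneg fun r _ ↦ hl x r) hρ hρκ (by positivity)
    (by rwa [sum_measureReal_inter_preimage_singleton, hBX]) (by
      rw [hsum, hBX]
      have := Finset.sum_le_card_nsmul F _ _ fun r hr ↦
        setAverage_le_of_forall_le (μ := μ) hlam (hlink r hr)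
      rw [nsmul_eq_mul] at this
      linarith)
  rw [sum_measureReal_inter_preimage_singleton] at hρS hlS
  rw [hsum] at hlS
  refine ⟨S, hSX, B ∩ φ ⁻¹' S, fun v hv ↦ ⟨hv.1, φ v, hv.2, hφ v hv.1⟩, hρS, hcard,
    fun r hr ↦ le_measureReal_weaklyLinked (mul_pos hlam₁ (hρ.trans_le hρS)) ?_⟩
  have hle : ⨍ v in D r, μ.real (G.neighborSet v ∩ (B ∩ φ ⁻¹' S)) ∂μ ≤ _ :=
    Finset.single_le_sum
      (f := fun r ↦ ⨍ v in D r, μ.real (G.neighborSet v ∩ (B ∩ φ ⁻¹' S)) ∂μ)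
      (fun r _ ↦ integral_nonneg fun v ↦ measureReal_nonneg) hr
  linarith

end WeakLinks

section OneStep

variable [MeasurableSpace V] {μ : Measure V}

lemma weaklyLinked_mono {G : SimpleGraph V} {D D' P : Set V} {lam : ℝ} (hD : D ⊆ D') :
    weaklyLinked G μ D P lam ⊆ weaklyLinked G μ D' P lam :=
  fun _ hv ↦ ⟨hD hv.1, hv.2⟩

variable [IsFiniteMeasure μ] {G : SimpleGraph V} {Q R : Finset ℤ} {C : ℤ → Set V}
  {lam lam₁ κ ρ : ℝ}

lemma measureReal_inter_nbhd_le_card_mul {S : Finset V} {D : Set V}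
    (hS : ∀ x ∈ S, μ.real (G.neighborSet x ∩ D) ≤ lam) : μ.real (D ∩ nbhd G S) ≤ #S * lam := by
  have hnbhd : D ∩ nbhd G S ⊆ ⋃ x ∈ S, G.neighborSet x ∩ D := fun v ⟨hvD, x, hx, hxv⟩ ↦
    Set.mem_biUnion hx ⟨hxv, hvD⟩
  calc
    _ ≤ μ.real (⋃ x ∈ S, G.neighborSet x ∩ D) := measureReal_mono hnbhd (measure_ne_top _ _)
    _ ≤ ∑ x ∈ S, μ.real (G.neighborSet x ∩ D) := measureReal_biUnion_finset_le _ _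
    _ ≤ #S * lam := by simpa using Finset.sum_le_card_nsmul S _ lam hS

lemma card_mul_pow_lt_one {S : Finset V} {D : Set V} {n s : ℕ} (hκ : 0 < κ) (hρ : 0 < ρ)
    (hlam : 0 ≤ lam) (hS : ∀ x ∈ S, μ.real (G.neighborSet x ∩ D) ≤ lam)
    (hD : lam < μ.real (D ∩ nbhd G S)) (hSn : (#S - 1 : ℝ) * κ ≤ 4 * n * ρ)
    (hn : n * (8 * ρ / κ) ^ (s + 1) < 1) : #S * (8 * ρ / κ) ^ s < 1 := by
  have hS1 : (1 : ℝ) < #S := by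
    by_contra! hcard
    linarith [measureReal_inter_nbhd_le_card_mul hS, mul_le_mul_of_nonneg_right hcard hlam]
  have hS2 : (2 : ℝ) ≤ #S := by exact_mod_cast hS1
  have hle : (#S : ℝ) ≤ n * (8 * ρ / κ) := by
    rw [mul_div_assoc', le_div_iff₀ hκ]
    nlinarith
  calc
    #S * (8 * ρ / κ) ^ s ≤ n * (8 * ρ / κ) * (8 * ρ / κ) ^ s := by gcongr
    _ < 1 := by rwa [mul_assoc, ← pow_succ']

variable [DiscreteMeasurableSpace V]

lemma measureReal_diff_le_weaklyLinked_diff (D N P : Set V) :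
    μ.real (D \ N) + μ.real (weaklyLinked G μ D P lam₁) ≤
      μ.real D + μ.real (weaklyLinked G μ (D \ N) P lam₁) := by
  have hdiff : weaklyLinked G μ (D \ N) P lam₁ = weaklyLinked G μ D P lam₁ \ N := by
    ext v
    simp only [weaklyLinked, Set.mem_ofPred_eq, Set.mem_sdiff]
    tauto
  have hN := measureReal_inter_add_sdiff (μ := μ) (s := weaklyLinked G μ D P lam₁)
    (.of_discrete (s := N))
  have hD := measureReal_inter_add_sdiff (μ := μ) (s := D) (.of_discrete (s := N))
  have : μ.real (weaklyLinked G μ D P lam₁ ∩ N) ≤ μ.real (D ∩ N) :=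
    measureReal_mono (Set.inter_subset_inter_left _ fun v hv ↦ hv.1)
  rw [hdiff]
  linarith

lemma le_measureReal_weaklyLinked_diff_nbhd {X S P D : Set V}
    (hS : μ.real (D ∩ nbhd G S) < μ.real (D ∩ nbhd G X) / 2)
    (hweak : 3 * μ.real (D ∩ nbhd G X) / 4 ≤
      μ.real (weaklyLinked G μ (D ∩ nbhd G X) P lam₁)) :
    μ.real (D ∩ nbhd G X) / 4 ≤ μ.real (weaklyLinked G μ (D \ nbhd G S) P lam₁) := by
  have hsplit := measureReal_inter_add_sdiff (μ := μ) (s := D ∩ nbhd G X)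
    (.of_discrete (s := nbhd G S))
  have hsub : μ.real (D ∩ nbhd G X ∩ nbhd G S) ≤ μ.real (D ∩ nbhd G S) :=
    measureReal_mono (Set.inter_subset_inter_left _ Set.inter_subset_left)
  have hmono : μ.real (weaklyLinked G μ ((D ∩ nbhd G X) \ nbhd G S) P lam₁) ≤
      μ.real (weaklyLinked G μ (D \ nbhd G S) P lam₁) :=
    measureReal_mono (weaklyLinked_mono (Set.sdiff_subset_sdiff_left Set.inter_subset_left))
  linarith [measureReal_diff_le_weaklyLinked_diff (G := G) (μ := μ) (lam₁ := lam₁)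
    (D ∩ nbhd G X) (nbhd G S) P]

variable [Finite V]

lemma exists_weaklyLinked_inter_nbhd {X : Finset V} (hQR : Disjoint Q R) {i : ℤ} (hi : i ∈ Q)
    (hlink : ∀ j ∈ Q ∪ R, j ≠ i → ∀ v ∈ C j, μ.real (G.neighborSet v ∩ C i) ≤ lam)
    (hlam : 0 ≤ lam) (hlam₁ : 0 < lam₁) (hρ : 0 < ρ) (hρκ : ρ ≤ κ / 4)
    (hlamκ : 16 * lam * #(Q ∪ R) ≤ κ * lam₁) (hXκ : κ ≤ μ.real (C i ∩ nbhd G X)) :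
    ∃ S ⊆ X, ∃ P ⊆ C i ∩ nbhd G S, ρ ≤ μ.real P ∧ (#S - 1 : ℝ) * κ ≤ 4 * #X * ρ ∧
      (∀ j ∈ Q, j ≠ i → 3 * μ.real (C j ∩ nbhd G X) / 4 ≤
        μ.real (weaklyLinked G μ (C j ∩ nbhd G X) P lam₁)) ∧
      ∀ j ∈ R, 3 * μ.real (C j) / 4 ≤ μ.real (weaklyLinked G μ (C j) P lam₁) := by
  let D (j : ℤ) : Set V := if j ∈ Q then C j ∩ nbhd G X else C j
  have hD : ∀ j, D j ⊆ C j := fun j ↦ by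
    by_cases hj : j ∈ Q <;> simp [D, hj]
  obtain ⟨S, hSX, P, hP, hρP, hcard, hweak⟩ := exists_weaklyLinked_of_covers (μ := μ) (lam := lam)
    (F := (Q ∪ R).erase i) (covers_iff_subset_nbhd.2 (Set.inter_subset_right (s := C i))) hlam
    hlam₁ (fun j hj v hv ↦ (measureReal_mono (Set.inter_subset_inter_right _
        Set.inter_subset_left)).trans
      (hlink j (Finset.mem_of_mem_erase hj) (Finset.ne_of_mem_erase hj) v (hD j hv))) hXκ hρ hρκ
    ((mul_le_mul_of_nonneg_left (Nat.cast_le.2 Finset.card_erase_le) (by positivity)).trans hlamκ)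
  refine ⟨S, hSX, P, hP.trans (Set.inter_subset_inter_left _ Set.inter_subset_left), hρP, hcard,
    fun j hj hji ↦ ?_, fun j hj ↦ ?_⟩
  · simpa [D, hj] using hweak j (by simp [hj, hji])
  · have hjQ := Finset.disjoint_right.1 hQR hj
    simpa [D, hjQ] using hweak j (by simp [hj, (ne_of_mem_of_not_mem hi hjQ).symm])

lemma le_card_erase_sdiff {Q' : Finset ℤ} {m q : ℕ} (hqm : q < m) (hQ'Q : Q' ⊆ Q)
    (hQ : 2 * m ≤ #Q) (hQ' : #Q' < m) (i : ℤ) : q ≤ #((Q \ Q').erase i) := by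
  have := Finset.pred_card_le_card_erase (a := i) (s := Q \ Q')
  have := Finset.card_sdiff_add_card_eq_card hQ'Q
  omega

-- If few of the blocks survive outside the neighbourhood of `S`, then most of them are half
-- covered by `S`, which has fewer vertices than `X` by a factor of `8 * ρ / κ`: replace `X` by `S`.
lemma exists_weaklyLinked_diff_nbhd {s q : ℕ} {X : Finset V} (hQR : Disjoint Q R)
    (hlink : ∀ i ∈ Q, ∀ j ∈ Q ∪ R, j ≠ i → ∀ v ∈ C j, μ.real (G.neighborSet v ∩ C i) ≤ lam)
    (hlinkX : ∀ j ∈ Q, ∀ x ∈ X, μ.real (G.neighborSet x ∩ C j) ≤ lam) (hlam : 0 ≤ lam)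
    (hlt : lam < κ) (hlam₁ : 0 < lam₁) (hρ : 0 < ρ) (hρκ : ρ ≤ κ / 4)
    (hlamκ : 16 * lam * #(Q ∪ R) ≤ κ * lam₁) (hcard : 2 ^ s * (q + 1) ≤ #Q)
    (hXκ : ∀ j ∈ Q, κ * 2 ^ s ≤ μ.real (C j ∩ nbhd G X)) (hXs : #X * (8 * ρ / κ) ^ s < 1) :
    ∃ i ∈ Q, ∃ S ⊆ X, ∃ P ⊆ C i ∩ nbhd G S, ρ ≤ μ.real P ∧
      (∃ J ⊆ Q, q ≤ #J ∧ ∀ j ∈ J, i < j ∧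
        κ / 4 ≤ μ.real (weaklyLinked G μ (C j \ nbhd G S) P lam₁)) ∧
      ∀ j ∈ R, 3 * μ.real (C j) / 4 ≤ μ.real (weaklyLinked G μ (C j) P lam₁) := by
  have hκ : 0 < κ := by linarith
  have hQne {s : ℕ} {Q : Finset ℤ} (h : 2 ^ s * (q + 1) ≤ #Q) : Q.Nonempty :=
    Finset.card_pos.1 (lt_of_lt_of_le (by positivity) h)
  induction s generalizing X Q with
  | zero =>
    obtain ⟨i, hi⟩ := hQne hcard
    have := hXκ i hi
    rw [show X = ∅ by simpa using hXs, Finset.coe_empty, nbhd_empty, Set.inter_empty,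
      measureReal_empty] at this
    linarith
  | succ s ih =>
    have hmin := Q.min'_mem (hQne hcard)
    have hκs {s : ℕ} : κ ≤ κ * 2 ^ s := le_mul_of_one_le_right hκ.le (one_le_pow₀ one_le_two)
    obtain ⟨S, hSX, P, hP, hρP, hScard, hweakQ, hweakR⟩ := exists_weaklyLinked_inter_nbhd hQR
      hmin (hlink _ hmin) hlam hlam₁ hρ hρκ hlamκ (hκs.trans (hXκ _ hmin))
    let Q' := {j ∈ Q | μ.real (C j ∩ nbhd G X) / 2 ≤ μ.real (C j ∩ nbhd G S)}
    have hQ'Q : Q' ⊆ Q := Finset.filter_subset _ _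
    by_cases hmany : 2 ^ s * (q + 1) ≤ #Q'
    · have hQ'κ : ∀ j ∈ Q', κ * 2 ^ s ≤ μ.real (C j ∩ nbhd G S) := fun j hj ↦ by
        have := hXκ j (hQ'Q hj)
        rw [pow_succ] at this
        linarith [(Finset.mem_filter.1 hj).2]
      obtain ⟨j, hj⟩ := hQne hmany
      have hSs := card_mul_pow_lt_one hκ hρ hlam (fun x hx ↦ hlinkX j (hQ'Q hj) x (hSX hx))
        (hlt.trans_le (hκs.trans (hQ'κ j hj))) hScard hXs
      have hQ'R := Finset.union_subset_union_left (t := R) hQ'Q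
      obtain ⟨i, hi, S', hS', P', hP', hρP', ⟨J, hJ, hJq⟩, hR⟩ := ih (hQR.mono_left hQ'Q)
        (fun i hi j hj ↦ hlink i (hQ'Q hi) j (hQ'R hj))
        (fun j hj x hx ↦ hlinkX j (hQ'Q hj) x (hSX hx))
        ((mul_le_mul_of_nonneg_left (Nat.cast_le.2 (Finset.card_le_card hQ'R))
          (by positivity)).trans hlamκ) hmany hQ'κ hSs
      exact ⟨i, hQ'Q hi, S', hS'.trans hSX, P', hP', hρP', ⟨J, hJ.trans hQ'Q, hJq⟩, hR⟩
    · refine ⟨_, hmin, S, hSX, P, hP, hρP, ⟨(Q \ Q').erase (Q.min' (hQne hcard)),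
        (Finset.erase_subset _ _).trans Finset.sdiff_subset, ?_, fun j hj ↦ ?_⟩, hweakR⟩
      · rw [pow_succ', mul_assoc] at hcard
        exact le_card_erase_sdiff (Nat.le_mul_of_pos_left (q + 1) (Nat.two_pow_pos s)) hQ'Q hcard
          (not_le.1 hmany) _
      · obtain ⟨hjmin, hjQ, hjQ'⟩ : j ≠ _ ∧ j ∈ Q ∧ j ∉ Q' := by simpa using hj
        refine ⟨lt_of_le_of_ne (Q.min'_le j hjQ) hjmin.symm, ?_⟩
        have hfew : μ.real (C j ∩ nbhd G S) < μ.real (C j ∩ nbhd G X) / 2 := by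
          simpa [Q', hjQ] using hjQ'
        linarith [hκs.trans (hXκ j hjQ),
          le_measureReal_weaklyLinked_diff_nbhd hfew (hweakQ j hjQ hjmin)]

end OneStep

section BackwardGrading

variable [MeasurableSpace V] {μ : Measure V} {G : SimpleGraph V} {Q R J : Finset ℤ}
  {X S : Set V} {C D : ℤ → Set V} {i : ℤ} {n m s : ℕ} {lam lam₁ ρ w w' : ℝ}

/-- The numerical conditions under which one more block can be selected from at most `n` blocks,
of linkage at most `lam`, in a graph with `N` vertices: the selected block has weight at least `ρ`,
the vertices which remain see only a fraction `lam₁` of it, and the other blocks keep a weight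
which is at least `w`. -/
structure SelectionBounds (N n s : ℕ) (lam lam₁ ρ w : ℝ) : Prop where
  lam_nonneg : 0 ≤ lam
  lam_lt : lam < w
  pos_lam₁ : 0 < lam₁
  pos_ρ : 0 < ρ
  ρ_le : ρ ≤ w
  lam_mul_le : 2 * lam * n ≤ w * lam₁
  mul_pow_lt_one : N * (ρ / w) ^ s < 1

lemma SelectionBounds.pos (hb : SelectionBounds n m s lam lam₁ ρ w) : 0 < w :=
  hb.pos_ρ.trans_le hb.ρ_le

lemma SelectionBounds.mono {N : ℕ} (hb : SelectionBounds N n s lam lam₁ ρ w) (hw : w ≤ w') :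
    SelectionBounds N n s lam lam₁ ρ w' where
  lam_nonneg := hb.lam_nonneg
  lam_lt := hb.lam_lt.trans_le hw
  pos_lam₁ := hb.pos_lam₁
  pos_ρ := hb.pos_ρ
  ρ_le := hb.ρ_le.trans hw
  lam_mul_le := hb.lam_mul_le.trans (mul_le_mul_of_nonneg_right hw hb.pos_lam₁.le)
  mul_pow_lt_one := by
    have hρ := hb.pos_ρ
    have hw₀ := hb.pos
    have hw₀' := hw₀.trans_le hw
    refine lt_of_le_of_lt ?_ hb.mul_pow_lt_one
    gcongr

/-- The result of selecting the block `D i` and shrinking the remaining blocks: those with `j ∈ J`,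
from which the next blocks are to be selected, and those with `j ∈ R`, selected previously. -/
structure Selection (G : SimpleGraph V) (μ : Measure V) (J R : Finset ℤ) (C : ℤ → Set V)
    (lam₁ ρ w : ℝ) (i : ℤ) (S : Set V) (D : ℤ → Set V) : Prop where
  lt : ∀ j ∈ J, i < j
  subset : ∀ j, D j ⊆ C j
  covers : Covers G S (D i)
  anticomplete : ∀ j ∈ J, Anticomplete G S (D j)
  le_measureReal : ρ ≤ μ.real (D i)
  le_measureReal_of_mem : ∀ j ∈ J, w ≤ μ.real (D j)
  half_le_measureReal : ∀ j ∈ R, μ.real (C j) / 2 ≤ μ.real (D j)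
  linkage : ∀ j ∈ J ∪ R, ∀ v ∈ D j, μ.real (G.neighborSet v ∩ D i) ≤ lam₁ * μ.real (D i)

lemma exists_selection_of_weaklyLinked (hJR : Disjoint J R) (hi : i ∉ R) {P : Set V}
    (hP : P ⊆ C i ∩ nbhd G S) (hρ : ρ ≤ μ.real P)
    (hJ : ∀ j ∈ J, i < j ∧ w ≤ μ.real (weaklyLinked G μ (C j \ nbhd G S) P lam₁))
    (hR : ∀ j ∈ R, 3 * μ.real (C j) / 4 ≤ μ.real (weaklyLinked G μ (C j) P lam₁)) :
    ∃ D, Selection G μ J R C lam₁ ρ w i S D := by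
  let D (j : ℤ) : Set V :=
    if j = i then P else weaklyLinked G μ (if j ∈ J then C j \ nbhd G S else C j) P lam₁
  have hDi : D i = P := if_pos rfl
  have hDJ : ∀ j ∈ J, D j = weaklyLinked G μ (C j \ nbhd G S) P lam₁ := fun j hj ↦ by
    simp [D, (hJ j hj).1.ne', hj]
  have hDR : ∀ j ∈ R, D j = weaklyLinked G μ (C j) P lam₁ := fun j hj ↦ by
    simp [D, ne_of_mem_of_not_mem hj hi, Finset.disjoint_right.1 hJR hj]
  refine ⟨D, fun j hj ↦ (hJ j hj).1, fun j ↦ ?_, hDi ▸ fun v hv ↦ (hP hv).2, fun j hj ↦ ?_,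
    hDi.symm ▸ hρ, fun j hj ↦ hDJ j hj ▸ (hJ j hj).2, fun j hj ↦ ?_, fun j hj v hv ↦ ?_⟩
  · obtain rfl | hji := eq_or_ne j i
    · exact hDi ▸ hP.trans Set.inter_subset_left
    · simp only [D, hji, if_false]
      split_ifs
      exacts [fun v hv ↦ hv.1.1, fun v hv ↦ hv.1]
  · exact hDJ j hj ▸ anticomplete_diff_nbhd.mono subset_rfl fun v hv ↦ hv.1
  · rw [hDR j hj]
    linarith [hR j hj, measureReal_nonneg (μ := μ) (s := C j)]
  · rw [hDi]
    rcases Finset.mem_union.1 hj with hj | hj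
    · exact (hDJ j hj ▸ hv).2
    · exact (hDR j hj ▸ hv).2

/-- The result of selecting `m` blocks `(D j : j ∈ J)` one after the other, starting from the family
`C`. Each selection shrinks the blocks with `j ∈ R`, and those selected before. -/
structure GradedSelection (G : SimpleGraph V) (μ : Measure V) (X : Set V) (R : Finset ℤ)
    (C : ℤ → Set V) (lam₁ ρ : ℝ) (m : ℕ) (J : Finset ℤ) (D : ℤ → Set V) : Prop where
  card : #J = m
  subset : ∀ j, D j ⊆ C j
  graded : BackwardGraded G X J D
  le_measureReal : ∀ j ∈ J, ρ / 2 ^ m ≤ μ.real (D j)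
  le_measureReal_of_mem : ∀ j ∈ R, μ.real (C j) / 2 ^ m ≤ μ.real (D j)
  linkage : ∀ i ∈ J, ∀ j ∈ J ∪ R, j ≠ i → ∀ v ∈ D j,
    μ.real (G.neighborSet v ∩ D i) ≤ lam₁ * 2 ^ m * μ.real (D i)

variable [IsFiniteMeasure μ]

lemma GradedSelection.insert {J' : Finset ℤ} {D' : ℤ → Set V} (hρ : 0 ≤ ρ) (hlam₁ : 0 ≤ lam₁)
    (hD : Selection G μ J R C lam₁ ρ w i S D) (hS : S ⊆ X) (hJ' : J' ⊆ J)
    (hD' : GradedSelection G μ X (insert i R) D lam₁ ρ m J' D') :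
    GradedSelection G μ X R C lam₁ ρ (m + 1) (insert i J') D' := by
  have hiJ' : i ∉ J' := fun h ↦ (hD.lt i (hJ' h)).false
  have hDi := hD'.le_measureReal_of_mem i (Finset.mem_insert_self i R)
  have hmono : ρ / 2 ^ (m + 1) ≤ ρ / 2 ^ m := by
    gcongr <;> norm_num
  have hlink {D : Set V} : lam₁ * 2 ^ m * μ.real D ≤ lam₁ * 2 ^ (m + 1) * μ.real D := by
    gcongr <;> norm_num
  refine ⟨by rw [Finset.card_insert_of_notMem hiJ', hD'.card],
    fun j ↦ (hD'.subset j).trans (hD.subset j),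
    hD'.graded.insert (fun j hj ↦ hD.lt j (hJ' hj)) hS (hD.covers.mono subset_rfl (hD'.subset i))
      fun j hj ↦ (hD.anticomplete j (hJ' hj)).mono subset_rfl (hD'.subset j), ?_, fun j hj ↦ ?_, ?_⟩
  · rw [Finset.forall_mem_insert]
    exact ⟨hmono.trans (le_trans (by gcongr; exact hD.le_measureReal) hDi),
      fun j hj ↦ hmono.trans (hD'.le_measureReal j hj)⟩
  · rw [pow_succ', ← div_div]
    exact le_trans (by gcongr; exact hD.half_le_measureReal j hj)
      (hD'.le_measureReal_of_mem j (Finset.mem_insert_of_mem hj))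
  · rw [Finset.forall_mem_insert, Finset.insert_union]
    refine ⟨fun j hj hji v hv ↦ ?_, fun a ha j hj hja v hv ↦
      (hD'.linkage a ha j (by rwa [Finset.union_insert]) hja v hv).trans hlink⟩
    rw [div_le_iff₀' (by positivity)] at hDi
    calc μ.real (G.neighborSet v ∩ D' i) ≤ μ.real (G.neighborSet v ∩ D i) :=
          measureReal_mono (Set.inter_subset_inter_right _ (hD'.subset i))
      _ ≤ lam₁ * μ.real (D i) := hD.linkage j (Finset.union_subset_union_left hJ'
          (Finset.mem_of_mem_insert_of_ne hj hji)) v (hD'.subset j hv)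
      _ ≤ lam₁ * 2 ^ m * μ.real (D' i) := by
          rw [mul_assoc]
          exact mul_le_mul_of_nonneg_left hDi hlam₁
      _ ≤ _ := hlink

variable [DiscreteMeasurableSpace V] [Finite V]

lemma SelectionBounds.exists_selection
    (hb : SelectionBounds (Nat.card V) n s lam lam₁ ρ w) (hQR : Disjoint Q R) (hn : #(Q ∪ R) ≤ n)
    (hlink : ∀ i ∈ Q, ∀ j ∈ Q ∪ R, j ≠ i → ∀ v ∈ C j, μ.real (G.neighborSet v ∩ C i) ≤ lam)
    (hlinkX : ∀ j ∈ Q, ∀ x ∈ X, μ.real (G.neighborSet x ∩ C j) ≤ lam)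
    (hcov : ∀ j ∈ Q, Covers G X (C j)) (hcard : 2 ^ ((s + 1) * (m + 1)) ≤ #Q)
    (hw : ∀ j ∈ Q, 2 ^ ((s + 3) * (m + 1)) * w ≤ μ.real (C j)) :
    ∃ i ∈ Q, ∃ S ⊆ X, ∃ J ⊆ Q, 2 ^ ((s + 1) * m) ≤ #J ∧
      ∃ D, Selection G μ J R C lam₁ ρ (2 * (2 ^ ((s + 3) * m) * w)) i S D := by
  set w' := 2 ^ ((s + 3) * m) * w with hw'
  have hww' : w ≤ w' := le_mul_of_one_le_left hb.pos.le (one_le_pow₀ one_le_two)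
  have hb' := hb.mono hww'
  obtain ⟨Y, rfl⟩ := X.toFinite.exists_finset_coe
  have hY : (#Y : ℝ) ≤ Nat.card V := by
    rw [← Set.ncard_coe_finset]
    exact_mod_cast Set.ncard_le_card (Y : Set V)
  have hcard' : 2 ^ s * (2 ^ ((s + 1) * m) + 1) ≤ 2 ^ ((s + 1) * (m + 1)) := by
    have := Nat.one_le_two_pow (n := (s + 1) * m)
    calc 2 ^ s * (2 ^ ((s + 1) * m) + 1) ≤ 2 ^ s * (2 ^ ((s + 1) * m) * 2) := by gcongr; omega
      _ = _ := by ring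
  obtain ⟨i, hi, S, hS, P, hP, hρP, ⟨J, hJ, hJcard, hJw⟩, hR⟩ :=
    exists_weaklyLinked_diff_nbhd (μ := μ) (κ := 8 * w') (ρ := ρ) hQR hlink hlinkX
      hb.lam_nonneg (by linarith [hb'.lam_lt, hb'.pos]) hb.pos_lam₁ hb.pos_ρ
      (by linarith [hb'.ρ_le, hb'.pos]) (by
        have : (#(Q ∪ R) : ℝ) ≤ n := Nat.cast_le.2 hn
        nlinarith [hb'.lam_mul_le, hb.lam_nonneg]) (hcard'.trans hcard)
      (fun j hj ↦ by
        rw [Set.inter_eq_left.2 (covers_iff_subset_nbhd.1 (hcov j hj))]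
        refine le_trans (le_of_eq ?_) (hw j hj)
        rw [hw']
        ring) (by
        rw [mul_div_mul_left _ _ (by norm_num)]
        exact (mul_le_mul_of_nonneg_right hY
          (pow_nonneg (div_nonneg hb.pos_ρ.le hb'.pos.le) s)).trans_lt hb'.mul_pow_lt_one)
  exact ⟨i, hi, S, Finset.coe_subset.2 hS, J, hJ, hJcard, exists_selection_of_weaklyLinked
    (hQR.mono_left hJ) (Finset.disjoint_left.1 hQR hi) hP hρP
    (fun j hj ↦ ⟨(hJw j hj).1, by linarith [(hJw j hj).2]⟩) hR⟩

lemma SelectionBounds.exists_gradedSelection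
    (hb : SelectionBounds (Nat.card V) n s lam lam₁ ρ w) (hQR : Disjoint Q R) (hn : #(Q ∪ R) ≤ n)
    (hlink : ∀ i ∈ Q, ∀ j ∈ Q ∪ R, j ≠ i → ∀ v ∈ C j, μ.real (G.neighborSet v ∩ C i) ≤ lam)
    (hlinkX : ∀ j ∈ Q, ∀ x ∈ X, μ.real (G.neighborSet x ∩ C j) ≤ lam)
    (hcov : ∀ j ∈ Q, Covers G X (C j)) (hcard : 2 ^ ((s + 1) * m) ≤ #Q)
    (hw : ∀ j ∈ Q, 2 ^ ((s + 3) * m) * w ≤ μ.real (C j)) :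
    ∃ J ⊆ Q, ∃ D, GradedSelection G μ X R C lam₁ ρ m J D := by
  induction m generalizing Q R C with
  | zero => exact ⟨∅, by simp, C, by simp, by simp, by simp [BackwardGraded], by simp, by simp,
      by simp⟩
  | succ m ih =>
    obtain ⟨i, hi, S, hS, J, hJ, hJcard, D, hD⟩ := hb.exists_selection hQR hn hlink hlinkX hcov
      hcard hw
    have hiJ : i ∉ J := fun h ↦ (hD.lt i h).false
    have hJR : J ∪ insert i R ⊆ Q ∪ R := by
      rw [Finset.union_insert, Finset.insert_subset_iff]
      exact ⟨Finset.mem_union_left R hi, Finset.union_subset_union_left hJ⟩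
    have hDC : ∀ v j, μ.real (G.neighborSet v ∩ D j) ≤ μ.real (G.neighborSet v ∩ C j) :=
      fun v j ↦ measureReal_mono (Set.inter_subset_inter_right _ (hD.subset j))
    obtain ⟨J', hJ', D', hD'⟩ := ih (Q := J) (R := insert i R) (C := D)
      (Finset.disjoint_insert_right.2 ⟨hiJ, hQR.mono_left hJ⟩) ((Finset.card_le_card hJR).trans hn)
      (fun a ha b hb hba v hv ↦
        (hDC v a).trans (hlink a (hJ ha) b (hJR hb) hba v (hD.subset b hv)))
      (fun j hj x hx ↦ (hDC x j).trans (hlinkX j (hJ hj) x hx))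
      (fun j hj ↦ (hcov j (hJ hj)).mono subset_rfl (hD.subset j)) hJcard
      (fun j hj ↦ (le_mul_of_one_le_left (mul_pos (by positivity) hb.pos).le one_le_two).trans
        (hD.le_measureReal_of_mem j hj))
    exact ⟨insert i J', Finset.insert_subset hi (hJ'.trans hJ), D',
      hD'.insert hb.pos_ρ.le hb.pos_lam₁.le hD hS hJ'⟩

end BackwardGrading

section BiLevels

variable {G : SimpleGraph V} {I : Finset ℤ} {A : ℤ → Set V} {v : V} {L M : ℕ → Set V} {h b : ℕ}
  {Q Q' : Finset ℤ} {C C' : ℤ → Set V} {ql qm : ℕ → ℤ} {qc : ℤ → ℤ}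

/-- The levels `L 0, …, L h` and `M 1, …, M b` and the blocks `(C j : j ∈ Q)` lie in distinct
blocks of `(A i : i ∈ I)`. -/
structure IsBiRainbow (I : Finset ℤ) (A : ℤ → Set V) (L : ℕ → Set V) (h : ℕ) (M : ℕ → Set V)
    (b : ℕ) (Q : Finset ℤ) (C : ℤ → Set V) (ql qm : ℕ → ℤ) (qc : ℤ → ℤ) : Prop where
  left : IsRainbow I A (Set.Iic h) L ql
  right : IsRainbow I A (Set.Icc 1 b) M qm
  blocks : IsRainbow I A Q C qc
  left_ne_right : ∀ i ∈ Set.Iic h, ∀ j ∈ Set.Icc 1 b, ql i ≠ qm j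
  left_ne_blocks : ∀ i ∈ Set.Iic h, ∀ j ∈ Q, ql i ≠ qc j
  right_ne_blocks : ∀ i ∈ Set.Icc 1 b, ∀ j ∈ Q, qm i ≠ qc j

lemma IsBiRainbow.mono {L' M' : ℕ → Set V} (hR : IsBiRainbow I A L h M b Q C ql qm qc)
    (hL : ∀ i ≤ h, L' i ⊆ L i) (hM : ∀ i ≤ b, M' i ⊆ M i) (hQ : Q' ⊆ Q)
    (hC : ∀ j ∈ Q', C' j ⊆ C j) : IsBiRainbow I A L' h M' b Q' C' ql qm qc where
  left := hR.left.mono subset_rfl (fun _ _ ↦ subset_rfl) subset_rfl hL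
  right := hR.right.mono subset_rfl (fun _ _ ↦ subset_rfl) subset_rfl fun i hi ↦ hM i hi.2
  blocks := hR.blocks.mono subset_rfl (fun _ _ ↦ subset_rfl) (Finset.coe_subset.2 hQ) hC
  left_ne_right := hR.left_ne_right
  left_ne_blocks i hi j hj := hR.left_ne_blocks i hi j (hQ hj)
  right_ne_blocks i hi j hj := hR.right_ne_blocks i hi j (hQ hj)

lemma IsBiRainbow.succ (hR : IsBiRainbow I A L h M b Q C ql qm qc) {i : ℤ} (hi : i ∈ Q)
    (hQ : Q' ⊆ Q) (hiQ : i ∉ Q') {P : Set V} (hP : P ⊆ C i) :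
    IsBiRainbow I A L h (Function.update M (b + 1) P) (b + 1) Q' C ql
      (Function.update qm (b + 1) (qc i)) qc := by
  have hIcc : Set.Icc 1 (b + 1) = insert (b + 1) (Set.Icc 1 b) := by
    ext j
    simp only [Set.mem_Icc, Set.mem_insert_iff]
    omega
  have hqm : ∀ j ∈ Set.Icc 1 b, Function.update qm (b + 1) (qc i) j = qm j := fun j hj ↦
    Function.update_of_ne (by have := hj.2; omega) _ _
  have hR' := hR.mono (fun _ _ ↦ subset_rfl) (fun _ _ ↦ subset_rfl) hQ fun _ _ ↦ subset_rfl
  refine ⟨hR.left, ?_, hR'.blocks, ?_, hR'.left_ne_blocks, ?_⟩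
  · rw [hIcc]
    refine hR.right.update (by simp) (hR.blocks.mapsTo hi) ?_ (hP.trans (hR.blocks.subset i hi))
    rintro ⟨j, hj, hji⟩
    exact hR.right_ne_blocks j hj i hi hji
  · rw [hIcc]
    rintro a ha j (rfl | hj)
    · simpa using hR.left_ne_blocks a ha i hi
    · exact hqm j hj ▸ hR.left_ne_right a ha j hj
  · rw [hIcc]
    rintro a (rfl | ha) j hj
    · rw [Function.update_self]
      exact fun hij ↦ hiQ (hR.blocks.injOn hi (hQ hj) hij ▸ hj)
    · exact hqm a ha ▸ hR'.right_ne_blocks a ha j hj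

/-- A rainbow bi-levelling, with levels `L 0, …, L h` and `M 0, …, M b` and blocks `C j`, where
`j ∈ Q`; the requirements of disjointness, which follow from the rainbow condition, are omitted. -/
structure BiLevels (G : SimpleGraph V) (I : Finset ℤ) (A : ℤ → Set V) (v : V) (L : ℕ → Set V)
    (h : ℕ) (M : ℕ → Set V) (b : ℕ) (Q : Finset ℤ) (C : ℤ → Set V) : Prop where
  left_pos : 1 ≤ h
  right_pos : 1 ≤ b
  left : RootedLevels G v L h
  right : RootedLevels G v M b
  parallel : ∀ i ∈ Set.Icc 1 h, ∀ j ∈ Set.Icc 1 b, Anticomplete G (L i) (M j)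
  left_leadsTo : ∀ j ∈ Q, LeadsTo G L h (C j)
  right_leadsTo : ∀ j ∈ Q, LeadsTo G M b (C j)
  graded : ForwardGraded G (L h) Q C
  rainbow : ∃ ql qm qc, IsBiRainbow I A L h M b Q C ql qm qc

lemma BiLevels.mono (hB : BiLevels G I A v L h M b Q C) (hQ : Q' ⊆ Q)
    (hC : ∀ j ∈ Q', C' j ⊆ C j) : BiLevels G I A v L h M b Q' C' where
  left_pos := hB.left_pos
  right_pos := hB.right_pos
  left := hB.left
  right := hB.right
  parallel := hB.parallel
  left_leadsTo j hj := (hB.left_leadsTo j (hQ hj)).mono (hC j hj)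
  right_leadsTo j hj := (hB.right_leadsTo j (hQ hj)).mono (hC j hj)
  graded := hB.graded.mono hQ hC
  rainbow := by
    obtain ⟨ql, qm, qc, hR⟩ := hB.rainbow
    exact ⟨ql, qm, qc, hR.mono (fun _ _ ↦ subset_rfl) (fun _ _ ↦ subset_rfl) hQ hC⟩

-- Shrinking the last level of `L`, we can ensure that it misses the block `C i`, since `i < j` for
-- the remaining blocks `C j`.
lemma BiLevels.shrink_left (hB : BiLevels G I A v L h M b Q C) {i : ℤ} (hi : i ∈ Q) (hQ : Q' ⊆ Q)
    (hij : ∀ j ∈ Q', i < j) : ∃ L', BiLevels G I A v L' h M b Q' C ∧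
      (∀ j ≤ h, L' j ⊆ L j) ∧ ∀ j ≤ h, Anticomplete G (L' j) (C i) := by
  obtain ⟨X, hX, hXi, hgr⟩ := hB.graded.exists_anticomplete hQ hi hij
  have hsub : ∀ j, Function.update L h X j ⊆ L j := fun j ↦
    (update_le_self_iff.2 hX : Function.update L h X ≤ L) j
  have hQC := hB.mono hQ (C' := C) fun _ _ ↦ subset_rfl
  obtain ⟨ql, qm, qc, hR⟩ := hQC.rainbow
  refine ⟨Function.update L h X, ?_, fun j _ ↦ hsub j, fun j hj ↦ ?_⟩
  · exact
    { hQC with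
      left := hB.left.shrink_last hB.left_pos hX
      parallel := fun a ha j hj ↦ (hB.parallel a ha j hj).mono (hsub a) subset_rfl
      left_leadsTo := fun j hj ↦ ⟨by simpa using hgr.covers hj, fun a ha ↦
        ((hQC.left_leadsTo j hj).anticomplete a ha).mono (hsub a) subset_rfl⟩
      graded := by simpa using hgr
      rainbow := ⟨ql, qm, qc, hR.mono (fun a _ ↦ hsub a) (fun _ _ ↦ subset_rfl) subset_rfl
        fun _ _ ↦ subset_rfl⟩ }
  · obtain rfl | hjh := hj.eq_or_lt
    · simpa using hXi
    · exact ((hB.left_leadsTo i hi).anticomplete j hjh).mono (hsub j) subset_rfl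

lemma BiLevels.succ (hB : BiLevels G I A v L h M b Q C) {i : ℤ} (hi : i ∈ Q) (hQ : Q' ⊆ Q)
    (hij : ∀ j ∈ Q', i < j) {S P : Set V} (hS : S ⊆ M b) (hP : P ⊆ C i) (hSP : Covers G S P)
    (hC : ∀ j ∈ Q', C' j ⊆ C j) (hSC : ∀ j ∈ Q', Anticomplete G S (C' j))
    (hPC : ∀ j ∈ Q', Covers G P (C' j)) :
    ∃ L' M', BiLevels G I A v L' h M' (b + 1) Q' C' := by
  obtain ⟨L', hB', hL', hL'i⟩ := hB.shrink_left hi hQ hij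
  have hBC := hB'.mono subset_rfl hC
  obtain ⟨ql, qm, qc, hR⟩ := hB.rainbow
  set N := Function.update M b S with hN
  have hNM : ∀ j, N j ⊆ M j := fun j ↦ (update_le_self_iff.2 hS : Function.update M b S ≤ M) j
  have hNP : LeadsTo G N b P := ⟨by rwa [hN, Function.update_self], fun j hj ↦
    ((hB.right_leadsTo i hi).anticomplete j hj).mono (hNM j) hP⟩
  have hlow : ∀ j ≤ b, Function.update N (b + 1) P j = N j := fun j hj ↦
    Function.update_of_ne (by omega) _ _
  refine ⟨L', Function.update N (b + 1) P,
    { hBC with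
      right_pos := by omega
      right := (hB.right.shrink_last hB.right_pos hS).update hNP
      parallel := fun a ha j hj ↦ ?_
      right_leadsTo := fun j hj ↦ ⟨by simpa using hPC j hj, fun a ha ↦ ?_⟩
      rainbow := ⟨ql, _, qc, ((hR.succ hi hQ (fun h ↦ (hij i h).false) hP).mono hL'
        (fun a _ ↦ ?_) subset_rfl hC)⟩ }⟩
  · obtain rfl | hjb := eq_or_ne j (b + 1)
    · simpa using (hL'i a ha.2).mono subset_rfl hP
    · have := hj.2
      rw [hlow j (by omega)]
      exact (hB'.parallel a ha j ⟨hj.1, by omega⟩).mono subset_rfl (hNM j)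
  · rw [hlow a (by omega)]
    obtain rfl | hab := eq_or_ne a b
    · simpa [hN] using hSC j hj
    · exact ((hBC.right_leadsTo j hj).anticomplete a (by omega)).mono (hNM a) subset_rfl
  · exact update_le_update_iff.2 ⟨le_rfl, fun j _ ↦ hNM j⟩ a

variable [MeasurableSpace V] {μ : Measure V} [IsFiniteMeasure μ] [DiscreteMeasurableSpace V]
  [Finite V] {n m s : ℕ} {lam γ δ ω lam₁ ρ w : ℝ}

lemma BiLevels.exists_succ (hA : WeightedBlockade G μ I A lam γ δ ω)
    (hb : SelectionBounds (Nat.card V) n s lam lam₁ ρ w) (hδ : δ ≤ ρ) (hγ : γ ≤ w)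
    (hB : BiLevels G I A v L h M b Q C) (hn : #Q ≤ n) (hcard : 2 ^ ((s + 1) * (m + 1)) ≤ #Q)
    (hw : ∀ j ∈ Q, 2 ^ ((s + 3) * (m + 1)) * w ≤ μ.real (C j)) :
    ∃ L' M' C', ∃ Q' ⊆ Q, BiLevels G I A v L' h M' (b + 1) Q' C' ∧ 2 ^ ((s + 1) * m) ≤ #Q' ∧
      ∀ j ∈ Q', 2 ^ ((s + 3) * m) * w ≤ μ.real (C' j) := by
  obtain ⟨ql, qm, qc, hR⟩ := hB.rainbow
  have hlink : ∀ i ∈ Q, ∀ j ∈ Q, j ≠ i → ∀ v ∈ C j, μ.real (G.neighborSet v ∩ C i) ≤ lam :=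
    fun i hi j hj hji v hv ↦ hA.measureReal_neighborSet_inter_le (hR.blocks.mapsTo hj)
      (hR.blocks.mapsTo hi) (hR.blocks.injOn.ne hj hi hji) (hR.blocks.subset j hj hv)
      (hR.blocks.subset i hi)
  have hlast : b ∈ Set.Icc 1 b := ⟨hB.right_pos, le_rfl⟩
  obtain ⟨i, hi, S, hS, Q', hQ', hQ'card, D, hD⟩ := hb.exists_selection (R := ∅) (X := M b)
    (Finset.disjoint_empty_right Q) (by simpa using hn) (by simpa using hlink)
    (fun j hj x hx ↦ hA.measureReal_neighborSet_inter_le (hR.right.mapsTo hlast)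
      (hR.blocks.mapsTo hj) (hR.right_ne_blocks b hlast j hj) (hR.right.subset b hlast hx)
      (hR.blocks.subset j hj)) (fun j hj ↦ (hB.right_leadsTo j hj).covers) hcard hw
  obtain ⟨L', M', hB'⟩ := hB.succ (C' := fun j ↦ D j ∩ nbhd G (D i)) hi hQ' hD.lt hS (hD.subset i)
    hD.covers (fun j _ ↦ Set.inter_subset_left.trans (hD.subset j))
    (fun j hj ↦ (hD.anticomplete j hj).mono subset_rfl Set.inter_subset_left)
    fun j _ ↦ Set.inter_subset_right
  refine ⟨L', M', _, Q', hQ', hB', hQ'card, fun j hj ↦ ?_⟩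
  have hmiss := hA.measureReal_diff_nbhd_lt (hR.blocks.mapsTo hi) (hR.blocks.mapsTo (hQ' hj))
    (hR.blocks.injOn.ne hi (hQ' hj) (hD.lt j hj).ne) ((hD.subset i).trans (hR.blocks.subset i hi))
    ((hD.subset j).trans (hR.blocks.subset j (hQ' hj))) (hδ.trans hD.le_measureReal)
  have hwle : w ≤ 2 ^ ((s + 3) * m) * w := le_mul_of_one_le_left hb.pos.le
    (one_le_pow₀ one_le_two)
  linarith [hD.le_measureReal_of_mem j hj,
    measureReal_inter_add_sdiff (μ := μ) (s := D j) (.of_discrete (s := nbhd G (D i)))]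

lemma BiLevels.exists_add (hA : WeightedBlockade G μ I A lam γ δ ω)
    (hb : SelectionBounds (Nat.card V) n s lam lam₁ ρ w) (hδ : δ ≤ ρ) (hγ : γ ≤ w) {e : ℕ}
    (hB : BiLevels G I A v L h M b Q C) (hn : #Q ≤ n) (hcard : 2 ^ ((s + 1) * (m + e)) ≤ #Q)
    (hw : ∀ j ∈ Q, 2 ^ ((s + 3) * (m + e)) * w ≤ μ.real (C j)) :
    ∃ L' M' C', ∃ Q' ⊆ Q, BiLevels G I A v L' h M' (b + e) Q' C' ∧ 2 ^ ((s + 1) * m) ≤ #Q' ∧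
      ∀ j ∈ Q', 2 ^ ((s + 3) * m) * w ≤ μ.real (C' j) := by
  induction e generalizing L M b C Q with
  | zero => exact ⟨L, M, C, Q, subset_rfl, hB, hcard, hw⟩
  | succ e ih =>
    obtain ⟨L', M', C', Q', hQ', hB', hcard', hw'⟩ := hB.exists_succ hA hb hδ hγ hn hcard hw
    obtain ⟨L'', M'', C'', Q'', hQ'', hB''⟩ :=
      ih hB' ((Finset.card_le_card hQ').trans hn) hcard' hw'
    exact ⟨L'', M'', C'', Q'', hQ''.trans hQ', by rwa [add_right_comm] at hB''⟩

lemma BiLevels.exists_backwardGraded {k e : ℕ} (hA : WeightedBlockade G μ I A lam γ δ ω)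
    (hb : SelectionBounds (Nat.card V) n s lam lam₁ ρ w) (hδ : δ ≤ ρ) (hγ : γ ≤ w)
    (hB : BiLevels G I A v L h M b Q C) (hn : #Q ≤ n) (hcard : 2 ^ ((s + 1) * (k + e)) ≤ #Q)
    (hw : ∀ j ∈ Q, 2 ^ ((s + 3) * (k + e)) * w ≤ μ.real (C j)) :
    ∃ L' M' J C' D, BiLevels G I A v L' h M' (b + e) J D ∧
      GradedSelection G μ (M' (b + e)) ∅ C' lam₁ ρ k J D := by
  obtain ⟨L', M', C', Q', hQ', hB', hcard', hw'⟩ := hB.exists_add hA hb hδ hγ hn hcard hw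
  obtain ⟨ql, qm, qc, hR⟩ := hB'.rainbow
  have hlast : b + e ∈ Set.Icc 1 (b + e) := ⟨hB'.right_pos, le_rfl⟩
  obtain ⟨J, hJ, D, hD⟩ := hb.exists_gradedSelection (R := ∅) (Finset.disjoint_empty_right Q')
    (by simpa using (Finset.card_le_card hQ').trans hn)
    (fun i hi j hj hji x hx ↦ by
      rw [Finset.union_empty] at hj
      exact hA.measureReal_neighborSet_inter_le (hR.blocks.mapsTo hj) (hR.blocks.mapsTo hi)
        (hR.blocks.injOn.ne hj hi hji) (hR.blocks.subset j hj hx) (hR.blocks.subset i hi))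
    (fun j hj x hx ↦ hA.measureReal_neighborSet_inter_le (hR.right.mapsTo hlast)
      (hR.blocks.mapsTo hj) (hR.right_ne_blocks _ hlast j hj) (hR.right.subset _ hlast hx)
      (hR.blocks.subset j hj)) (fun j hj ↦ (hB'.right_leadsTo j hj).covers) hcard' hw'
  exact ⟨L', M', J, C', D, hB'.mono hJ fun j _ ↦ hD.subset j, hD⟩

end BiLevels

section Construction

lemma exists_partition {I : Finset ℤ} {m n : ℕ} (hI : n + 2 * m + 1 ≤ #I) :
    ∃ i₀, ∃ P₀ P₁ Q : Finset ℤ, i₀ ∈ I ∧ P₀ ⊆ I ∧ P₁ ⊆ I ∧ Q ⊆ I ∧ #P₀ = m ∧ #P₁ = m ∧ n ≤ #Q ∧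
      i₀ ∉ P₀ ∧ i₀ ∉ P₁ ∧ i₀ ∉ Q ∧ Disjoint P₀ P₁ ∧ Disjoint P₀ Q ∧ Disjoint P₁ Q := by
  obtain ⟨i₀, hi₀⟩ : I.Nonempty := Finset.card_pos.1 (by omega)
  have hcard := Finset.card_erase_of_mem hi₀
  obtain ⟨P₀, hP₀, hm₀⟩ := Finset.exists_subset_card_eq (s := I.erase i₀) (n := m) (by omega)
  have hcard₀ := Finset.card_sdiff_of_subset hP₀
  obtain ⟨P₁, hP₁, hm₁⟩ := Finset.exists_subset_card_eq (s := I.erase i₀ \ P₀) (n := m) (by omega)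
  have hcard₁ := Finset.card_sdiff_of_subset hP₁
  have hI₀ := Finset.erase_subset i₀ I
  have hdisj : Disjoint (I.erase i₀ \ P₀) P₀ := Finset.sdiff_disjoint
  have hi₀' : i₀ ∉ I.erase i₀ := Finset.notMem_erase i₀ I
  have hdiff₀ : I.erase i₀ \ P₀ ⊆ I.erase i₀ := Finset.sdiff_subset
  have hdiff₁ : (I.erase i₀ \ P₀) \ P₁ ⊆ I.erase i₀ \ P₀ := Finset.sdiff_subset
  exact ⟨i₀, P₀, P₁, (I.erase i₀ \ P₀) \ P₁, hi₀, hP₀.trans hI₀, hP₁.trans (hdiff₀.trans hI₀),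
    hdiff₁.trans (hdiff₀.trans hI₀), hm₀, hm₁, by omega, fun h ↦ hi₀' (hP₀ h),
    fun h ↦ hi₀' (hdiff₀ (hP₁ h)), fun h ↦ hi₀' (hdiff₀ (hdiff₁ h)), (hdisj.mono_left hP₁).symm,
    (hdisj.mono_left hdiff₁).symm, Finset.sdiff_disjoint.symm⟩

variable {G : SimpleGraph V} [MeasurableSpace V] {μ : Measure V} {I : Finset ℤ} {A : ℤ → Set V}
  {T n : ℕ} {κ lam γ δ ω : ℝ}

/-- The assumptions under which one can grow at most `T` levels in a family of blocks of weight at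
least `κ`, until the last of them leads to many blocks. -/
structure GrowthBounds (T : ℕ) (κ lam γ δ ω : ℝ) : Prop where
  one_le : 1 ≤ T
  pos : 0 < δ
  mul_δ_le : 32 * (T + 1) * δ ≤ κ
  mul_γ_le : 4 * γ ≤ κ
  mul_lam_le : 2 * (T + 1) * lam ≤ κ
  le_pow_mul : δ ≤ (κ / 8 / δ / 2) ^ (T - 1) * ω

lemma GrowthBounds.pos_κ (hb : GrowthBounds T κ lam γ δ ω) : 0 < κ :=
  (by have := hb.pos; positivity : 0 < 32 * (T + 1) * δ).trans_le hb.mul_δ_le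

lemma GrowthBounds.thirtyTwo_mul_le (hb : GrowthBounds T κ lam γ δ ω) : 32 * δ ≤ κ := by
  nlinarith [hb.mul_δ_le, hb.pos, (Nat.cast_nonneg T : (0 : ℝ) ≤ T)]

variable [IsFiniteMeasure μ]

lemma WeightedBlockade.measureReal_neighborSet_inter_le_of_isRainbow
    (hA : WeightedBlockade G μ I A lam γ δ ω) {J : Set ℤ} (hJ : J ⊆ I) {S : Set ℕ} {L : ℕ → Set V}
    {q : ℕ → ℤ} (hL : IsRainbow J A S L q) {Q : Finset ℤ} (hQ : Q ⊆ I) (hJQ : Disjoint J Q) {i : ℕ}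
    (hi : i ∈ S) {x : V} (hx : x ∈ L i) {j : ℤ} (hj : j ∈ Q) {C : Set V} (hC : C ⊆ A j) :
    μ.real (G.neighborSet x ∩ C) ≤ lam :=
  hA.measureReal_neighborSet_inter_le (hJ (hL.mapsTo hi)) (hQ hj)
    (fun h ↦ Set.disjoint_left.1 hJQ (hL.mapsTo hi) (h ▸ hj)) (hL.subset i hi hx) hC

lemma GrowthBounds.exists_common_neighbor (hb : GrowthBounds T κ lam γ δ ω)
    (hA : WeightedBlockade G μ I A lam γ δ ω) (hκ : κ ≤ 1) {i₀ p₀ p₁ : ℤ} (hi₀ : i₀ ∈ I)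
    (hp₀ : p₀ ∈ I) (hp₁ : p₁ ∈ I) (hne₀ : p₀ ≠ i₀) (hne₁ : p₁ ≠ i₀) {B₀ B₁ : Set V}
    (hB₀ : B₀ ⊆ A p₀) (hB₁ : B₁ ⊆ A p₁) (hδ₀ : δ ≤ μ.real B₀) (hδ₁ : δ ≤ μ.real B₁) :
    ∃ z ∈ A i₀, (B₀ ∩ G.neighborSet z).Nonempty ∧ (B₁ ∩ G.neighborSet z).Nonempty := by
  have hmiss₀ := hA.measureReal_diff_nbhd_lt hp₀ hi₀ hne₀ hB₀ subset_rfl hδ₀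
  have hmiss₁ := hA.measureReal_diff_nbhd_lt hp₁ hi₀ hne₁ hB₁ subset_rfl hδ₁
  by_contra! hno
  have hsub : A i₀ ⊆ A i₀ \ nbhd G B₀ ∪ A i₀ \ nbhd G B₁ := by
    intro z hz
    by_contra hz'
    simp only [Set.mem_union, Set.mem_sdiff, hz, true_and, not_or, not_not] at hz'
    obtain ⟨⟨u, hu, huz⟩, u', hu', huz'⟩ := hz'
    exact (hno z hz ⟨u, hu, huz.symm⟩).subset ⟨hu', huz'.symm⟩
  have hone := (measureReal_mono hsub).trans (measureReal_union_le (μ := μ) _ _)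
  rw [hA.measureReal_block i₀ hi₀] at hone
  linarith [hb.mul_γ_le]

variable [DiscreteMeasurableSpace V]

lemma GrowthBounds.exists_levels (hb : GrowthBounds T κ lam γ δ ω)
    (hA : WeightedBlockade G μ I A lam γ δ ω) {P Q : Finset ℤ} (hP : P ⊆ I) (hQ : Q ⊆ I)
    (hPQ : Disjoint P Q) (hTP : T ≤ #P) {B C : ℤ → Set V} (hB : ∀ j ∈ P, B j ⊆ A j)
    (hC : ∀ j ∈ Q, C j ⊆ A j) (hexp : SmallSetsExpand G μ P B δ (κ / 8 / δ)) {i₀ : ℤ}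
    (hi₀ : i₀ ∈ I) (hi₀Q : i₀ ∉ Q) {v : V} (hv : v ∈ A i₀)
    (hvB : ∃ j ∈ P, (B j ∩ G.neighborSet v).Nonempty) {w : ℝ} (hκw : κ ≤ w)
    (hw : ∀ j ∈ Q, w ≤ μ.real (C j)) (hcard : 2 ^ T * n ≤ #Q) :
    ∃ b M q, ∃ Q' ⊆ Q, ∃ C' : ℤ → Set V, 1 ≤ b ∧ b ≤ T ∧ RootedLevels G v M b ∧
      IsRainbow P B (Set.Icc 1 b) M q ∧ n ≤ #Q' ∧
      ∀ j ∈ Q', C' j ⊆ C j ∧ LeadsTo G M b (C' j) ∧ w / (2 * (T + 1)) ≤ μ.real (C' j) := by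
  have hκ := hb.pos_κ
  have hτ : 4 ≤ κ / 8 / δ := by
    rw [div_div, le_div_iff₀ (by linarith [hb.pos])]
    linarith [hb.thirtyTwo_mul_le]
  have hTε : (T + 1) * (w / (2 * (T + 1))) = w / 2 := by
    field_simp
  obtain ⟨M, q, hM⟩ := exists_growthState_one (ε := w / (2 * (T + 1))) hA hP hQ hB hC
    (by linarith) hb.one_le hi₀ hi₀Q hv hvB
    (by rw [le_div_iff₀' (by positivity)]; linarith [hb.mul_lam_le]) hcard hb.le_pow_mul
  exact hM.exists_leadsTo hA hP hQ hPQ hB hC hexp hτ hTP hw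
    (div_nonneg (hκ.le.trans hκw) (by positivity)) (by linarith [hb.mul_γ_le]) subset_rfl

/-- Two families of levels `Z 0, …, Z t` and `X 0, …, X a` with a common root `z`, which lead to
the same blocks `(C j : j ∈ Q)`. Apart from the root, the levels lie in blocks of `A` with indices
in disjoint sets `J` and `P`. -/
structure TwinLevels (G : SimpleGraph V) (μ : Measure V) (I : Finset ℤ) (A : ℤ → Set V) (z : V)
    (J : Finset ℤ) (Z : ℕ → Set V) (t : ℕ) (P : Finset ℤ) (X : ℕ → Set V) (a : ℕ) (Q : Finset ℤ)
    (C : ℤ → Set V) (w : ℝ) : Prop where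
  left_pos : 1 ≤ t
  right_pos : 1 ≤ a
  left : RootedLevels G z Z t
  right : RootedLevels G z X a
  left_subset : J ⊆ I
  right_subset : P ⊆ I
  blocks_subset : Q ⊆ I
  disjoint_left_right : Disjoint J P
  disjoint_left_blocks : Disjoint J Q
  disjoint_right_blocks : Disjoint P Q
  left_rainbow : ∃ q, IsRainbow J A (Set.Iic t) Z q
  right_rainbow : ∃ q, IsRainbow P A (Set.Icc 1 a) X q
  subset : ∀ j ∈ Q, C j ⊆ A j
  left_leadsTo : ∀ j ∈ Q, LeadsTo G Z t (C j)
  right_leadsTo : ∀ j ∈ Q, LeadsTo G X a (C j)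
  le_measureReal : ∀ j ∈ Q, w ≤ μ.real (C j)

lemma TwinLevels.exists_reroot {z : V} {J P Q E : Finset ℤ} {Z X : ℕ → Set V} {t a : ℕ}
    {C : ℤ → Set V} {w w' : ℝ} (hT : TwinLevels G μ I A z J Z t P X a Q C w)
    (hA : WeightedBlockade G μ I A lam γ δ ω) (ht : t ≤ T) (ha : a ≤ T) {S R : Set V}
    (hS : S ⊆ Z t) (hSR : Anticomplete G S R) (hR : R ⊆ ⋃ j ∈ Q, C j) (hE : E ⊆ Q)
    (hw₀ : 0 ≤ w') (hw : ∀ j ∈ E, w' ≤ μ.real (C j ∩ nbhd G S)) (hcard : (2 * T) ^ T * n ≤ #E)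
    (hlam : lam ≤ w' / (4 * T) ^ T) {v : V} (hv : v ∈ X a) :
    ∃ h L q, ∃ E' ⊆ E, ∃ C' : ℤ → Set V, 1 ≤ h ∧ h ≤ 2 * T ∧ RootedLevels G v L h ∧
      IsRainbow (J ∪ P) A (Set.Iic h) L q ∧ (∀ i, 1 ≤ i → i ≤ h → Anticomplete G (L i) R) ∧
      n ≤ #E' ∧ ∀ j ∈ E', C' j ⊆ C j ∧ LeadsTo G L h (C' j) ∧
        w' / (4 * T) ^ T ≤ μ.real (C' j) := by
  obtain ⟨qz, hqz⟩ := hT.left_rainbow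
  obtain ⟨qx, hqx⟩ := hT.right_rainbow
  have hT₁ : 1 ≤ 2 * T := by have := hT.left_pos; omega
  have hZS : ∀ i, Function.update Z t S i ⊆ Z i := fun i ↦
    (update_le_self_iff.2 hS : Function.update Z t S ≤ Z) i
  have hanti : ∀ {Y : Set V}, (∀ j ∈ Q, Anticomplete G Y (C j)) → Anticomplete G Y R :=
    fun hY y hy r hr ↦ by
      obtain ⟨j, hj, hrj⟩ := Set.mem_iUnion₂.1 (hR hr)
      exact hY j hj y hy r hrj
  have hpow : w' / (4 * T) ^ T ≤ w' / (2 * (2 * T : ℕ)) ^ a := by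
    have hT₁' : (1 : ℝ) ≤ (2 * T : ℕ) := Nat.one_le_cast.2 hT₁
    rw [show (4 * T : ℝ) = 2 * (2 * T : ℕ) by push_cast; ring]
    exact div_le_div_of_nonneg_left hw₀ (by positivity) (pow_le_pow_right₀ (by linarith) ha)
  obtain ⟨h, L, q, E', hE', C', hh₁, hh, hL, hLr, hLR, hcard', hC'⟩ :=
    (hT.left.shrink_last hT.left_pos hS).exists_rainbow_of_mem (N := 2 * T) (n := n) (R := R)
      (Q := E) (C := fun j ↦ C j ∩ nbhd G S)
      (hqz.mono subset_rfl (fun _ _ ↦ subset_rfl) subset_rfl fun i _ ↦ hZS i)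
      (fun j hj ↦ ⟨by rw [Function.update_self]; exact fun x hx ↦ hx.2, fun i hi ↦
        ((hT.left_leadsTo j (hE hj)).anticomplete i hi).mono (hZS i) Set.inter_subset_left⟩)
      hT.left_pos hT.right hqx (Finset.disjoint_coe.2 hT.disjoint_left_right)
      (fun i _ hi ↦ by
        obtain rfl | hi := hi.eq_or_lt
        · simpa using hSR
        · exact hanti fun j hj ↦ ((hT.left_leadsTo j hj).anticomplete i hi).mono (hZS i) subset_rfl)
      (fun i hi ↦ hanti fun j hj ↦ (hT.right_leadsTo j hj).anticomplete i hi) (by omega)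
      ((Nat.mul_le_mul_right n (Nat.pow_le_pow_right hT₁ ha)).trans hcard) hw₀ hw
      (hlam.trans hpow)
      (fun i hi hia x hx j hj D hD ↦ hA.measureReal_neighborSet_inter_le_of_isRainbow
        (Finset.coe_subset.2 hT.right_subset) hqx hT.blocks_subset
        (Finset.disjoint_coe.2 hT.disjoint_right_blocks) ⟨hi, hia⟩ hx (hE hj)
        (hD.trans (Set.inter_subset_left.trans (hT.subset j (hE hj))))) hv
  exact ⟨h, L, q, E', hE', C', hh₁, by omega, hL, hLr.mono
    (Set.union_subset_union_right _ hqx.mapsTo.image_subset) (fun _ _ ↦ subset_rfl) subset_rfl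
    fun _ _ ↦ subset_rfl, hLR, hcard', fun j hj ↦ ⟨(hC' j hj).1.trans Set.inter_subset_left,
      (hC' j hj).2.1, hpow.trans (hC' j hj).2.2⟩⟩

variable [Finite V]

lemma GrowthBounds.exists_biLevels (hb : GrowthBounds T κ lam γ δ ω)
    (hA : WeightedBlockade G μ I A lam γ δ ω) {P Q : Finset ℤ} (hP : P ⊆ I) (hQ : Q ⊆ I)
    (hPQ : Disjoint P Q) (hTP : T ≤ #P) {B C : ℤ → Set V} (hB : ∀ j ∈ P, B j ⊆ A j)
    (hexp : SmallSetsExpand G μ P B δ (κ / 8 / δ)) {J : Set ℤ} (hJ : J ⊆ I)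
    (hJP : Disjoint J P) (hJQ : Disjoint J Q) {v : V} {L : ℕ → Set V} {h : ℕ} {ql : ℕ → ℤ}
    (hh : 1 ≤ h) (hL : RootedLevels G v L h) (hLr : IsRainbow J A (Set.Iic h) L ql)
    (hLB : ∀ i, 1 ≤ i → i ≤ h → Anticomplete G (L i) (⋃ j ∈ P, B j))
    (hvB : ∃ j ∈ P, (B j ∩ G.neighborSet v).Nonempty) {w : ℝ} (hκw : κ ≤ w)
    (hC : ∀ j ∈ Q, C j ⊆ A j ∧ LeadsTo G L h (C j) ∧ w ≤ μ.real (C j))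
    (hcard : 2 ^ T * n ≤ #Q) (hlam : lam ≤ w / (2 * (T + 1)) / 4 ^ n) :
    ∃ b M D, b ≤ T ∧ BiLevels G I A v L h M b (Finset.Ico 0 n) D ∧
      ∀ i ∈ Finset.Ico 0 (n : ℤ), w / (2 * (T + 1)) / 4 ^ n ≤ μ.real (D i) := by
  have hroot : ql 0 ∈ J := hLr.mapsTo h.zero_le
  obtain ⟨b, M, qm, Q', hQ', C', hb₁, hbT, hM, hMr, hcard', hC'⟩ := hb.exists_levels hA hP hQ hPQ
    hTP hB (fun j hj ↦ (hC j hj).1) hexp (hJ hroot) (Set.disjoint_left.1 hJQ hroot)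
    (hLr.subset 0 h.zero_le (by simp [hL.root])) hvB hκw (fun j hj ↦ (hC j hj).2.2) hcard
  have hlead : ∀ j ∈ Q', LeadsTo G L h (C' j) := fun j hj ↦
    (hC j (hQ' hj)).2.1.mono (hC' j hj).1
  have hCA : ∀ j ∈ Q', C' j ⊆ A j := fun j hj ↦ (hC' j hj).1.trans (hC j (hQ' hj)).1
  obtain ⟨D, qc, hDr, hDg, hD⟩ := exists_forwardGraded (X := L h) hcard'
    (fun j hj ↦ (hlead j hj).covers)
    (div_nonneg (hb.pos_κ.le.trans hκw) (by positivity)) (fun j hj ↦ (hC' j hj).2.2)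
    (fun j hj x hx ↦ hA.measureReal_neighborSet_inter_le_of_isRainbow hJ hLr hQ hJQ
      (Set.mem_Iic.2 le_rfl) hx (hQ' hj) (hCA j hj)) hlam
  have hDQ : ∀ i ∈ Finset.Ico 0 (n : ℤ), qc i ∈ Q' := fun i hi ↦ hDr.mapsTo hi
  refine ⟨b, M, D, hbT, ⟨hh, hb₁, hL, hM, fun i hi j hj ↦ (hLB i hi.1 hi.2).mono subset_rfl ?_,
    fun i hi ↦ (hlead _ (hDQ i hi)).mono (hDr.subset i hi),
    fun i hi ↦ (hC' _ (hDQ i hi)).2.1.mono (hDr.subset i hi), hDg, ql, qm, qc,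
    hLr.mono hJ (fun _ _ ↦ subset_rfl) subset_rfl fun _ _ ↦ subset_rfl,
    hMr.mono (Finset.coe_subset.2 hP) hB subset_rfl fun _ _ ↦ subset_rfl,
    hDr.mono (Finset.coe_subset.2 (hQ'.trans hQ)) hCA subset_rfl fun _ _ ↦ subset_rfl,
    fun i hi j hj hij ↦ ?_, fun i hi j hj hij ↦ ?_, fun i hi j hj hij ↦ ?_⟩, hD⟩
  · exact (hMr.subset j hj).trans (Set.subset_biUnion_of_mem (u := B) (hMr.mapsTo hj))
  · exact Set.disjoint_left.1 hJP (hLr.mapsTo hi) (hij ▸ hMr.mapsTo hj)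
  · exact Set.disjoint_left.1 hJQ (hLr.mapsTo hi) (hij ▸ hQ' (hDQ j hj))
  · exact Finset.disjoint_left.1 hPQ (hMr.mapsTo hi) (hij ▸ hQ' (hDQ j hj))

lemma GrowthBounds.exists_core (hb : GrowthBounds T κ lam γ δ ω)
    (hA : WeightedBlockade G μ I A lam γ δ ω) {P : Finset ℤ} (hP : P ⊆ I) (hTP : #P = T + 1)
    {D : ℤ → Set V} (hDA : ∀ j ∈ P, D j ⊆ A j) (hD : ∀ j ∈ P, κ ≤ μ.real (D j)) :
    ∃ B : ℤ → Set V, (∀ j ∈ P, B j ⊆ D j ∧ δ ≤ μ.real (B j)) ∧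
      SmallSetsExpand G μ P B δ (κ / 8 / δ) := by
  have hPδ : #P * δ ≤ κ / 2 := by
    rw [hTP]
    push_cast
    linarith [hb.mul_δ_le, hb.pos_κ]
  obtain ⟨B, hB, hexp⟩ := exists_smallSetsExpand hA hP hDA hb.pos hb.pos_κ hD hPδ
    (by linarith [hb.mul_γ_le])
  exact ⟨B, fun j hj ↦ ⟨(hB j hj).1, by linarith [(hB j hj).2, hb.thirtyTwo_mul_le, hb.pos]⟩, hexp⟩

lemma GrowthBounds.exists_twinLevels (hb : GrowthBounds T κ lam γ δ ω)
    (hA : WeightedBlockade G μ I A lam γ δ ω) (hκ : 2 * (T + 1) * κ ≤ 1)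
    (hI : 2 ^ T * (2 ^ T * n) + 2 * (T + 1) + 1 ≤ #I) :
    ∃ z J Z t P X a Q C, TwinLevels G μ I A z J Z t P X a Q C (1 / (2 * (T + 1)) ^ 2) ∧
      t ≤ T ∧ a ≤ T ∧ n ≤ #Q := by
  have hκ₁ : κ ≤ 1 := by nlinarith [hb.pos_κ, (Nat.cast_nonneg T : (0 : ℝ) ≤ T)]
  obtain ⟨i₀, P₀, P₁, Q₀, hi₀, hP₀, hP₁, hQ₀, hcard₀, hcard₁, hcard, h₀P₀, h₀P₁, h₀Q₀, h₀₁, hP₀Q₀,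
    hP₁Q₀⟩ := exists_partition hI
  have hAone : ∀ i ∈ I, μ.real (A i) = 1 := hA.measureReal_block
  obtain ⟨B₀, hB₀, hexp₀⟩ := hb.exists_core hA hP₀ hcard₀ (fun _ _ ↦ subset_rfl)
    fun j hj ↦ hκ₁.trans (hAone j (hP₀ hj)).ge
  obtain ⟨B₁, hB₁, hexp₁⟩ := hb.exists_core hA hP₁ hcard₁ (fun _ _ ↦ subset_rfl)
    fun j hj ↦ hκ₁.trans (hAone j (hP₁ hj)).ge
  obtain ⟨p₀, hp₀⟩ : P₀.Nonempty := Finset.card_pos.1 (by omega)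
  obtain ⟨p₁, hp₁⟩ : P₁.Nonempty := Finset.card_pos.1 (by omega)
  obtain ⟨z, hz, hzB₀, hzB₁⟩ := hb.exists_common_neighbor hA hκ₁ hi₀ (hP₀ hp₀) (hP₁ hp₁)
    (ne_of_mem_of_not_mem hp₀ h₀P₀) (ne_of_mem_of_not_mem hp₁ h₀P₁) (hB₀ p₀ hp₀).1 (hB₁ p₁ hp₁).1
    (hB₀ p₀ hp₀).2 (hB₁ p₁ hp₁).2
  obtain ⟨t, Z, qz, Q₁, hQ₁, C₁, ht₁, htT, hZ, hZr, hcard', hC₁⟩ := hb.exists_levels hA hP₀ hQ₀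
    hP₀Q₀ (by omega) (fun j hj ↦ (hB₀ j hj).1) (fun _ _ ↦ subset_rfl) hexp₀ hi₀ h₀Q₀ hz
    ⟨p₀, hp₀, hzB₀⟩ hκ₁ (fun j hj ↦ (hAone j (hQ₀ hj)).ge) hcard
  obtain ⟨a, X, qx, Q₂, hQ₂, C₂, ha₁, haT, hX, hXr, hcard'', hC₂⟩ := hb.exists_levels hA hP₁
    (hQ₁.trans hQ₀) (hP₁Q₀.mono_right hQ₁) (by omega) (fun j hj ↦ (hB₁ j hj).1)
    (fun j hj ↦ (hC₁ j hj).1) hexp₁ hi₀ (fun h ↦ h₀Q₀ (hQ₁ h)) hz ⟨p₁, hp₁, hzB₁⟩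
    (by rwa [le_div_iff₀' (by positivity)]) (fun j hj ↦ (hC₁ j hj).2.2) hcard'
  have hQ : Q₂ ⊆ Q₀ := hQ₂.trans hQ₁
  have hZ₀ : Z 0 ⊆ A i₀ := by simpa [hZ.root] using hz
  refine ⟨z, insert i₀ P₀, Z, t, P₁, X, a, Q₂, C₂, ⟨ht₁, ha₁, hZ, hX,
    Finset.insert_subset hi₀ hP₀, hP₁, hQ.trans hQ₀, Finset.disjoint_insert_left.2 ⟨h₀P₁, h₀₁⟩,
    Finset.disjoint_insert_left.2 ⟨fun h ↦ h₀Q₀ (hQ h), hP₀Q₀.mono_right hQ⟩, hP₁Q₀.mono_right hQ,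
    ⟨_, Finset.coe_insert i₀ P₀ ▸ (hZr.mono (Set.subset_insert i₀ _) (fun j hj ↦ (hB₀ j hj).1)
      subset_rfl fun _ _ ↦ subset_rfl).update_zero (A := A) (Set.mem_insert i₀ _)
        (fun ⟨_, hi, hi'⟩ ↦ h₀P₀ (hi' ▸ hZr.mapsTo hi)) hZ₀⟩,
    ⟨qx, hXr.mono subset_rfl (fun j hj ↦ (hB₁ j hj).1) subset_rfl fun _ _ ↦ subset_rfl⟩,
    fun j hj ↦ (hC₂ j hj).1.trans (hC₁ j (hQ₂ hj)).1,
    fun j hj ↦ (hC₁ j (hQ₂ hj)).2.1.mono (hC₂ j hj).1, fun j hj ↦ (hC₂ j hj).2.1,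
    fun j hj ↦ le_trans (le_of_eq ?_) (hC₂ j hj).2.2⟩, htT, haT, hcard''⟩
  rw [div_div, ← sq]

lemma TwinLevels.exists_covering_subset {z : V} {J P Q : Finset ℤ} {Z X : ℕ → Set V} {t a m : ℕ}
    {C : ℤ → Set V} {w : ℝ} (hT : TwinLevels G μ I A z J Z t P X a Q C w)
    (hA : WeightedBlockade G μ I A lam γ δ ω) (hlam : 4 * lam ≤ w) (hm : m + n ≤ #Q) :
    ∃ S ⊆ Z t, ∃ E ⊆ Q, ∃ F ⊆ Q, #E = m ∧ #F = n ∧ Disjoint F E ∧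
      (∀ j ∈ E, w / 2 ≤ μ.real (C j ∩ nbhd G S)) ∧ ∀ j ∈ F, w / 4 ≤ μ.real (C j \ nbhd G S) := by
  obtain ⟨q, hq⟩ := hT.left_rainbow
  obtain ⟨S, hS, E, hE, hEm, hES, hFS⟩ := PurePairs.exists_covering_subset (μ := μ) (m := m)
    (X := Z t) (by omega) (fun j hj ↦ (hT.left_leadsTo j hj).covers) fun j hj x hx ↦
      (hA.measureReal_neighborSet_inter_le_of_isRainbow (Finset.coe_subset.2 hT.left_subset) hq
        hT.blocks_subset (Finset.disjoint_coe.2 hT.disjoint_left_blocks) (Set.mem_Iic.2 le_rfl) hx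
        hj (hT.subset j hj)).trans
        (by linarith [hT.le_measureReal j hj])
  have hcard := Finset.card_sdiff_of_subset hE
  obtain ⟨F, hF, hFn⟩ := Finset.exists_subset_card_eq (s := Q \ E) (n := n) (by omega)
  refine ⟨S, hS, E, hE, F, hF.trans Finset.sdiff_subset, hEm, hFn,
    Finset.sdiff_disjoint.mono_left hF, fun j hj ↦ ?_, fun j hj ↦ ?_⟩
  · linarith [hES j hj, hT.le_measureReal j (hE hj)]
  · obtain ⟨hjQ, hjE⟩ := Finset.mem_sdiff.1 (hF hj)
    linarith [hFS j hjQ hjE, hT.le_measureReal j hjQ]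

lemma GrowthBounds.exists_biLevels_of_twinLevels (hb : GrowthBounds T κ lam γ δ ω)
    (hA : WeightedBlockade G μ I A lam γ δ ω) {z : V} {J P Q : Finset ℤ} {Z X : ℕ → Set V}
    {t a : ℕ} {C : ℤ → Set V} {w : ℝ} (hT : TwinLevels G μ I A z J Z t P X a Q C w) (ht : t ≤ T)
    (ha : a ≤ T) (hQ : (2 * T) ^ T * (2 ^ T * n) + (T + 1) ≤ #Q) (hκ : κ ≤ w / 4)
    (hκT : κ ≤ w / 2 / (4 * T) ^ T) (hlam : lam ≤ κ / (2 * (T + 1)) / 4 ^ n) :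
    ∃ v L h M b D, h ≤ 2 * T ∧ b ≤ T ∧ BiLevels G I A v L h M b (Finset.Ico 0 n) D ∧
      ∀ i ∈ Finset.Ico 0 (n : ℤ), κ / (2 * (T + 1)) / 4 ^ n ≤ μ.real (D i) := by
  have hlamκ : lam ≤ κ := hlam.trans ((div_le_self (div_nonneg hb.pos_κ.le (by positivity))
    (one_le_pow₀ (by norm_num))).trans (div_le_self hb.pos_κ.le
      (by linarith [(Nat.cast_nonneg T : (0 : ℝ) ≤ T)])))
  obtain ⟨S, hS, E, hE, F, hF, hEcard, hFcard, hFE, hES, hFS⟩ :=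
    hT.exists_covering_subset hA (by linarith) hQ
  obtain ⟨B, hB, hexp⟩ := hb.exists_core hA (hF.trans hT.blocks_subset) hFcard
    (D := fun j ↦ C j \ nbhd G S) (fun j hj ↦ Set.sdiff_subset.trans (hT.subset j (hF hj)))
    fun j hj ↦ hκ.trans (hFS j hj)
  have hBC : ∀ j ∈ F, B j ⊆ C j := fun j hj ↦ (hB j hj).1.trans Set.sdiff_subset
  obtain ⟨p, hp⟩ : F.Nonempty := Finset.card_pos.1 (by omega)
  obtain ⟨u, hu⟩ : (B p).Nonempty := nonempty_of_measureReal_ne_zero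
    (hb.pos.trans_le (hB p hp).2).ne'
  obtain ⟨v, hv, hvu⟩ := (hT.right_leadsTo p (hF hp)).covers u (hBC p hp hu)
  obtain ⟨h, L, q, E', hE', C', hh₁, hh, hL, hLr, hLB, hcard, hC'⟩ := hT.exists_reroot
    (R := ⋃ j ∈ F, B j) hA ht ha hS
    (fun s hs r hr ↦ by
      obtain ⟨j, hj, hrj⟩ := Set.mem_iUnion₂.1 hr
      exact anticomplete_diff_nbhd s hs r ((hB j hj).1 hrj))
    (Set.iUnion₂_subset fun j hj ↦ (hBC j hj).trans (Set.subset_biUnion_of_mem (u := C) (hF hj)))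
    hE (by linarith [hb.pos_κ]) hES hEcard.ge (hlamκ.trans hκT) hv
  have hEQ := hE'.trans hE
  obtain ⟨b, M, D, hbT, hD, hDκ⟩ := hb.exists_biLevels hA (hF.trans hT.blocks_subset)
    (hEQ.trans hT.blocks_subset) (hFE.mono_right hE') (by omega)
    (fun j hj ↦ (hBC j hj).trans (hT.subset j (hF hj))) hexp
    (Set.union_subset (Finset.coe_subset.2 hT.left_subset) (Finset.coe_subset.2 hT.right_subset))
    (Set.disjoint_union_left.2 ⟨Finset.disjoint_coe.2 (hT.disjoint_left_blocks.mono_right hF),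
      Finset.disjoint_coe.2 (hT.disjoint_right_blocks.mono_right hF)⟩)
    (Set.disjoint_union_left.2 ⟨Finset.disjoint_coe.2 (hT.disjoint_left_blocks.mono_right hEQ),
      Finset.disjoint_coe.2 (hT.disjoint_right_blocks.mono_right hEQ)⟩) hh₁ hL hLr hLB
    ⟨p, hp, u, hu, hvu⟩ le_rfl
    (fun j hj ↦ ⟨(hC' j hj).1.trans (hT.subset j (hEQ hj)), (hC' j hj).2.1,
      hκT.trans (hC' j hj).2.2⟩) hcard hlam
  exact ⟨v, L, h, M, b, D, hh, hbT, hD, hDκ⟩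

end Construction

section Conversion

variable {G : SimpleGraph V} {I Q : Finset ℤ} {A C : ℤ → Set V} {v : V} {L M : ℕ → Set V}
  {h b : ℕ} {q : ℕ → ℤ}

lemma LeadsTo.biUnion (hC : ∀ j ∈ Q, LeadsTo G L h (C j)) : LeadsTo G L h (⋃ j ∈ Q, C j) where
  covers u hu := by
    obtain ⟨j, hj, huj⟩ := Set.mem_iUnion₂.1 hu
    exact (hC j hj).covers u huj
  anticomplete i hi x hx u hu := by
    obtain ⟨j, hj, huj⟩ := Set.mem_iUnion₂.1 hu
    exact (hC j hj).anticomplete i hi x hx u huj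

lemma RootedLevels.isLevelling (hL : RootedLevels G v L h) (hh : 1 ≤ h)
    (hd : (Set.Iic h).PairwiseDisjoint L) : IsLevelling G L h :=
  ⟨hh, by rw [hL.root, Set.ncard_singleton], fun _ hi _ hj hij ↦ hd hi hj hij,
    fun i hi hih ↦ by simpa [Nat.sub_add_cancel hi] using hL.covers (i - 1) (by omega),
    fun i _ hih j hj ↦ hL.anticomplete j i hj hih⟩

lemma RootedLevels.reaches (hL : RootedLevels G v L h) {U : Set V} (hU : LeadsTo G L h U)
    (hd : (Set.Iic h).PairwiseDisjoint L) (hdU : ∀ i ∈ Set.Iic h, Disjoint (L i) U) :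
    Reaches G L h U := by
  have hupd : (fun i ↦ if i = h + 1 then U else L i) = Function.update L (h + 1) U := by
    ext1 i
    rw [Function.update_apply]
  have hlow : ∀ i ∈ Set.Iic h, Function.update L (h + 1) U i = L i := fun i hi ↦
    Function.update_of_ne (by simp at hi; omega) _ _
  have hIic : Set.Iic (h + 1) = insert (h + 1) (Set.Iic h) := by ext; simp; omega
  rw [Reaches, hupd]
  refine (hL.update hU).isLevelling (by omega) ?_
  rw [hIic, Set.pairwiseDisjoint_insert_of_notMem (by simp), Function.update_self]
  exact ⟨fun i hi j hj hij ↦ by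
      rw [Function.onFun, hlow i hi, hlow j hj]
      exact hd hi hj hij,
    fun i hi ↦ by simpa [hlow i hi] using (hdU i hi).symm⟩

lemma IsRainbow.disjoint {ι ι' : Type*} {S : Set ι} {S' : Set ι'} {F : ι → Set V} {F' : ι' → Set V}
    {q : ι → ℤ} {q' : ι' → ℤ} (hF : IsRainbow I A S F q) (hF' : IsRainbow I A S' F' q')
    (hA : (I : Set ℤ).PairwiseDisjoint A) {i : ι} (hi : i ∈ S) {i' : ι'} (hi' : i' ∈ S')
    (hq : q i ≠ q' i') : Disjoint (F i) (F' i') :=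
  (hA (hF.mapsTo hi) (hF'.mapsTo hi') hq).mono (hF.subset i hi) (hF'.subset i' hi')

lemma IsRainbow.pairwiseDisjoint {ι : Type*} {S : Set ι} {F : ι → Set V} {q : ι → ℤ}
    (hF : IsRainbow I A S F q) (hA : (I : Set ℤ).PairwiseDisjoint A) : S.PairwiseDisjoint F :=
  fun _ hi _ hj hij ↦ hF.disjoint hF hA hi hj (hF.injOn.ne hi hj hij)

lemma RootedLevels.reaches_of_isRainbow {qc : ℤ → ℤ} (hL : RootedLevels G v L h)
    (hC : ∀ j ∈ Q, LeadsTo G L h (C j)) (hLr : IsRainbow I A (Set.Iic h) L q)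
    (hCr : IsRainbow I A Q C qc) (hne : ∀ i ∈ Set.Iic h, ∀ j ∈ Q, q i ≠ qc j)
    (hA : (I : Set ℤ).PairwiseDisjoint A) : Reaches G L h (⋃ j ∈ Q, C j) :=
  hL.reaches (.biUnion hC) (hLr.pairwiseDisjoint hA) fun i hi ↦ Set.disjoint_iUnion₂_right.2
    fun j hj ↦ hLr.disjoint hCr hA hi hj (hne i hi j hj)

lemma BiLevels.parallel_levels (hB : BiLevels G I A v L h M b Q C)
    (hA : (I : Set ℤ).PairwiseDisjoint A) : Parallel G L h M b := by
  obtain ⟨ql, qm, qc, hR⟩ := hB.rainbow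
  refine ⟨hB.left.root.trans hB.right.root.symm, ?_, fun x hx y hy ↦ ?_⟩
  · simp only [Set.disjoint_iUnion_left, Set.disjoint_iUnion_right, Finset.mem_Icc]
    exact fun i hi j hj ↦ (hR.left.disjoint hR.right hA hi.2 hj (hR.left_ne_right i hi.2 j hj)).symm
  · simp only [Set.mem_iUnion, Finset.mem_Icc, exists_prop] at hx hy
    obtain ⟨⟨j, hj, hxj⟩, i, hi, hyi⟩ := And.intro hx hy
    exact (hB.parallel i hi j hj).symm x hxj y hyi

lemma BiLevels.isBiGrading (hB : BiLevels G I A v L h M b Q C)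
    (hA : (I : Set ℤ).PairwiseDisjoint A) (hC : ∀ j ∈ Q, (C j).Nonempty)
    (hM : BackwardGraded G (M b) Q C) : IsBiGrading G L h M b Q C := by
  obtain ⟨ql, qm, qc, hR⟩ := hB.rainbow
  have hroot : (0 : ℕ) ∈ Set.Iic h := h.zero_le
  have hMr : IsRainbow I A (Set.Iic b) M (Function.update qm 0 (ql 0)) :=
    hR.right.update_zero (hR.left.mapsTo hroot)
      (fun ⟨j, hj, hj'⟩ ↦ hR.left_ne_right 0 hroot j hj hj'.symm)
      (by rw [hB.right.root, ← hB.left.root]; exact hR.left.subset 0 hroot)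
  have hMC : ∀ i ∈ Set.Iic b, ∀ j ∈ Q, Function.update qm 0 (ql 0) i ≠ qc j := by
    intro i hi j hj
    obtain rfl | hi₀ := i.eq_zero_or_pos
    · simpa using hR.left_ne_blocks 0 hroot j hj
    · simpa [hi₀.ne'] using hR.right_ne_blocks i ⟨hi₀, hi⟩ j hj
  have hMreach := hB.right.reaches_of_isRainbow hB.right_leadsTo hMr hR.blocks hMC hA
  exact ⟨⟨⟨hC, fun i hi j hj hij ↦ hR.blocks.pairwiseDisjoint hA hi hj hij⟩,
    hB.left.isLevelling hB.left_pos (hR.left.pairwiseDisjoint hA),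
    hB.right.isLevelling hB.right_pos (hMr.pairwiseDisjoint hA), hB.parallel_levels hA, hMreach,
    hB.left.reaches_of_isRainbow hB.left_leadsTo hR.left hR.blocks hR.left_ne_blocks hA,
    hB.graded⟩, hMreach, hM⟩

lemma BiLevels.rainbowBiLevelling (hB : BiLevels G I A v L h M b Q C) :
    RainbowBiLevelling I A L h M b Q C := by
  obtain ⟨ql, qm, qc, hR⟩ := hB.rainbow
  exact ⟨qc, ql, qm, fun j hj ↦ ⟨hR.blocks.mapsTo hj, hR.blocks.subset j hj⟩,
    fun i hi ↦ ⟨hR.left.mapsTo hi, hR.left.subset i hi⟩,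
    fun i hi hib ↦ ⟨hR.right.mapsTo ⟨hi, hib⟩, hR.right.subset i ⟨hi, hib⟩⟩,
    fun i hi j hj hij ↦ hR.blocks.injOn hi hj hij, fun i hi j hj hij ↦ hR.left.injOn hi hj hij,
    fun i hi hib j hj hjb hij ↦ hR.right.injOn ⟨hi, hib⟩ ⟨hj, hjb⟩ hij,
    fun j hj i hi ↦ (hR.left_ne_blocks i hi j hj).symm,
    fun j hj i hi hib ↦ (hR.right_ne_blocks i ⟨hi, hib⟩ j hj).symm,
    fun i hi j hj hjb ↦ hR.left_ne_right i hi j ⟨hj, hjb⟩⟩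

lemma BiLevels.exists_subset (hB : BiLevels G I A v L h M b Q C) :
    ∀ j ∈ Q, ∃ i ∈ I, C j ⊆ A i := by
  obtain ⟨ql, qm, qc, hR⟩ := hB.rainbow
  exact fun j hj ↦ ⟨qc j, hR.blocks.mapsTo hj, hR.blocks.subset j hj⟩

end Conversion

section GradingBounds

variable {G : SimpleGraph V} [MeasurableSpace V] {μ : Measure V} {I : Finset ℤ} {A : ℤ → Set V}
  {T n : ℕ} {κ lam γ δ ω : ℝ} [IsFiniteMeasure μ] [DiscreteMeasurableSpace V] [Finite V]

lemma GrowthBounds.exists_biLevels_of_card_le (hb : GrowthBounds T κ lam γ δ ω)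
    (hA : WeightedBlockade G μ I A lam γ δ ω) (hκ : 4 * (2 * (T + 1)) ^ 2 * (4 * T) ^ T * κ ≤ 1)
    (hlam : lam ≤ κ / (2 * (T + 1)) / 4 ^ n)
    (hI : 2 ^ T * (2 ^ T * ((2 * T) ^ T * (2 ^ T * n) + (T + 1))) + 2 * (T + 1) + 1 ≤ #I) :
    ∃ v L h M b D, h + b ≤ 3 * T ∧ BiLevels G I A v L h M b (Finset.Ico 0 n) D ∧
      ∀ i ∈ Finset.Ico 0 (n : ℤ), κ / (2 * (T + 1)) / 4 ^ n ≤ μ.real (D i) := by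
  have hT : (1 : ℝ) ≤ T := by exact_mod_cast hb.one_le
  have hpow : (1 : ℝ) ≤ (4 * T) ^ T := one_le_pow₀ (by linarith)
  have hκ₁ : 4 * (2 * (T + 1)) ^ 2 * κ ≤ 1 :=
    (mul_le_mul_of_nonneg_right (le_mul_of_one_le_right (by positivity) hpow) hb.pos_κ.le).trans hκ
  obtain ⟨z, J, Z, t, P, X, a, Q, C, hZX, ht, ha, hQ⟩ :=
    hb.exists_twinLevels hA (by nlinarith [hb.pos_κ]) hI
  obtain ⟨v, L, h, M, b, D, hh, hb', hD⟩ := hb.exists_biLevels_of_twinLevels hA hZX ht ha hQ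
    (by rw [div_div, le_div_iff₀ (by positivity)]; linarith)
    (by
      rw [div_div, div_div, le_div_iff₀ (by positivity)]
      have : 0 ≤ κ * ((2 * (T + 1)) ^ 2 * (4 * T) ^ T) := mul_nonneg hb.pos_κ.le (by positivity)
      linarith) hlam
  exact ⟨v, L, h, M, b, D, by omega, hD⟩

/-- The assumptions under which a blockade of length `K` in a graph with `N` vertices contains a
bi-grading of length `k` and height `ℓ`. First a bi-levelling of height at most `3 * T` and length
`n` is grown; it is then extended to the required height, and finally `k` of its blocks are
selected. -/
structure GradingBounds (K N k ℓ T n s : ℕ) (κ w lam lam₁ γ δ ρ ω : ℝ) : Prop where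
  growth : GrowthBounds T κ lam γ δ ω
  selection : SelectionBounds N n s lam lam₁ ρ w
  mul_κ_le : 4 * (2 * (T + 1)) ^ 2 * (4 * T) ^ T * κ ≤ 1
  lam_le : lam ≤ κ / (2 * (T + 1)) / 4 ^ n
  le_K : 2 ^ T * (2 ^ T * ((2 * T) ^ T * (2 ^ T * n) + (T + 1))) + 2 * (T + 1) + 1 ≤ K
  le_n : 2 ^ ((s + 1) * (k + ℓ)) ≤ n
  mul_w_le : 2 ^ ((s + 3) * (k + ℓ)) * w ≤ κ / (2 * (T + 1)) / 4 ^ n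
  δ_le : δ ≤ ρ
  γ_le : γ ≤ w

lemma GradingBounds.exists_backwardGraded {k ℓ s : ℕ} {w lam₁ ρ : ℝ}
    (hb : GradingBounds #I (Nat.card V) k ℓ T n s κ w lam lam₁ γ δ ρ ω) (hℓ : 3 * T ≤ ℓ)
    (hA : WeightedBlockade G μ I A lam γ δ ω) :
    ∃ v L h M b J C D, h + b = ℓ ∧ BiLevels G I A v L h M b J D ∧
      GradedSelection G μ (M b) ∅ C lam₁ ρ k J D := by
  obtain ⟨v, L, h, M, b, C, hhb, hC, hκC⟩ :=
    hb.growth.exists_biLevels_of_card_le hA hb.mul_κ_le hb.lam_le hb.le_K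
  have hmono {r : ℕ} : r * (k + (ℓ - (h + b))) ≤ r * (k + ℓ) := by gcongr; omega
  obtain ⟨L', M', J, C', D, hD⟩ := hC.exists_backwardGraded (k := k) (e := ℓ - (h + b)) hA
    hb.selection hb.δ_le hb.γ_le (by simp)
    (by simpa using (Nat.pow_le_pow_right two_pos hmono).trans hb.le_n)
    fun j hj ↦ ((mul_le_mul_of_nonneg_right (pow_le_pow_right₀ one_le_two hmono)
      hb.selection.pos.le).trans hb.mul_w_le).trans (hκC j hj)
  exact ⟨v, L', h, M', b + (ℓ - (h + b)), J, C', D, by omega, hD⟩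

end GradingBounds

section Parameters

open Filter Topology

lemma rpow_neg_pow_mul_self_le_one {c x : ℝ} {T : ℕ} (hx : 1 ≤ x) (hT : 1 ≤ c * T) :
    (x ^ (-c)) ^ T * x ≤ 1 := by
  have hx₀ : 0 < x := one_pos.trans_le hx
  rw [← Real.rpow_natCast, ← Real.rpow_mul hx₀.le, ← Real.rpow_add_one hx₀.ne']
  exact Real.rpow_le_one_of_one_le_of_nonpos hx (by linarith)

lemma growthBounds_rpow {T : ℕ} {κ lam γ c x y : ℝ} (hT : 1 ≤ T) (hcT : 1 ≤ c * T) (hκ : κ ≤ 1)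
    (hy : 0 < y) (hyκ : 32 * (T + 1) * y ≤ κ) (hγ : 4 * γ ≤ κ) (hlam : 2 * (T + 1) * lam ≤ κ)
    (hx : 1 ≤ x) : GrowthBounds T κ lam γ (y * x ^ (-c)) (1 / x) where
  one_le := hT
  pos := by positivity
  mul_δ_le := by
    have hc : 0 ≤ c := by
      by_contra! hc
      nlinarith [(Nat.cast_nonneg T : (0 : ℝ) ≤ T)]
    refine le_trans ?_ hyκ
    gcongr
    exact mul_le_of_le_one_right hy.le (Real.rpow_le_one_of_one_le_of_nonpos hx (by linarith))
  mul_γ_le := hγ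
  mul_lam_le := hlam
  le_pow_mul := by
    have hyκ' : y ≤ κ / 16 := by nlinarith [(Nat.cast_nonneg T : (0 : ℝ) ≤ T)]
    have hκ₀ : 0 < κ / 16 := hy.trans_le hyκ'
    set δ := y * x ^ (-c) with hδ
    have hkey : δ ^ T * x ≤ (κ / 16) ^ (T - 1) := calc
      δ ^ T * x = y ^ T * ((x ^ (-c)) ^ T * x) := by rw [hδ, mul_pow, mul_assoc]
      _ ≤ y ^ T := mul_le_of_le_one_right (by positivity) (rpow_neg_pow_mul_self_le_one hx hcT)
      _ ≤ (κ / 16) ^ T := by gcongr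
      _ ≤ (κ / 16) ^ (T - 1) := pow_le_pow_of_le_one hκ₀.le (by linarith) (Nat.sub_le T 1)
    rw [show κ / 8 / δ / 2 = κ / 16 / δ by ring, div_pow, mul_one_div, div_div,
      le_div_iff₀ (by positivity), ← mul_assoc, mul_pow_sub_one (by omega)]
    exact hkey

lemma eventually_mul_rpow_neg_div_pow_lt_one {d w : ℝ} {s : ℕ} (hs : 1 < d * s) :
    ∀ᶠ N : ℕ in atTop, N * ((N : ℝ) ^ (-d) / w) ^ s < 1 := by
  have hlim : Tendsto (fun N : ℕ ↦ (N : ℝ) ^ (-(d * s - 1)) / w ^ s) atTop (𝓝 (0 / w ^ s)) :=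
    ((tendsto_rpow_neg_atTop (by linarith)).comp tendsto_natCast_atTop_atTop).div_const _
  rw [zero_div] at hlim
  filter_upwards [hlim.eventually_lt_const one_pos, eventually_gt_atTop 0] with N hN hN₀
  have hN₀' : (0 : ℝ) < N := by exact_mod_cast hN₀
  refine lt_of_eq_of_lt ?_ hN
  rw [div_pow, ← mul_div_assoc, ← Real.rpow_natCast _ s, ← Real.rpow_mul hN₀'.le,
    ← Real.rpow_one_add' hN₀'.le (by linarith)]
  ring_nf

lemma eventually_selectionBounds {n s : ℕ} {lam lam₁ d w : ℝ} (hd : 0 < d) (hs : 1 < d * s)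
    (hlam : 0 ≤ lam) (hlamw : lam < w) (hlam₁ : 0 < lam₁) (hn : 2 * lam * n ≤ w * lam₁) :
    ∀ᶠ N : ℕ in atTop, SelectionBounds N n s lam lam₁ ((N : ℝ) ^ (-d)) w := by
  have hw : 0 < w := hlam.trans_lt hlamw
  have hlim : Tendsto (fun N : ℕ ↦ (N : ℝ) ^ (-d)) atTop (𝓝 0) :=
    (tendsto_rpow_neg_atTop hd).comp tendsto_natCast_atTop_atTop
  filter_upwards [hlim.eventually_le_const hw, eventually_mul_rpow_neg_div_pow_lt_one hs,
    eventually_gt_atTop 0] with N hρ hN hN₀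
  exact ⟨hlam, hlamw, hlam₁, by positivity, hρ, hn, hN⟩

lemma zpow_neg_self_le_inv {K : ℕ} (hK : 1 ≤ K) : (K : ℝ) ^ (-(K : ℤ)) ≤ (K : ℝ)⁻¹ := by
  rw [zpow_neg, zpow_natCast]
  exact inv_anti₀ (by positivity) (le_self_pow₀ (by exact_mod_cast hK) (by omega))

lemma exists_gradingWeights {T : ℕ} {lam₁ : ℝ} (n m : ℕ) (hT : 1 ≤ T) (hlam₁ : 0 < lam₁) :
    ∃ κ w lam : ℝ, κ ≤ 1 ∧ 4 * (2 * (T + 1)) ^ 2 * (4 * T) ^ T * κ ≤ 1 ∧ 0 < lam ∧ lam < w ∧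
      2 * lam * n ≤ w * lam₁ ∧ 2 ^ m * w ≤ κ / (2 * (T + 1)) / 4 ^ n := by
  set κ : ℝ := 1 / (4 * (2 * (T + 1)) ^ 2 * (4 * T) ^ T)
  have hκ₁ : κ ≤ 1 := div_le_one_of_le₀ (one_le_mul_of_one_le_of_one_le
    (by nlinarith [(Nat.cast_nonneg T : (0 : ℝ) ≤ T)])
    (one_le_pow₀ (by exact_mod_cast (by omega : 1 ≤ 4 * T)))) (by positivity)
  set w := κ / (2 * (T + 1)) / 4 ^ n / 2 ^ m
  have hw : 0 < w := by positivity
  refine ⟨κ, w, min (w / 2) (w * lam₁ / (2 * (n + 1))), hκ₁,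
    (mul_one_div_cancel (by positivity)).le, by positivity,
    (min_le_left _ _).trans_lt (half_lt_self hw), ?_, (mul_div_cancel₀ _ (by positivity)).le⟩
  calc 2 * min (w / 2) (w * lam₁ / (2 * (n + 1))) * n
      ≤ 2 * (w * lam₁ / (2 * (n + 1))) * (n + 1) := by
        gcongr
        · exact min_le_right _ _
        · linarith
    _ = w * lam₁ := by field_simp

lemma exists_eventually_gradingBounds {T : ℕ} {c d lam₁ : ℝ} (k ℓ : ℕ) (hT : 1 ≤ T)
    (hcT : 1 ≤ c * T) (hd : 0 < d) (hdc : d ≤ c) (hlam₁ : 0 < lam₁) :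
    ∃ (n s : ℕ) (κ w lam : ℝ), 0 < lam ∧ ∀ᶠ K : ℕ in atTop, ∀ N ≥ K, ∀ γ ≤ (K : ℝ)⁻¹,
      GradingBounds K N k ℓ T n s κ w lam lam₁ γ ((K : ℝ) ^ (-(K : ℤ)) * (N : ℝ) ^ (-c))
        ((N : ℝ) ^ (-d)) (1 / N) := by
  set s := ⌈2 / d⌉₊
  have hs : 1 < d * s := by linarith [(div_le_iff₀' hd).1 (Nat.le_ceil (2 / d))]
  set n := 2 ^ ((s + 1) * (k + ℓ))
  obtain ⟨κ, w, lam, hκ₁, hκ, hlam, hlamw, hlamn, hw⟩ :=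
    exists_gradingWeights n ((s + 3) * (k + ℓ)) hT hlam₁
  have hw₀ : 0 < w := hlam.trans hlamw
  have hlamκ : lam ≤ κ / (2 * (T + 1)) / 4 ^ n :=
    (hlamw.le.trans (le_mul_of_one_le_left hw₀.le (one_le_pow₀ one_le_two))).trans hw
  have hκT : 0 < κ / (2 * (T + 1)) :=
    (div_pos_iff_of_pos_right (by positivity)).1 (hlam.trans_le hlamκ)
  have hκ₀ : 0 < κ := (div_pos_iff_of_pos_right (by positivity)).1 hκT
  refine ⟨n, s, κ, w, lam, hlam, ?_⟩
  have hinv : Tendsto (fun K : ℕ ↦ (K : ℝ)⁻¹) atTop (𝓝 0) := tendsto_inv_atTop_nhds_zero_nat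
  filter_upwards [hinv.eventually_le_const (by positivity : 0 < κ / (32 * (T + 1))),
    hinv.eventually_le_const hw₀, eventually_ge_atTop 1,
    eventually_ge_atTop (2 ^ T * (2 ^ T * ((2 * T) ^ T * (2 ^ T * n) + (T + 1))) + 2 * (T + 1) + 1),
    eventually_forall_ge_atTop.2 (eventually_selectionBounds hd hs hlam.le hlamw hlam₁ hlamn)]
    with K hKκ hKw hK₁ hK hsel N hN γ hγ
  have hN₁ : (1 : ℝ) ≤ N := by exact_mod_cast hK₁.trans hN
  rw [le_div_iff₀' (by positivity)] at hKκ
  have hγκ : 4 * γ ≤ κ := by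
    nlinarith [(Nat.cast_nonneg T : (0 : ℝ) ≤ T), inv_nonneg.2 (Nat.cast_nonneg K : (0 : ℝ) ≤ K)]
  have hTlam : 2 * (T + 1) * lam ≤ κ := by
    rw [← le_div_iff₀' (by positivity)]
    exact hlamκ.trans (div_le_self hκT.le (one_le_pow₀ (by norm_num)))
  have hδρ : (K : ℝ) ^ (-(K : ℤ)) * (N : ℝ) ^ (-c) ≤ 1 * (N : ℝ) ^ (-d) := by
    gcongr
    exact zpow_le_one_of_nonpos₀ (by exact_mod_cast hK₁) (by omega)
  exact ⟨growthBounds_rpow hT hcT hκ₁ (by positivity)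
    (le_trans (by gcongr; exact zpow_neg_self_le_inv hK₁) hKκ) hγκ hTlam hN₁, hsel N hN, hκ,
    hlamκ, hK, le_rfl, hw, hδρ.trans_eq (one_mul _), hγ.trans hKw⟩

lemma zpow_mul_zpow_mul_rpow_le {K N k ℓ : ℕ} {c d : ℝ} (hK : 1 ≤ K) (hN : 1 ≤ N) :
    (2 : ℝ) ^ (-(k : ℤ) - 2 * (ℓ : ℤ)) * (K : ℝ) ^ (-(K : ℤ)) * (N : ℝ) ^ (-d) ≤
      (N : ℝ) ^ (-min d c) / 2 ^ k := calc
  (2 : ℝ) ^ (-(k : ℤ) - 2 * (ℓ : ℤ)) * (K : ℝ) ^ (-(K : ℤ)) * (N : ℝ) ^ (-d)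
      ≤ 2 ^ (-(k : ℤ)) * 1 * (N : ℝ) ^ (-min d c) := by
        gcongr
        · exact one_le_two
        · omega
        · exact zpow_le_one_of_nonpos₀ (by exact_mod_cast hK) (by omega)
        · exact_mod_cast hN
        · exact min_le_left d c
  _ = (N : ℝ) ^ (-min d c) / 2 ^ k := by rw [zpow_neg, zpow_natCast]; ring

lemma zpow_div_le_inv {ℓ K : ℕ} : (2 : ℝ) ^ (-(6 : ℤ) - 2 * (ℓ : ℤ)) / K ≤ (K : ℝ)⁻¹ := by
  rw [div_eq_mul_inv]
  exact mul_le_of_le_one_left (by positivity) (zpow_le_one_of_nonpos₀ one_le_two (by omega))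

end Parameters

section BlockadeMeasure

open ProbabilityTheory

variable {G : SimpleGraph V} {I J : Finset ℤ} {A C : ℤ → Set V} {lam γ δ η : ℝ}

/-- The sum of the uniform measures on the blocks of `(A i : i ∈ I)`; when the blocks are disjoint,
a subset of a block is measured by the proportion of the block that it fills. -/
def blockadeMeasure [MeasurableSpace V] (I : Finset ℤ) (A : ℤ → Set V) : Measure V :=
  ∑ i ∈ I, uniformOn (A i)

instance [MeasurableSpace V] : IsFiniteMeasure (blockadeMeasure I A) := by
  unfold blockadeMeasure
  infer_instance

variable [Finite V]

lemma uniformOn_eq_ncard_div [MeasurableSpace V] [DiscreteMeasurableSpace V] {B S : Set V}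
    (hS : S ⊆ B) : uniformOn B S = (S.ncard / B.ncard : ENNReal) := by
  rw [uniformOn, cond_apply .of_discrete, Set.inter_eq_right.2 hS, Measure.count_apply .of_discrete,
    Measure.count_apply .of_discrete, ← (Set.toFinite S).cast_ncard_eq,
    ← (Set.toFinite B).cast_ncard_eq, ENNReal.div_eq_inv_mul]
  rfl

lemma IsBlockade.card_le (hA : IsBlockade I A) : #I ≤ Nat.card V := by
  choose f hf using fun i : I ↦ hA.1 i i.2
  have hf' : Function.Injective f := fun i j hij ↦ Subtype.ext <| by
    by_contra hne
    exact Set.disjoint_left.1 (hA.2 i i.2 j j.2 hne) (hf i) (hij ▸ hf j)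
  simpa using Nat.card_le_card_of_injective f hf'

lemma IsBlockade.ncard_pos (hA : IsBlockade I A) {i : ℤ} (hi : i ∈ I) :
    (0 : ℝ) < (A i).ncard := by
  exact_mod_cast (hA.1 i hi).ncard_pos

variable [MeasurableSpace V] [DiscreteMeasurableSpace V]

lemma IsBlockade.measureReal_eq (hA : IsBlockade I A) {i : ℤ} (hi : i ∈ I) {S : Set V}
    (hS : S ⊆ A i) : (blockadeMeasure I A).real S = S.ncard / (A i).ncard := by
  have hother : ∀ j ∈ I, j ≠ i → uniformOn (A j) S = 0 := fun j hj hji ↦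
    (uniformOn_eq_zero_iff (Set.toFinite _)).2
      ((hA.2 j hj i hi hji).mono_right hS).inter_eq
  rw [Measure.real, blockadeMeasure, Measure.finsetSum_apply,
    Finset.sum_eq_single_of_mem i hi hother, uniformOn_eq_ncard_div hS]
  simp

lemma IsBlockade.le_measureReal_iff (hA : IsBlockade I A) {i : ℤ} (hi : i ∈ I) {S : Set V}
    (hS : S ⊆ A i) {x : ℝ} :
    x ≤ (blockadeMeasure I A).real S ↔ x * (A i).ncard ≤ S.ncard := by
  rw [hA.measureReal_eq hi hS, le_div_iff₀ (hA.ncard_pos hi)]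

lemma IsBlockade.weightedBlockade (hA : IsBlockade I A) (hlink : LinkageLE G I A lam)
    (hdiv : ¬ Divergent G I A γ δ) :
    WeightedBlockade G (blockadeMeasure I A) I A lam γ δ (1 / Nat.card V) where
  measureReal_block i hi := by
    rw [hA.measureReal_eq hi subset_rfl, div_self (hA.ncard_pos hi).ne']
  le_measureReal_singleton i hi v hv := by
    rw [hA.measureReal_eq hi (Set.singleton_subset_iff.2 hv), Set.ncard_singleton, Nat.cast_one]
    exact one_div_le_one_div_of_le (hA.ncard_pos hi) (by exact_mod_cast Set.ncard_le_card _)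
  linkage i hi j hj hij v hv := by
    rw [hA.measureReal_eq hj Set.inter_subset_right, div_le_iff₀ (hA.ncard_pos hj)]
    exact hlink i hi j hj hij v hv
  not_divergent i hi j hj hij X hX Y hY hγ hδ hXY := hdiv ⟨i, hi, j, hj, hij, X, hX, Y, hY,
    (hA.le_measureReal_iff hi hX).1 hγ, (hA.le_measureReal_iff hj hY).1 hδ, hXY⟩

lemma IsBlockade.sizeGE (hA : IsBlockade I A)
    (hC : ∀ j ∈ J, η ≤ (blockadeMeasure I A).real (C j)) : SizeGE I A J C η :=
  fun j hj _ hi hCA ↦ (hA.le_measureReal_iff hi hCA).1 (hC j hj)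

lemma IsBlockade.linkageLE (hA : IsBlockade I A) (hCA : ∀ j ∈ J, ∃ i ∈ I, C j ⊆ A i)
    (hC : ∀ i ∈ J, ∀ j ∈ J, i ≠ j → ∀ v ∈ C i,
      (blockadeMeasure I A).real (G.neighborSet v ∩ C j) ≤
        lam * (blockadeMeasure I A).real (C j)) : LinkageLE G J C lam := by
  intro i hi j hj hij v hv
  obtain ⟨i', hi', hji'⟩ := hCA j hj
  have h := hC i hi j hj hij v hv
  rwa [hA.measureReal_eq hi' (Set.inter_subset_right.trans hji'), hA.measureReal_eq hi' hji',
    ← mul_div_assoc, div_le_div_iff_of_pos_right (hA.ncard_pos hi')] at h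

end BlockadeMeasure

theorem statement_17_general (ℓ : ℕ) (c : ℝ) (hc : 0 < c) (hℓ : 3 * ⌈1 / c⌉₊ ≤ ℓ) (k : ℕ)
    (d lam' : ℝ) (hd0 : 0 < d) (hl0 : 0 < lam') :
    ∃ (K : ℕ) (lam : ℝ), 1 ≤ K ∧ 0 < lam ∧
      ∀ {V : Type*} [Fintype V] (G : SimpleGraph V) (I : Finset ℤ) (A : ℤ → Set V),
        IsBlockade I A → I.card = K → LinkageLE G I A lam →
        ¬ Divergent G I A ((2 : ℝ) ^ (-(6 : ℤ) - 2 * (ℓ : ℤ)) / (K : ℝ))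
            ((K : ℝ) ^ (-(K : ℤ)) * (Fintype.card V : ℝ) ^ (-c)) →
        ∃ (L : ℕ → Set V) (a : ℕ) (M : ℕ → Set V) (b : ℕ) (J : Finset ℤ) (B : ℤ → Set V),
          IsBiGrading G L a M b J B ∧ RainbowBiLevelling I A L a M b J B ∧
          J.card = k ∧ a + b = ℓ ∧
          SizeGE I A J B ((2 : ℝ) ^ (-(k : ℤ) - 2 * (ℓ : ℤ)) * (K : ℝ) ^ (-(K : ℤ)) *
            (Fintype.card V : ℝ) ^ (-d)) ∧
          LinkageLE G J B lam' := by
  have hcT : 1 ≤ c * ⌈1 / c⌉₊ := (div_le_iff₀' hc).1 (Nat.le_ceil (1 / c))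
  obtain ⟨n, s, κ, w, lam, hlam, hK⟩ := exists_eventually_gradingBounds k ℓ
    (Nat.one_le_ceil_iff.2 (one_div_pos.2 hc)) hcT (lt_min hd0 hc) (min_le_right d c)
    (div_pos hl0 (by positivity : (0 : ℝ) < 2 ^ k))
  obtain ⟨K, hK, hK₁⟩ := (hK.and (Filter.eventually_ge_atTop 1)).exists
  refine ⟨K, lam, hK₁, hlam, fun {V} _ G I A hA hIK hlink hdiv ↦ ?_⟩
  subst hIK
  rw [← Nat.card_eq_fintype_card] at hdiv ⊢
  let _ : MeasurableSpace V := ⊤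
  have hN : 0 < Nat.card V := by have := hA.card_le; omega
  obtain ⟨v, L, a, M, b, J, C, D, hab, hD, hsel⟩ := (hK _ hA.card_le _
    zpow_div_le_inv).exists_backwardGraded hℓ (hA.weightedBlockade hlink hdiv)
  have hDne : ∀ j ∈ J, (D j).Nonempty := fun j hj ↦ nonempty_of_measureReal_ne_zero
    ((by positivity : (0 : ℝ) < _).trans_le (hsel.le_measureReal j hj)).ne'
  exact ⟨L, a, M, b, J, D, hD.isBiGrading hA.2 hDne hsel.graded, hD.rainbowBiLevelling, hsel.card,
    hab, hA.sizeGE fun j hj ↦ (zpow_mul_zpow_mul_rpow_le hK₁ hN).trans (hsel.le_measureReal j hj),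
    hA.linkageLE hD.exists_subset fun i hi j hj hij v hv ↦ by
      simpa using hsel.linkage j hj i (by simpa using hi) hij v hv⟩

end

/-- obtaining a rainbow bi-grading of length `k` and height `ℓ`. -/
theorem statement_17 (ℓ : ℕ) (c : ℝ) (hc : 0 < c) (hℓ : 3 * ⌈1/c⌉₊ + 1 ≤ ℓ)
    (k : ℕ) (hk : 1 ≤ k) (d lam' : ℝ) (hd0 : 0 < d) (hd1 : d ≤ 1)
    (hl0 : 0 < lam') (hl1 : lam' ≤ 1) :
    ∃ (K : ℕ) (lam : ℝ), 1 ≤ K ∧ 0 < lam ∧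
      ∀ {V : Type} [Fintype V] (G : SimpleGraph V) (I : Finset ℤ) (A : ℤ → Set V),
        IsBlockade I A → I.card = K → LinkageLE G I A lam →
        ¬ Divergent G I A ((2 : ℝ) ^ (-(6 : ℤ) - 2 * (ℓ : ℤ)) / (K : ℝ))
            ((K : ℝ) ^ (-(K : ℤ)) * (Fintype.card V : ℝ) ^ (-c)) →
        ∃ (L : ℕ → Set V) (a : ℕ) (M : ℕ → Set V) (b : ℕ)
          (J : Finset ℤ) (B : ℤ → Set V),
          IsBiGrading G L a M b J B ∧ RainbowBiLevelling I A L a M b J B ∧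
          J.card = k ∧ a + b = ℓ ∧
          SizeGE I A J B ((2 : ℝ) ^ (-(k : ℤ) - 2 * (ℓ : ℤ)) * (K : ℝ) ^ (-(K : ℤ)) *
            (Fintype.card V : ℝ) ^ (-d)) ∧
          LinkageLE G J B lam' :=
  statement_17_general ℓ c hc (by omega) k d lam' hd0 hl0

end PurePairs
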